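/- arXiv:1810.11389 — 2 statements merged into one kernel-verified Lean document; each statement's English description precedes it below -/
import Mathlib

section
/- Let Ω ⊂ ℂ² be a convex domain containing no complex affine line. If the boundary ∂Ω contains a non-trivial affine disk (the image of the open unit disk 𝔻 under a non-constant complex affine map ℂ → ℂ²), then there exists an affine limit Ω_∞ of Ω (in particular Ω_∞ is a convex domain in ℂ² containing no complex affine line) such that Ω_∞ is biholomorphic to 𝔻 × 𝔻. -/
open Set Metric Filter Topology
open scoped ENNReal NNReal

noncomputable section

section Defs

variable {E F : Type*} [NormedAddCommGroup E] [NormedSpace ℂ E]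
  [NormedAddCommGroup F] [NormedSpace ℂ F]

/-- A convex domain: a non-empty open convex subset. -/
def IsConvexDomain (Ω : Set E) : Prop := IsOpen Ω ∧ Convex ℝ Ω ∧ Ω.Nonempty

/-- `Ω` contains no complex affine line `a + ℂ·b`, `b ≠ 0`. -/
def NoComplexLine (Ω : Set E) : Prop :=
  ∀ a b : E, b ≠ 0 → ¬ (∀ lam : ℂ, a + lam • b ∈ Ω)

/-- Membership in `𝕏_d`: a convex domain containing no complex affine line. -/
def InX (Ω : Set E) : Prop := IsConvexDomain Ω ∧ NoComplexLine Ω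

/-- Convergence of a sequence of sets in the local Hausdorff topology. -/
def LocHausConv (Ωn : ℕ → Set E) (Ω : Set E) : Prop :=
  ∃ R₀ : ℝ, 0 < R₀ ∧ ∀ R : ℝ, R₀ ≤ R →
    Tendsto (fun n => Metric.hausdorffDist (Ωn n ∩ Metric.ball 0 R) (Ω ∩ Metric.ball 0 R))
      atTop (nhds 0)

/-- The sequence `z` is compactly divergent in `Ω`. -/
def CompactlyDivergent (Ω : Set E) (z : ℕ → E) : Prop :=
  ∀ K : Set E, IsCompact K → K ⊆ Ω → ∃ N : ℕ, ∀ n ≥ N, z n ∉ K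

/-- `Ω'` is an affine limit of `Ω`. -/
def IsAffineLimit (Ω Ω' : Set E) : Prop :=
  InX Ω' ∧
  ∃ (z : ℕ → E) (zlim : E) (A : ℕ → (E ≃ᵃ[ℂ] E)),
    (∀ n, z n ∈ Ω) ∧ CompactlyDivergent Ω z ∧ zlim ∈ Ω' ∧
    LocHausConv (fun n => (A n) '' Ω) Ω' ∧
    Tendsto (fun n => A n (z n)) atTop (nhds zlim)

/-- `S ⊆ E` and `T ⊆ F` are biholomorphic. -/
def Biholomorphic (S : Set E) (T : Set F) : Prop :=
  ∃ (f : E → F) (g : F → E),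
    DifferentiableOn ℂ f S ∧ DifferentiableOn ℂ g T ∧
    MapsTo f S T ∧ MapsTo g T S ∧ InvOn g f S T

/-- The bidisk `𝔻 × 𝔻 ⊆ ℂ × ℂ`. -/
def unitBidisk : Set (ℂ × ℂ) := (Metric.ball (0:ℂ) 1) ×ˢ (Metric.ball (0:ℂ) 1)

/-- The infinitesimal Kobayashi metric of `Ω ⊆ E`. -/
def kob (Ω : Set E) (z v : E) : ℝ :=
  sInf { c : ℝ | ∃ (ξ : ℂ) (f : ℂ → E),
    DifferentiableOn ℂ f (Metric.ball 0 1) ∧ MapsTo f (Metric.ball 0 1) Ω ∧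
    f 0 = z ∧ ξ • deriv f 0 = v ∧ c = ‖ξ‖ }

/-- `δ_Ω(z; v)`: the distance from `z` to `(z + ℂ·v) ∩ ∂Ω`, valued in `ℝ≥0∞`
(`⊤` when the intersection is empty). -/
def distInDir (Ω : Set E) (z v : E) : ℝ≥0∞ :=
  EMetric.infEdist z ({x | ∃ lam : ℂ, x = z + lam • v} ∩ frontier Ω)

end Defs

/-- The product of two right half-planes in `ℂ²`. -/
def halfPlaneProd : Set (EuclideanSpace ℂ (Fin 2)) := {p | 0 < (p 0).re ∧ 0 < (p 1).re}

lemma isOpen_halfPlaneProd : IsOpen halfPlaneProd :=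
  IsOpen.and (p₁ := fun p : EuclideanSpace ℂ (Fin 2) => 0 < (p 0).re)
    (isOpen_lt (by fun_prop) (by fun_prop)) (isOpen_lt (by fun_prop) (by fun_prop))

lemma convex_halfPlaneProd : Convex ℝ halfPlaneProd := by
  rintro p ⟨hp0, hp1⟩ q ⟨hq0, hq1⟩ a b ha hb hab
  have key : ∀ s t : ℝ, 0 < s → 0 < t → 0 < a * s + b * t := fun s t hs ht => by
    simpa using convex_Ioi (0 : ℝ) hs ht ha hb hab
  exact ⟨by simpa using key _ _ hp0 hq0, by simpa using key _ _ hp1 hq1⟩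

lemma noComplexLine_halfPlaneProd : NoComplexLine halfPlaneProd := by
  intro a b hb h
  have key : ∀ i, b i ≠ 0 → (∀ lam : ℂ, 0 < ((a + lam • b) i).re) → False := by
    intro i hi H
    have := H (-(a i / b i))
    simp [hi] at this
  apply hb
  ext i
  by_contra hi
  fin_cases i
  · exact key 0 hi fun lam => (h lam).1
  · exact key 1 hi fun lam => (h lam).2

lemma inX_halfPlaneProd : InX halfPlaneProd :=
  ⟨⟨isOpen_halfPlaneProd, convex_halfPlaneProd, !₂[1, 1], by simp [halfPlaneProd]⟩,
    noComplexLine_halfPlaneProd⟩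

lemma add_one_ne_zero_of_re_pos {z : ℂ} (hz : 0 < z.re) : z + 1 ≠ 0 := fun h => by
  have := congrArg Complex.re h
  simp at this
  linarith

lemma one_sub_ne_zero_of_norm_lt_one {u : ℂ} (hu : ‖u‖ < 1) : 1 - u ≠ 0 := fun h => by
  rw [sub_eq_zero] at h
  simp [← h] at hu

lemma norm_cayley_lt_one {z : ℂ} (hz : 0 < z.re) : ‖(z - 1) / (z + 1)‖ < 1 := by
  rw [norm_div, div_lt_one (norm_pos_iff.2 (add_one_ne_zero_of_re_pos hz)),
    ← sq_lt_sq₀ (norm_nonneg _) (norm_nonneg _), Complex.sq_norm, Complex.sq_norm,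
    Complex.normSq_apply, Complex.normSq_apply]
  simp
  nlinarith

lemma re_cayley_symm_pos {u : ℂ} (hu : ‖u‖ < 1) : 0 < ((1 + u) / (1 - u)).re := by
  have h0 := one_sub_ne_zero_of_norm_lt_one hu
  have h1 : Complex.normSq u < 1 := by
    rw [← Complex.sq_norm]
    exact pow_lt_one₀ (norm_nonneg _) hu two_ne_zero
  have h2 : 0 < Complex.normSq (1 - u) := Complex.normSq_pos.2 h0
  rw [Complex.div_re, ← add_div]
  refine div_pos ?_ h2
  rw [Complex.normSq_apply] at h1
  simp
  nlinarith

lemma cayley_symm_cayley {z : ℂ} (hz : 0 < z.re) :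
    (1 + (z - 1) / (z + 1)) / (1 - (z - 1) / (z + 1)) = z := by
  have h := add_one_ne_zero_of_re_pos hz
  have h1 : 1 - (z - 1) / (z + 1) = 2 / (z + 1) := by field_simp; ring
  rw [h1]
  field_simp
  ring

lemma cayley_cayley_symm {u : ℂ} (hu : ‖u‖ < 1) :
    ((1 + u) / (1 - u) - 1) / ((1 + u) / (1 - u) + 1) = u := by
  have h := one_sub_ne_zero_of_norm_lt_one hu
  have h1 : (1 + u) / (1 - u) + 1 = 2 / (1 - u) := by field_simp; ring
  rw [h1]
  field_simp
  ring

lemma differentiableOn_cayley : DifferentiableOn ℂ (fun z : ℂ => (z - 1) / (z + 1)) {z | 0 < z.re} :=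
  DifferentiableOn.fun_div (by fun_prop) (by fun_prop) fun _ hz => add_one_ne_zero_of_re_pos hz

lemma differentiableOn_cayley_symm :
    DifferentiableOn ℂ (fun u : ℂ => (1 + u) / (1 - u)) (ball 0 1) :=
  DifferentiableOn.fun_div (by fun_prop) (by fun_prop)
    fun _ hu => one_sub_ne_zero_of_norm_lt_one (mem_ball_zero_iff.1 hu)

lemma biholomorphic_halfPlaneProd_unitBidisk : Biholomorphic halfPlaneProd unitBidisk := by
  refine ⟨fun p => ((p 0 - 1) / (p 0 + 1), (p 1 - 1) / (p 1 + 1)),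
    fun q => !₂[(1 + q.1) / (1 - q.1), (1 + q.2) / (1 - q.2)], ?_, ?_, ?_, ?_, ?_, ?_⟩
  · refine DifferentiableOn.prodMk ?_ ?_
    · exact differentiableOn_cayley.comp (t := {z | 0 < z.re})
        (f := fun p : EuclideanSpace ℂ (Fin 2) => p 0) (by fun_prop) fun _ hp => hp.1
    · exact differentiableOn_cayley.comp (t := {z | 0 < z.re})
        (f := fun p : EuclideanSpace ℂ (Fin 2) => p 1) (by fun_prop) fun _ hp => hp.2
  · rw [differentiableOn_euclidean]
    intro i
    fin_cases i
    · exact differentiableOn_cayley_symm.comp (f := Prod.fst) differentiableOn_fst fun _ hq => hq.1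
    · exact differentiableOn_cayley_symm.comp (f := Prod.snd) differentiableOn_snd fun _ hq => hq.2
  · exact fun p hp => ⟨mem_ball_zero_iff.2 (norm_cayley_lt_one hp.1),
      mem_ball_zero_iff.2 (norm_cayley_lt_one hp.2)⟩
  · exact fun q hq => ⟨re_cayley_symm_pos (mem_ball_zero_iff.1 hq.1),
      re_cayley_symm_pos (mem_ball_zero_iff.1 hq.2)⟩
  · intro p hp
    ext i
    fin_cases i
    · exact cayley_symm_cayley hp.1
    · exact cayley_symm_cayley hp.2
  · intro q hq
    exact Prod.ext (cayley_cayley_symm (mem_ball_zero_iff.1 hq.1))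
      (cayley_cayley_symm (mem_ball_zero_iff.1 hq.2))

/-- A sequence of sets converges to the product of half-planes as soon as it eventually contains
every point of a dense set of the limit and is, on bounded sets, eventually contained in every
translate of the limit to the left. -/
lemma locHausConv_halfPlaneProd {S : ℕ → Set (EuclideanSpace ℂ (Fin 2))}
    {Q : Set (EuclideanSpace ℂ (Fin 2))} (hQ : Dense Q)
    (hmem : ∀ p ∈ Q, p ∈ halfPlaneProd → ∀ᶠ n in atTop, p ∈ S n)
    (hre : ∀ R δ : ℝ, 0 < δ → ∀ᶠ n in atTop, ∀ p ∈ S n, ‖p‖ ≤ R →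
      -δ < (p 0).re ∧ -δ < (p 1).re) :
    LocHausConv S halfPlaneProd := by
  refine ⟨1, one_pos, fun R hR => ?_⟩
  have hR0 : 0 < R := by linarith
  set D := halfPlaneProd ∩ ball 0 R with hD
  have hDo : IsOpen D := isOpen_halfPlaneProd.inter isOpen_ball
  rw [Metric.tendsto_nhds]
  intro ε hε
  set o : EuclideanSpace ℂ (Fin 2) := !₂[1, 1] with ho
  have ho0 : 0 < ‖o‖ := by
    rw [norm_pos_iff]
    intro h
    simpa [ho] using congrArg (fun p : EuclideanSpace ℂ (Fin 2) => p 0) h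
  obtain ⟨T, hTsub, hTcover⟩ : ∃ T : Finset (EuclideanSpace ℂ (Fin 2)),
      (∀ p ∈ T, p ∈ Q ∩ D) ∧ ∀ p ∈ D, ∃ q ∈ T, dist p q ≤ ε / 2 := by
    have hc : IsCompact (closure D) :=
      (isBounded_ball.subset inter_subset_right).isCompact_closure
    obtain ⟨t, ht, htf, hcov⟩ := hc.elim_finite_subcover_image (b := Q ∩ D)
      (c := fun q => ball q (ε / 2)) (fun _ _ => isOpen_ball) (by
        intro p hp
        obtain ⟨p', hp', hpp'⟩ := Metric.mem_closure_iff.1 hp (ε / 2) (by positivity)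
        obtain ⟨q, hq, hqQ⟩ := hQ.inter_open_nonempty (ball p (ε / 2) ∩ D)
          (isOpen_ball.inter hDo) ⟨p', by simpa [dist_comm] using hpp', hp'⟩
        exact mem_biUnion (x := q) ⟨hqQ, hq.2⟩ (mem_ball_comm.1 hq.1))
    refine ⟨htf.toFinset, fun p hp => ht (by simpa using hp), fun p hp => ?_⟩
    obtain ⟨q, hq, hpq⟩ := mem_iUnion₂.1 (hcov (subset_closure hp))
    exact ⟨q, by simpa using hq, (mem_ball.1 hpq).le⟩
  have h1 : ∀ᶠ n in atTop, ∀ p ∈ T, p ∈ S n :=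
    (Filter.eventually_all_finset T).2 fun p hp => hmem p (hTsub p hp).1 (hTsub p hp).2.1
  set δ := ε / (4 * ‖o‖) with hδ
  have hδ0 : 0 < δ := by positivity
  filter_upwards [h1, hre R δ hδ0] with n hn1 hn2
  rw [Real.dist_0_eq_abs, abs_of_nonneg hausdorffDist_nonneg]
  refine lt_of_le_of_lt (hausdorffDist_le_of_mem_dist (r := ε / 2) (by positivity) ?_ ?_)
    (by linarith)
  · rintro p ⟨hpS, hpR⟩
    rw [mem_ball_zero_iff] at hpR
    obtain ⟨hp0, hp1⟩ := hn2 p hpS hpR.le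
    have hη : ‖δ • o‖ = ε / 4 := by
      rw [norm_smul, Real.norm_of_nonneg hδ0.le, hδ]
      field_simp
    set q := p + δ • o with hq
    set s := R / (R + ε / 4) with hs
    have hs0 : 0 < s := by positivity
    have hs1 : (1 - s) * (R + ε / 4) = ε / 4 := by rw [hs]; field_simp; ring
    have hs2 : s * (R + ε / 4) = R := by rw [hs]; field_simp
    have hs3 : 0 ≤ 1 - s := by
      by_contra hcon
      nlinarith
    have hqn : ‖q‖ < R + ε / 4 := (norm_add_le _ _).trans_lt (by rw [hη]; linarith)
    refine ⟨s • q, ⟨⟨?_, ?_⟩, ?_⟩, ?_⟩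
    · have : 0 < s * ((p 0).re + δ) := mul_pos hs0 (by linarith)
      simpa [hq, ho, mul_add] using this
    · have : 0 < s * ((p 1).re + δ) := mul_pos hs0 (by linarith)
      simpa [hq, ho, mul_add] using this
    · rw [mem_ball_zero_iff, norm_smul, Real.norm_of_nonneg hs0.le]
      exact hs2 ▸ mul_lt_mul_of_pos_left hqn hs0
    · have : p - s • q = (1 - s) • q - δ • o := by rw [hq]; module
      rw [dist_eq_norm, this]
      refine (norm_sub_le _ _).trans ?_
      rw [hη, norm_smul, Real.norm_of_nonneg hs3]
      have := mul_le_mul_of_nonneg_left hqn.le hs3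
      linarith
  · intro p hp
    obtain ⟨q, hqT, hpq⟩ := hTcover p hp
    exact ⟨q, ⟨hn1 q hqT, (hTsub q hqT).2.2⟩, hpq⟩

/-- A complex-linear functional on `ℂ` is the multiplication by its value at `1`. -/
lemma strongDual_complex_apply (f : StrongDual ℂ ℂ) (z : ℂ) : f z = f 1 * z := by
  rw [mul_comm, ← smul_eq_mul, ← map_smul, smul_eq_mul, mul_one]

/-- A complex number whose products with the points of the disk `|x - 1| < 1` all have non-negative
real part is a non-negative real. -/
lemma eq_norm_of_re_mul_nonneg {κ : ℂ} (h : ∀ x ∈ ball (1 : ℂ) 1, 0 ≤ (κ * x).re) :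
    κ = (‖κ‖ : ℂ) := by
  rcases eq_or_ne κ 0 with rfl | hκ
  · simp
  have hn : 0 < ‖κ‖ := norm_pos_iff.2 hκ
  have key : ‖κ‖ ≤ κ.re := by
    refine le_of_forall_pos_le_add fun ε hε => ?_
    set s : ℝ := ‖κ‖ / (‖κ‖ + ε) with hs
    have hs0 : 0 < s := by positivity
    have hs1 : s < 1 := by rw [hs, div_lt_one (by positivity)]; linarith
    have hs2 : s * (‖κ‖ + ε) = ‖κ‖ := by rw [hs]; field_simp
    have hx : (1 - s * (starRingEnd ℂ κ / ‖κ‖) : ℂ) ∈ ball (1 : ℂ) 1 := by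
      rw [mem_ball, dist_eq_norm]
      have : (1 - s * (starRingEnd ℂ κ / ‖κ‖) - 1 : ℂ) = -(s * (starRingEnd ℂ κ / ‖κ‖)) := by ring
      rw [this, norm_neg, norm_mul, norm_div, RCLike.norm_conj, Complex.norm_real, Complex.norm_real,
        norm_norm, div_self hn.ne', mul_one, Real.norm_of_nonneg hs0.le]
      exact hs1
    have h1 := h _ hx
    have h2 : κ * (1 - s * (starRingEnd ℂ κ / ‖κ‖)) = κ - ((s * ‖κ‖ : ℝ) : ℂ) := by
      have h3 : κ * starRingEnd ℂ κ = (‖κ‖ : ℂ) ^ 2 := Complex.mul_conj' κ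
      have hn' : (‖κ‖ : ℂ) ≠ 0 := by exact_mod_cast hn.ne'
      have h4 : κ * (1 - s * (starRingEnd ℂ κ / ‖κ‖)) = κ - s * ((κ * starRingEnd ℂ κ) / ‖κ‖) := by
        ring
      rw [h4, h3]
      push_cast
      field_simp
    rw [h2, Complex.sub_re, Complex.ofReal_re] at h1
    nlinarith
  have h5 : κ.re = ‖κ‖ := le_antisymm (Complex.re_le_norm κ) key
  have h6 : 0 ≤ κ.re := hn.le.trans key
  obtain ⟨-, h7⟩ := Complex.nonneg_iff.1 (Complex.re_eq_norm.1 h5)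
  exact Complex.ext (by simpa using h5) (by simpa using h7.symm)

/-- A proper closed convex subset of the plane with non-empty interior has a boundary point with
both an interior tangent disk and a supporting half-plane. -/
lemma exists_tangent_disk_of_convex {F : Set ℂ} (hc : IsClosed F) (hconv : Convex ℝ F)
    (hint : (interior F).Nonempty) (hne : F ≠ univ) :
    ∃ q v : ℂ, v ≠ 0 ∧ (∀ x ∈ ball (1 : ℂ) 1, q + x * v ∈ F) ∧
      ∀ x : ℂ, q + x * v ∈ F → 0 ≤ x.re := by
  obtain ⟨p, hp⟩ := hint
  have hne' : (Fᶜ).Nonempty := nonempty_compl.2 hne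
  obtain ⟨q, hq, hpq⟩ := exists_mem_closure_infDist_eq_dist hne' p
  have hqi : q ∉ interior F := by rwa [← mem_compl_iff, ← closure_compl]
  obtain ⟨f, hf⟩ := RCLike.geometric_hahn_banach_open_point (𝕜 := ℂ) hconv.interior
    isOpen_interior hqi
  have hball : ball p (dist p q) ⊆ F := fun x hx => by
    by_contra hxF
    have := infDist_le_dist_of_mem (x := p) (show x ∈ Fᶜ from hxF)
    rw [hpq, dist_comm p x] at this
    exact absurd (mem_ball.1 hx) this.not_gt
  have hle : ∀ x ∈ F, (f x).re ≤ (f q).re := by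
    intro x hx
    rw [← hc.closure_eq, ← hconv.closure_interior_eq_closure_of_nonempty_interior ⟨p, hp⟩] at hx
    exact closure_minimal (t := {x | (f x).re ≤ (f q).re}) (fun y hy => (hf y hy).le)
      (isClosed_le (by fun_prop) (by fun_prop)) hx
  have hv : p - q ≠ 0 := by
    rw [sub_ne_zero]
    rintro rfl
    exact hqi hp
  have hmem : ∀ x ∈ ball (1 : ℂ) 1, q + x * (p - q) ∈ F := by
    intro x hx
    apply hball
    rw [mem_ball, dist_eq_norm] at hx ⊢
    have : q + x * (p - q) - p = (x - 1) * (p - q) := by ring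
    rw [this, norm_mul, dist_eq_norm]
    exact mul_lt_of_lt_one_left (norm_pos_iff.2 hv) hx
  set κ := -(f 1 * (p - q)) with hκ
  have hre : ∀ x : ℂ, q + x * (p - q) ∈ F → 0 ≤ (κ * x).re := by
    intro x hx
    have h1 := hle _ hx
    rw [map_add, Complex.add_re, strongDual_complex_apply f (x * (p - q))] at h1
    have h2 : κ * x = -(f 1 * (x * (p - q))) := by rw [hκ]; ring
    rw [h2, Complex.neg_re]
    linarith
  have hκn := eq_norm_of_re_mul_nonneg fun x hx => hre x (hmem x hx)
  have hκ0 : 0 < ‖κ‖ := by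
    rw [norm_pos_iff]
    intro h0
    have h1 := hf p hp
    have h2 : f p - f q = -κ := by rw [← map_sub, strongDual_complex_apply f, hκ, neg_neg]
    rw [h0, neg_zero, sub_eq_zero] at h2
    rw [h2] at h1
    exact lt_irrefl _ h1
  refine ⟨q, p - q, hv, hmem, fun x hx => ?_⟩
  have h1 := hre x hx
  rw [hκn, Complex.re_ofReal_mul] at h1
  exact nonneg_of_mul_nonneg_right h1 hκ0

/-- An open convex cone in the right half-plane can be rotated inside the right half-plane so that
its closure contains a non-zero imaginary number. -/
lemma exists_rotation_of_convex_cone {C : Set ℂ} (ho : IsOpen C) (hconv : Convex ℝ C)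
    (hne : C.Nonempty) (hcone : ∀ s : ℝ, 0 < s → ∀ w ∈ C, (s : ℂ) * w ∈ C)
    (hre : ∀ w ∈ C, 0 < w.re) :
    ∃ u c : ℂ, u ≠ 0 ∧ c ≠ 0 ∧ c.re = 0 ∧ u * c ∈ closure C ∧ ∀ y, u * y ∈ C → 0 < y.re := by
  obtain ⟨w, hw⟩ := hne
  have hI : Complex.I ∉ C := fun h => by simpa using hre _ h
  obtain ⟨c, hcs, hcf⟩ : ((segment ℝ w Complex.I) ∩ frontier C).Nonempty := by
    by_contra hempty
    have hsub : segment ℝ w Complex.I ⊆ C := by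
      refine (convex_segment (𝕜 := ℝ) w Complex.I).isPreconnected.subset_left_of_subset_union ho
        isClosed_closure.isOpen_compl (disjoint_compl_right_iff_subset.2 subset_closure)
        (fun x hx => ?_) ⟨w, left_mem_segment ℝ w _, hw⟩
      by_contra hxC
      rw [mem_union, not_or, notMem_compl_iff] at hxC
      exact hempty ⟨x, hx, by rw [ho.frontier_eq]; exact ⟨hxC.2, hxC.1⟩⟩
    exact hI (hsub (right_mem_segment ℝ w _))
  have hc0 : c ≠ 0 := by
    rintro rfl
    obtain ⟨a, b, ha, hb, hab, h⟩ := hcs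
    have h1 := congrArg Complex.re h
    have h2 := congrArg Complex.im h
    simp at h1 h2
    rcases h1 with h1 | h1
    · subst h1; simp at h2 hab; linarith
    · exact (hre w hw).ne' h1
  have hcC : c ∉ C := by
    rw [ho.frontier_eq] at hcf
    exact hcf.2
  have hccl : c ∈ closure C := frontier_subset_closure hcf
  obtain ⟨f, hf⟩ := RCLike.geometric_hahn_banach_point_open (𝕜 := ℂ) hconv ho hcC
  have hf' : ∀ z ∈ C, (f 1 * c).re < (f 1 * z).re := fun z hz => by
    have := hf z hz
    rwa [strongDual_complex_apply f, strongDual_complex_apply f z] at this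
  have hk : f 1 ≠ 0 := fun h => by simpa [h] using hf' w hw
  have hpos : ∀ s : ℝ, 0 < s → (f 1 * c).re ≤ s * (f 1 * c).re := by
    intro s hs
    refine closure_minimal (t := {z | (f 1 * c).re ≤ s * (f 1 * z).re}) (fun z hz => ?_)
      (isClosed_le (by fun_prop) (by fun_prop)) hccl
    have := hf' _ (hcone s hs z hz)
    rw [mul_left_comm, Complex.re_ofReal_mul] at this
    exact this.le
  have hzero : (f 1 * c).re = 0 := by
    have h1 := hpos 2 (by norm_num)
    have h2 := hpos (1 / 2) (by norm_num)
    linarith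
  refine ⟨(f 1)⁻¹, f 1 * c, inv_ne_zero hk, mul_ne_zero hk hc0, hzero, ?_, fun y hy => ?_⟩
  · rwa [inv_mul_cancel_left₀ hk]
  · have := hf' _ hy
    rwa [hzero, mul_inv_cancel_left₀ hk] at this

/-- An open convex cone in the right half-plane, blown up at an imaginary boundary point,
contains eventually every point of the right half-plane. -/
lemma eventually_add_div_mem_of_convex_cone {C : Set ℂ} (ho : IsOpen C) (hconv : Convex ℝ C)
    (hne : C.Nonempty) (hcone : ∀ s : ℝ, 0 < s → ∀ w ∈ C, (s : ℂ) * w ∈ C)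
    (hre : ∀ w ∈ C, 0 < w.re) {c : ℂ} (hc0 : c ≠ 0) (hcre : c.re = 0) (hc : c ∈ closure C)
    {w : ℂ} (hw : 0 < w.re) : ∀ᶠ a : ℝ in atTop, c + w / a ∈ C := by
  obtain ⟨y, hy⟩ := hne
  have hyre := hre y hy
  have hcim : c.im ≠ 0 := fun h => hc0 (Complex.ext hcre h)
  set K := (w.im - w.re / y.re * y.im) / c.im with hK
  have ht : Tendsto (fun a : ℝ => 1 + K / a) atTop (𝓝 1) := by
    simpa using (tendsto_const_nhds (x := K)).div_atTop tendsto_id |>.const_add 1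
  filter_upwards [eventually_gt_atTop 0, ht.eventually (lt_mem_nhds one_pos)] with a ha hα
  set α := 1 + K / a with hα'
  set β := w.re / (a * y.re) with hβ'
  have hβ : 0 < β := by positivity
  have hcomb : c + w / a = ((α + β : ℝ) : ℂ) * ((β / (α + β)) • y + (α / (α + β)) • c) := by
    have hs : α + β ≠ 0 := by positivity
    have h1 : ((α + β : ℝ) : ℂ) * ((β / (α + β)) • y + (α / (α + β)) • c) = β * y + α * c := by
      have hs' : (α + β : ℂ) ≠ 0 := by exact_mod_cast hs
      simp only [Complex.real_smul]
      push_cast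
      field_simp
    rw [h1]
    apply Complex.ext
    · simp only [Complex.add_re, Complex.div_ofReal_re, Complex.re_ofReal_mul, hcre, hβ']
      field_simp
      ring
    · simp only [Complex.add_im, Complex.div_ofReal_im, Complex.im_ofReal_mul, hβ', hα', hK]
      field_simp
      ring
  rw [hcomb]
  refine hcone _ (by positivity) _ ?_
  have := hconv.combo_interior_closure_mem_interior (x := y) (y := c) (by rwa [ho.interior_eq]) hc
    (a := β / (α + β)) (b := α / (α + β)) (by positivity) (by positivity) (by field_simp; ring)
  rwa [ho.interior_eq] at this

/-- The cone generated by the projection of `U` to the second coordinate. -/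
def sndCone (U : Set (ℂ × ℂ)) : Set ℂ := {w : ℂ | ∃ s : ℝ, 0 < s ∧ ∃ z ∈ U, w = s * z.2}

/-- The convex domains of `ℂ × ℂ` in the normal form used for the rescaling: the slice of the
closure over `y = 0` has a tangent disk and a supporting half-plane at `0`, and the cone generated
by the projection to the second coordinate has a non-zero imaginary boundary point `c`. -/
structure IsNormalizedAt (c : ℂ) (U : Set (ℂ × ℂ)) : Prop where
  isOpen : IsOpen U
  convex : Convex ℝ U
  nonempty : U.Nonempty
  ball_subset : ∀ x ∈ ball (1 : ℂ) 1, ((x, 0) : ℂ × ℂ) ∈ closure U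
  re_nonneg : ∀ x : ℂ, ((x, 0) : ℂ × ℂ) ∈ closure U → 0 ≤ x.re
  re_snd_pos : ∀ z ∈ U, 0 < z.2.re
  ne_zero : c ≠ 0
  re_eq_zero : c.re = 0
  mem_closure : c ∈ closure (sndCone U)

section Cone

variable {U : Set (ℂ × ℂ)}

lemma isOpen_sndCone (hU : IsOpen U) : IsOpen (sndCone U) := by
  have : sndCone U = ⋃ s : Ioi (0 : ℝ), (fun w : ℂ => (s : ℂ) * w) '' (Prod.snd '' U) := by
    ext w
    simp only [sndCone, mem_ofPred_eq, mem_iUnion, mem_image, exists_exists_and_eq_and]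
    constructor
    · rintro ⟨s, hs, z, hz, rfl⟩
      exact ⟨⟨s, hs⟩, z, hz, rfl⟩
    · rintro ⟨⟨s, hs⟩, z, hz, rfl⟩
      exact ⟨s, hs, z, hz, rfl⟩
  rw [this]
  refine isOpen_iUnion fun s => ?_
  have hs : (s : ℂ) ≠ 0 := by exact_mod_cast s.2.ne'
  exact (Homeomorph.mulLeft₀ _ hs).isOpenMap _ (isOpenMap_snd _ hU)

lemma convex_sndCone (hU : Convex ℝ U) : Convex ℝ (sndCone U) := by
  rw [convex_iff_forall_pos]
  rintro _ ⟨s, hs, z, hz, rfl⟩ _ ⟨t, ht, w, hw, rfl⟩ a b ha hb -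
  have hpos : 0 < a * s + b * t := by positivity
  refine ⟨a * s + b * t, hpos, _, hU hz hw (a := a * s / (a * s + b * t))
    (b := b * t / (a * s + b * t)) (by positivity) (by positivity) (by field_simp), ?_⟩
  have h : (a * s + b * t : ℂ) ≠ 0 := by exact_mod_cast hpos.ne'
  simp only [Prod.snd_add, Prod.smul_snd, Complex.real_smul]
  push_cast
  field_simp

lemma mul_mem_sndCone {s : ℝ} (hs : 0 < s) {w : ℂ} (hw : w ∈ sndCone U) :
    (s : ℂ) * w ∈ sndCone U := by
  obtain ⟨t, ht, z, hz, rfl⟩ := hw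
  exact ⟨s * t, mul_pos hs ht, z, hz, by push_cast; ring⟩

lemma nonempty_sndCone (hU : U.Nonempty) : (sndCone U).Nonempty := by
  obtain ⟨z, hz⟩ := hU
  exact ⟨z.2, 1, one_pos, z, hz, by simp⟩

lemma re_pos_of_mem_sndCone (hU : ∀ z ∈ U, 0 < z.2.re) {w : ℂ} (hw : w ∈ sndCone U) :
    0 < w.re := by
  obtain ⟨t, ht, z, hz, rfl⟩ := hw
  rw [Complex.re_ofReal_mul]
  exact mul_pos ht (hU z hz)

end Cone

namespace IsNormalizedAt

variable {c : ℂ} {U : Set (ℂ × ℂ)}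

lemma eventually_mem (h : IsNormalizedAt c U) {w₁ w₂ : ℂ} (h₁ : 0 < w₁.re) (h₂ : 0 < w₂.re) :
    ∀ᶠ a : ℝ in atTop, ∀ᶠ b : ℝ in atTop, ((w₁ / a, (c + w₂ / a) / b) : ℂ × ℂ) ∈ U := by
  have hball : ∀ᶠ a : ℝ in atTop, w₁ / a ∈ ball (1 : ℂ) 1 := by
    filter_upwards [eventually_gt_atTop (Complex.normSq w₁ / w₁.re), eventually_gt_atTop 0]
      with a ha ha0
    rw [div_lt_iff₀ h₁] at ha
    rw [mem_ball, dist_eq_norm, ← sq_lt_sq₀ (norm_nonneg _) zero_le_one, Complex.sq_norm,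
      Complex.normSq_apply]
    rw [Complex.normSq_apply] at ha
    simp only [Complex.sub_re, Complex.sub_im, Complex.div_ofReal_re, Complex.div_ofReal_im,
      Complex.one_re, Complex.one_im, sub_zero]
    have h3 : (w₁.re / a - 1) * (w₁.re / a - 1) + w₁.im / a * (w₁.im / a)
        = 1 + (w₁.re * w₁.re + w₁.im * w₁.im - 2 * (a * w₁.re)) / a ^ 2 := by
      field_simp
      ring
    rw [h3, one_pow]
    have : (w₁.re * w₁.re + w₁.im * w₁.im - 2 * (a * w₁.re)) / a ^ 2 < 0 :=
      div_neg_of_neg_of_pos (by nlinarith [mul_pos ha0 h₁]) (by positivity)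
    linarith
  have hcone := eventually_add_div_mem_of_convex_cone (isOpen_sndCone h.isOpen)
    (convex_sndCone h.convex) (nonempty_sndCone h.nonempty) (fun _ hs _ hw => mul_mem_sndCone hs hw)
    (fun _ hw => re_pos_of_mem_sndCone h.re_snd_pos hw) h.ne_zero h.re_eq_zero h.mem_closure h₂
  filter_upwards [hball, hcone] with a ha1 ha2
  obtain ⟨s, hs, z, hz, hsz⟩ := ha2
  set x := w₁ / (a : ℂ) with hx
  have ht : Tendsto (fun b : ℝ => s / b) atTop (𝓝 0) :=
    tendsto_const_nhds.div_atTop tendsto_id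
  have hx'' : Tendsto (fun t : ℝ => (x - t * z.1) / (1 - t)) (𝓝 0) (𝓝 x) := by
    have : ContinuousAt (fun t : ℝ => (x - t * z.1) / (1 - t)) 0 := by
      refine ContinuousAt.div (by fun_prop) (by fun_prop) (by simp)
    simpa [ContinuousAt] using this
  filter_upwards [eventually_gt_atTop 0, ht.eventually (gt_mem_nhds one_pos),
    (hx''.comp ht).eventually (isOpen_ball.mem_nhds ha1)] with b hb hb1 hb2
  have hcomb := h.convex.combo_interior_closure_mem_interior (x := z)
    (by rwa [h.isOpen.interior_eq]) (h.ball_subset _ hb2) (a := s / b) (b := 1 - s / b)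
    (by positivity) (by linarith) (by ring)
  rw [h.isOpen.interior_eq] at hcomb
  convert hcomb using 1
  have h1 : (1 - s / b : ℂ) ≠ 0 := by
    rw [sub_ne_zero]
    exact_mod_cast hb1.ne'
  refine Prod.ext ?_ ?_
  · simp only [Function.comp_apply, Prod.fst_add, Prod.smul_fst, Complex.real_smul]
    push_cast
    rw [mul_div_cancel₀ _ h1]
    ring
  · simp only [Prod.snd_add, Prod.smul_snd, Complex.real_smul, hsz]
    push_cast
    ring

lemma eventually_re_gt (h : IsNormalizedAt c U) {a : ℝ} (ha : 0 < a) (R : ℝ) {δ : ℝ} (hδ : 0 < δ) :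
    ∀ᶠ b : ℝ in atTop, ∀ w₁ w₂ : ℂ, ((w₁ / a, (c + w₂ / a) / b) : ℂ × ℂ) ∈ U →
      ‖w₁‖ ≤ R → ‖w₂‖ ≤ R → -δ < w₁.re := by
  set K : Set (ℂ × ℂ) := (fun w : ℂ => ((w / a, 0) : ℂ × ℂ)) ''
    (closedBall 0 R ∩ {w | w.re ≤ -δ}) with hK
  have hKc : IsCompact K := by
    refine ((isCompact_closedBall _ _).inter_right (isClosed_le ?_ ?_)).image ?_ <;> fun_prop
  have hdisj : Disjoint K (closure U) := by
    rw [Set.disjoint_left]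
    rintro _ ⟨w, ⟨-, hw⟩, rfl⟩ hcl
    have := h.re_nonneg _ hcl
    rw [Complex.div_ofReal_re] at this
    have h2 : w.re / a < 0 := div_neg_of_neg_of_pos (by simp at hw; linarith) ha
    linarith
  obtain ⟨η, hη, hηd⟩ := hdisj.exists_thickenings hKc isClosed_closure
  have ht : Tendsto (fun b : ℝ => (‖c‖ + R / a) / b) atTop (𝓝 0) :=
    tendsto_const_nhds.div_atTop tendsto_id
  filter_upwards [eventually_gt_atTop 0, ht.eventually (gt_mem_nhds hη)] with b hb hb1 w₁ w₂ hU h1 h2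
  by_contra hcon
  refine Set.disjoint_left.1 hηd ?_ (self_subset_thickening hη _ (subset_closure hU))
  rw [mem_thickening_iff]
  refine ⟨(w₁ / a, 0), ⟨w₁, ⟨by simpa using h1, by simpa using hcon⟩, rfl⟩, ?_⟩
  rw [Prod.dist_eq, dist_self, max_lt_iff]
  refine ⟨hη, lt_of_le_of_lt ?_ hb1⟩
  rw [dist_zero_right, norm_div, Complex.norm_real, Real.norm_of_nonneg hb.le]
  gcongr
  refine (norm_add_le _ _).trans ?_
  rw [norm_div, Complex.norm_real, Real.norm_of_nonneg ha.le]
  gcongr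

lemma re_snd_gt (h : IsNormalizedAt c U) {a b : ℝ} (ha : 0 < a) (hb : 0 < b) {w₁ w₂ : ℂ}
    (hw : ((w₁ / a, (c + w₂ / a) / b) : ℂ × ℂ) ∈ U) : 0 < w₂.re := by
  have := h.re_snd_pos _ hw
  rw [Complex.div_ofReal_re, Complex.add_re, h.re_eq_zero, zero_add, Complex.div_ofReal_re] at this
  rwa [div_pos_iff_of_pos_right hb, div_pos_iff_of_pos_right ha] at this

/-- A rescaling sequence along which a domain in normal form converges to the product of two
half-planes, with base points whose second coordinate tends to `0`. -/
lemma exists_rescaling (h : IsNormalizedAt c U) :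
    ∃ a b : ℕ → ℝ, (∀ n, 0 < a n) ∧ (∀ n, 0 < b n) ∧
      (∀ n, ((1 / a n, (c + 1 / a n) / b n) : ℂ × ℂ) ∈ U) ∧
      Tendsto (fun n => ((c + 1 / a n) / b n : ℂ)) atTop (𝓝 0) ∧
      LocHausConv (fun n => {p | ((p 0 / a n, (c + p 1 / a n) / b n) : ℂ × ℂ) ∈ U})
        halfPlaneProd := by
  obtain ⟨Q, hQc, hQd⟩ := TopologicalSpace.exists_countable_dense (EuclideanSpace ℂ (Fin 2))
  obtain ⟨d, rfl⟩ := hQc.exists_eq_range hQd.nonempty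
  have key : ∀ n : ℕ, ∃ a b : ℝ, 0 < a ∧ 0 < b ∧ ((1 / a, (c + 1 / a) / b) : ℂ × ℂ) ∈ U ∧
      ‖((c + 1 / a) / b : ℂ)‖ < 1 / (n + 1) ∧
      (∀ k ∈ Finset.range n, d k ∈ halfPlaneProd →
        ((d k 0 / a, (c + d k 1 / a) / b) : ℂ × ℂ) ∈ U) ∧
      ∀ w₁ w₂ : ℂ, ((w₁ / a, (c + w₂ / a) / b) : ℂ × ℂ) ∈ U →
        ‖w₁‖ ≤ n → ‖w₂‖ ≤ n → -(1 / (n + 1) : ℝ) < w₁.re := by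
    intro n
    have hd : ∀ᶠ a : ℝ in atTop, ∀ k ∈ Finset.range n, d k ∈ halfPlaneProd → ∀ᶠ b : ℝ in atTop,
        ((d k 0 / a, (c + d k 1 / a) / b) : ℂ × ℂ) ∈ U := by
      refine (Filter.eventually_all_finset _).2 fun k _ => ?_
      by_cases hk : d k ∈ halfPlaneProd
      · exact (h.eventually_mem hk.1 hk.2).mono fun a ha _ => ha
      · exact Eventually.of_forall fun _ hk' => absurd hk' hk
    obtain ⟨a, ha, ha1, had⟩ := ((eventually_gt_atTop 0).and
      ((h.eventually_mem (w₁ := 1) (w₂ := 1) (by simp) (by simp)).and hd)).exists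
    have hd' : ∀ᶠ b : ℝ in atTop, ∀ k ∈ Finset.range n, d k ∈ halfPlaneProd →
        ((d k 0 / a, (c + d k 1 / a) / b) : ℂ × ℂ) ∈ U := by
      refine (Filter.eventually_all_finset _).2 fun k hk => ?_
      by_cases hkD : d k ∈ halfPlaneProd
      · exact (had k hk hkD).mono fun b hb _ => hb
      · exact Eventually.of_forall fun _ hk' => absurd hk' hkD
    have ht : Tendsto (fun b : ℝ => ‖((c + 1 / a) / b : ℂ)‖) atTop (𝓝 0) := by
      simp only [norm_div, Complex.norm_real]
      exact tendsto_const_nhds.div_atTop tendsto_norm_atTop_atTop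
    have hn : (0 : ℝ) < 1 / (n + 1) := Nat.one_div_pos_of_nat
    obtain ⟨b, hb, hb1, hb2, hb3, hb4⟩ := ((eventually_gt_atTop 0).and (ha1.and
      ((ht.eventually (gt_mem_nhds hn)).and (hd'.and (h.eventually_re_gt ha n hn))))).exists
    exact ⟨a, b, ha, hb, hb1, hb2, hb3, hb4⟩
  choose a b ha hb h1 hlim hmem hre using key
  refine ⟨a, b, ha, hb, h1, ?_, locHausConv_halfPlaneProd hQd ?_ ?_⟩
  · exact squeeze_zero_norm (fun n => (hlim n).le) tendsto_one_div_add_atTop_nhds_zero_nat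
  · rintro _ ⟨k, rfl⟩ hk
    filter_upwards [eventually_gt_atTop k] with n hn
    exact hmem n k (Finset.mem_range.2 hn) hk
  · intro R δ hδ
    filter_upwards [eventually_ge_atTop ⌈R⌉₊,
      tendsto_one_div_add_atTop_nhds_zero_nat.eventually (gt_mem_nhds hδ)] with n hn hnδ p hp hpR
    have hRn : ‖p‖ ≤ n := hpR.trans (Nat.ceil_le.1 hn)
    have := hre n _ _ hp ((PiLp.norm_apply_le p 0).trans hRn) ((PiLp.norm_apply_le p 1).trans hRn)
    exact ⟨by linarith, by linarith [h.re_snd_gt (ha n) (hb n) hp]⟩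

end IsNormalizedAt

/-- The closure of a convex domain without complex lines contains no complex line either. -/
lemma exists_notMem_closure_of_inX {E : Type*} [NormedAddCommGroup E]
    [NormedSpace ℂ E] {Ω : Set E} (hΩ : InX Ω) (x : E) {e : E} (he : e ≠ 0) :
    ∃ lam : ℂ, x + lam • e ∉ closure Ω := by
  by_contra! hcl
  obtain ⟨⟨ho, hconv, z, hz⟩, hline⟩ := hΩ
  refine hline z e he fun lam => ?_
  have ht : Tendsto (fun t : ℝ => (1 - t)⁻¹ • (z - t • x)) (𝓝[>] 0) (𝓝 z) := by
    have : ContinuousAt (fun t : ℝ => (1 - t)⁻¹ • (z - t • x)) 0 :=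
      ContinuousAt.smul (f := fun t : ℝ => (1 - t)⁻¹) (ContinuousAt.inv₀ (by fun_prop) (by simp))
        (by fun_prop)
    have h2 : Tendsto (fun t : ℝ => (1 - t)⁻¹ • (z - t • x)) (𝓝 0) (𝓝 z) := by
      simpa [ContinuousAt] using this
    exact h2.mono_left nhdsWithin_le_nhds
  obtain ⟨t, htz, ht0, ht1⟩ := ((ht.eventually (ho.mem_nhds hz)).and
    (Ioo_mem_nhdsGT (zero_lt_one' ℝ))).exists
  have hcomb := hconv.combo_interior_closure_mem_interior (by rwa [ho.interior_eq])
    (hcl (lam / t)) (a := 1 - t) (b := t) (by linarith) ht0.le (by ring)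
  rw [ho.interior_eq, smul_inv_smul₀ (by linarith), smul_add, ← Complex.coe_smul t (_ • e),
    smul_smul, mul_div_cancel₀ _ (by exact_mod_cast ht0.ne')] at hcomb
  convert hcomb using 1
  abel

/-- Every open convex subset of `ℂ × ℂ` in the region `0 < re y` whose closure contains a disk, but
not the whole line, in `y = 0` can be put into normal form by a diagonal affine map. -/
lemma exists_isNormalizedAt {U : Set (ℂ × ℂ)} (ho : IsOpen U) (hconv : Convex ℝ U)
    (hne : U.Nonempty) (hre : ∀ z ∈ U, 0 < z.2.re)
    (hball : ∀ x ∈ ball (0 : ℂ) 1, ((x, 0) : ℂ × ℂ) ∈ closure U)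
    (hline : ∃ x : ℂ, ((x, 0) : ℂ × ℂ) ∉ closure U) :
    ∃ q v u c : ℂ, v ≠ 0 ∧ u ≠ 0 ∧ IsNormalizedAt c {z | (q + z.1 * v, u * z.2) ∈ U} := by
  set F : Set ℂ := (fun x : ℂ => ((x, 0) : ℂ × ℂ)) ⁻¹' closure U with hF
  have hFconv : Convex ℝ F :=
    hconv.closure.linear_preimage (LinearMap.inl ℝ ℂ ℂ)
  obtain ⟨q, v, hv, hqv, hqre⟩ := exists_tangent_disk_of_convex
    (isClosed_closure.preimage (by fun_prop)) hFconv
    ⟨0, interior_maximal hball isOpen_ball (mem_ball_self one_pos)⟩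
    ((ne_univ_iff_exists_notMem F).2 hline)
  obtain ⟨u, c, hu, hc, hcre, huc, hure⟩ := exists_rotation_of_convex_cone (isOpen_sndCone ho)
    (convex_sndCone hconv) (nonempty_sndCone hne) (fun _ hs _ hw => mul_mem_sndCone hs hw)
    (fun _ hw => re_pos_of_mem_sndCone hre hw)
  let G : (ℂ × ℂ) ≃ₜ (ℂ × ℂ) :=
    ((Homeomorph.mulRight₀ v hv).trans (Homeomorph.addLeft q)).prodCongr (Homeomorph.mulLeft₀ u hu)
  have hG : ∀ z, G z = (q + z.1 * v, u * z.2) := fun z => rfl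
  have hGU : {z : ℂ × ℂ | (q + z.1 * v, u * z.2) ∈ U} = G ⁻¹' U := rfl
  have hcl : ∀ x : ℂ, ((x, 0) : ℂ × ℂ) ∈ closure (G ⁻¹' U) ↔ q + x * v ∈ F := fun x => by
    rw [← G.preimage_closure, mem_preimage, hG, mul_zero]
    rfl
  have hcone : sndCone (G ⁻¹' U) = Homeomorph.mulLeft₀ u hu ⁻¹' sndCone U := by
    ext w
    simp only [sndCone, mem_ofPred_eq, mem_preimage, Homeomorph.coe_mulLeft₀]
    constructor
    · rintro ⟨s, hs, z, hz, rfl⟩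
      exact ⟨s, hs, _, hz, by rw [hG]; ring⟩
    · rintro ⟨s, hs, z, hz, hw⟩
      refine ⟨s, hs, G.symm z, by simpa using hz, mul_left_cancel₀ hu ?_⟩
      have : (G (G.symm z)).2 = u * (G.symm z).2 := by rw [hG]
      rw [G.apply_symm_apply] at this
      rw [hw, this]
      ring
  refine ⟨q, v, u, c, hv, hu, ?_⟩
  rw [hGU]
  refine ⟨ho.preimage G.continuous, ?_, hne.preimage G.surjective, fun x hx => ?_, fun x hx => ?_,
    fun z hz => ?_, hc, hcre, ?_⟩
  · intro z hz w hw a b ha hb hab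
    have h1 := hconv hz hw ha hb hab
    rw [mem_preimage]
    convert h1 using 1
    have hab' : (a : ℂ) + b = 1 := by exact_mod_cast hab
    refine Prod.ext ?_ ?_
    · simp only [hG, Prod.fst_add, Prod.smul_fst, Complex.real_smul]
      linear_combination -q * hab'
    · simp only [hG, Prod.snd_add, Prod.smul_snd, Complex.real_smul]
      ring
  · exact (hcl x).2 (hqv x hx)
  · exact hqre x ((hcl x).1 hx)
  · exact hure _ ⟨1, one_pos, G z, hz, by simp [hG]⟩
  · rw [hcone, ← Homeomorph.preimage_closure]
    exact huc

/-- An affine disk in the boundary of a convex domain of `ℂ²` gives coordinates in which the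
disk is the unit disk of `y = 0` and the domain lies in the region `0 < re y`. -/
lemma exists_adapted_coordinates {Ω : Set (EuclideanSpace ℂ (Fin 2))} (hΩ : IsConvexDomain Ω)
    {ℓ : ℂ →ᵃ[ℂ] EuclideanSpace ℂ (Fin 2)} (hℓ : ℓ.linear ≠ 0)
    (hdisk : ℓ '' ball (0 : ℂ) 1 ⊆ frontier Ω) :
    ∃ (p : EuclideanSpace ℂ (Fin 2)) (L : (ℂ × ℂ) ≃L[ℂ] EuclideanSpace ℂ (Fin 2)),
      (∀ z, p + L z ∈ Ω → 0 < z.2.re) ∧ ∀ x ∈ ball (0 : ℂ) 1, p + L (x, 0) ∈ closure Ω := by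
  obtain ⟨ho, hconv, z₀, hz₀⟩ := hΩ
  set p := ℓ 0 with hp
  set e := ℓ.linear 1 with he
  have hℓx : ∀ x, ℓ x = p + x • e := fun x => by
    have := ℓ.map_vadd 0 x
    rw [vadd_eq_add, add_zero, vadd_eq_add] at this
    rw [this, he, ← map_smul, smul_eq_mul, mul_one, add_comm]
  have he0 : e ≠ 0 := fun h => hℓ <| LinearMap.ext_ring <| by simpa [he] using h
  have hfr : ∀ x ∈ ball (0 : ℂ) 1, p + x • e ∈ frontier Ω := fun x hx =>
    hdisk ⟨x, hx, hℓx x⟩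
  have hpΩ : p ∉ Ω := fun h => by
    have := hfr 0 (mem_ball_self one_pos)
    rw [zero_smul, add_zero, ho.frontier_eq] at this
    exact this.2 h
  obtain ⟨f, hf⟩ := RCLike.geometric_hahn_banach_point_open (𝕜 := ℂ) hconv ho hpΩ
  have hfcl : ∀ z ∈ closure Ω, (f p).re ≤ (f z).re := fun z hz =>
    closure_minimal (t := {z | (f p).re ≤ (f z).re}) (fun y hy => (hf y hy).le)
      (isClosed_le (by fun_prop) (by fun_prop)) hz
  have hfe : f e = 0 := by
    by_contra hne
    have hn : 0 < ‖f e‖ := norm_pos_iff.2 hne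
    set x : ℂ := -(starRingEnd ℂ (f e) / (2 * ‖f e‖)) with hx
    have hxb : x ∈ ball (0 : ℂ) 1 := by
      rw [mem_ball_zero_iff, hx, norm_neg, norm_div, RCLike.norm_conj, norm_mul, Complex.norm_real,
        norm_norm, Complex.norm_ofNat, div_lt_one (by positivity)]
      linarith
    have h1 := hfcl _ (frontier_subset_closure (hfr x hxb))
    have hn' : (‖f e‖ : ℂ) ≠ 0 := by exact_mod_cast hn.ne'
    have h2 : x * f e = ((-(‖f e‖ / 2) : ℝ) : ℂ) := by
      have h3 : starRingEnd ℂ (f e) * f e = (‖f e‖ : ℂ) ^ 2 := Complex.conj_mul' _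
      have h4 : x * f e = -((starRingEnd ℂ (f e) * f e) / (2 * ‖f e‖)) := by rw [hx]; ring
      rw [h4, h3]
      push_cast
      field_simp
    rw [map_add, map_smul, smul_eq_mul, h2, Complex.add_re, Complex.ofReal_re] at h1
    linarith
  obtain ⟨g, hg⟩ : ∃ g, f g = 1 := by
    have h1 : f (z₀ - p) ≠ 0 := fun h => by
      rw [map_sub, sub_eq_zero] at h
      have := hf z₀ hz₀
      rw [h] at this
      exact lt_irrefl _ this
    exact ⟨(f (z₀ - p))⁻¹ • (z₀ - p), by rw [map_smul, smul_eq_mul, inv_mul_cancel₀ h1]⟩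
  let L₀ : (ℂ × ℂ) →ₗ[ℂ] EuclideanSpace ℂ (Fin 2) :=
    (LinearMap.toSpanSingleton ℂ _ e).coprod (LinearMap.toSpanSingleton ℂ _ g)
  have hL₀ : ∀ z, L₀ z = z.1 • e + z.2 • g := fun z => rfl
  have hfL : ∀ z, f (L₀ z) = z.2 := fun z => by simp [hL₀, hfe, hg]
  have hinj : Function.Injective L₀ := by
    rw [injective_iff_map_eq_zero]
    intro z hz
    have h2 : z.2 = 0 := by rw [← hfL, hz, map_zero]
    rw [hL₀, h2, zero_smul, add_zero, smul_eq_zero] at hz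
    exact Prod.ext (hz.resolve_right he0) h2
  let L := (LinearMap.linearEquivOfInjective L₀ hinj (by simp)).toContinuousLinearEquiv
  have hL : ∀ z, L z = L₀ z := fun z => rfl
  refine ⟨p, L, fun z hz => ?_, fun x hx => ?_⟩
  · have := hf _ hz
    rw [hL, map_add, hfL] at this
    simpa using this
  · rw [hL, hL₀, zero_smul, add_zero]
    exact frontier_subset_closure (hfr x hx)

/-- The affine automorphism `(x, y) ↦ o + L (α x, β y)` of `ℂ²`. -/
def diagAffineEquiv (L : (ℂ × ℂ) ≃L[ℂ] EuclideanSpace ℂ (Fin 2)) (o : EuclideanSpace ℂ (Fin 2))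
    {α β : ℂ} (hα : α ≠ 0) (hβ : β ≠ 0) :
    EuclideanSpace ℂ (Fin 2) ≃ᵃ[ℂ] EuclideanSpace ℂ (Fin 2) :=
  ((((WithLp.linearEquiv 2 ℂ (Fin 2 → ℂ)).trans (LinearEquiv.finTwoArrow ℂ ℂ)).trans
    (((LinearEquiv.smulOfNeZero ℂ ℂ α hα).prodCongr (LinearEquiv.smulOfNeZero ℂ ℂ β hβ)).trans
      L.toLinearEquiv)).toAffineEquiv).trans (AffineEquiv.constVAdd ℂ _ o)

lemma diagAffineEquiv_apply (L : (ℂ × ℂ) ≃L[ℂ] EuclideanSpace ℂ (Fin 2))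
    (o : EuclideanSpace ℂ (Fin 2)) {α β : ℂ} (hα : α ≠ 0) (hβ : β ≠ 0)
    (p : EuclideanSpace ℂ (Fin 2)) :
    diagAffineEquiv L o hα hβ p = o + L (α * p 0, β * p 1) := rfl

/-- If `Ω ⊆ ℂ²` is a convex domain containing no complex affine line and
`∂Ω` contains a non-trivial affine disk, then some affine limit of `Ω` is biholomorphic
to `𝔻 × 𝔻`. -/
theorem statement0 (Ω : Set (EuclideanSpace ℂ (Fin 2))) (hΩ : InX Ω)
    (hdisk : ∃ ℓ : ℂ →ᵃ[ℂ] EuclideanSpace ℂ (Fin 2),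
      ℓ.linear ≠ 0 ∧ ℓ '' (Metric.ball (0:ℂ) 1) ⊆ frontier Ω) :
    ∃ Ωlim : Set (EuclideanSpace ℂ (Fin 2)),
      IsAffineLimit Ω Ωlim ∧ Biholomorphic Ωlim unitBidisk := by
  obtain ⟨ℓ, hℓ, hℓΩ⟩ := hdisk
  obtain ⟨p, L, hre, hball⟩ := exists_adapted_coordinates hΩ.1 hℓ hℓΩ
  let Ψ : (ℂ × ℂ) ≃ₜ EuclideanSpace ℂ (Fin 2) := L.toHomeomorph.trans (Homeomorph.addLeft p)
  have hΨ : ∀ z, Ψ z = p + L z := fun z => rfl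
  have hL1 : L (1, 0) ≠ 0 := by simp
  have hconv : Convex ℝ (Ψ ⁻¹' Ω) := by
    intro z hz w hw a b ha hb hab
    have h1 := hΩ.1.2.1 hz hw ha hb hab
    rw [mem_preimage]
    convert h1 using 1
    rw [hΨ, hΨ, hΨ, map_add, ← Complex.coe_smul a z, ← Complex.coe_smul b w, map_smul, map_smul,
      Complex.coe_smul, Complex.coe_smul, smul_add, smul_add, add_add_add_comm, ← add_smul, hab,
      one_smul]
  obtain ⟨q, v, u, c, hv, hu, hnorm⟩ := exists_isNormalizedAt (U := Ψ ⁻¹' Ω)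
    (hΩ.1.1.preimage Ψ.continuous) hconv (hΩ.1.2.2.preimage Ψ.surjective) hre
    (fun x hx => by rw [← Ψ.preimage_closure]; exact hball x hx) (by
      obtain ⟨x, hx⟩ := exists_notMem_closure_of_inX hΩ p hL1
      refine ⟨x, ?_⟩
      rwa [← Ψ.preimage_closure, mem_preimage, hΨ, ← mul_one x, ← mul_zero x, ← smul_eq_mul,
        ← smul_eq_mul, ← Prod.smul_mk, map_smul])
  obtain ⟨a, b, ha, hb, hmem, hlim, hconvg⟩ := hnorm.exists_rescaling
  have ha' : ∀ n, (a n : ℂ) ≠ 0 := fun n => by exact_mod_cast (ha n).ne'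
  have hb' : ∀ n, (b n : ℂ) ≠ 0 := fun n => by exact_mod_cast (hb n).ne'
  have hα : ∀ n, v / a n ≠ 0 := fun n => div_ne_zero hv (ha' n)
  have hβ : ∀ n, u / (a n * b n) ≠ 0 := fun n => div_ne_zero hu (mul_ne_zero (ha' n) (hb' n))
  let T : ℕ → (EuclideanSpace ℂ (Fin 2) ≃ᵃ[ℂ] EuclideanSpace ℂ (Fin 2)) := fun n =>
    diagAffineEquiv L (p + L (q, u * c / b n)) (hα n) (hβ n)
  have hT : ∀ n w, T n w = Ψ (q + w 0 / a n * v, u * ((c + w 1 / a n) / b n)) := by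
    intro n w
    rw [hΨ, diagAffineEquiv_apply, add_assoc, ← map_add, Prod.mk_add_mk]
    have := ha' n
    have := hb' n
    congr 3
    · ring
    · field_simp
  set o : EuclideanSpace ℂ (Fin 2) := !₂[1, 1] with ho
  refine ⟨halfPlaneProd, ⟨inX_halfPlaneProd, fun n => T n o, o, fun n => (T n).symm, fun n => ?_,
    ?_, by simp [halfPlaneProd, ho], ?_, ?_⟩, biholomorphic_halfPlaneProd_unitBidisk⟩
  · beta_reduce
    rw [hT]
    exact hmem n
  · intro K hK hKΩ
    set φ : EuclideanSpace ℂ (Fin 2) → ℂ := fun z => (Ψ.symm z).2 with hφ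
    have hφc : Continuous φ := continuous_snd.comp Ψ.symm.continuous
    have h0 : (0 : ℂ) ∉ φ '' K := by
      rintro ⟨z, hz, hz0⟩
      have h1 := hre (Ψ.symm z) (by rw [← hΨ, Ψ.apply_symm_apply]; exact hKΩ hz)
      rw [show (Ψ.symm z).2 = 0 from hz0] at h1
      exact lt_irrefl _ h1
    have hφT : Tendsto (fun n => φ (T n o)) atTop (𝓝 0) := by
      have : ∀ n, φ (T n o) = u * ((c + 1 / a n) / b n) := fun n => by
        simp [hφ, hT, ho]
      simp only [this]
      simpa using hlim.const_mul u
    obtain ⟨N, hN⟩ := eventually_atTop.1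
      (hφT.eventually ((hK.image hφc).isClosed.isOpen_compl.mem_nhds h0))
    exact ⟨N, fun n hn hnK => hN n hn (mem_image_of_mem φ hnK)⟩
  · convert hconvg using 2 with n
    ext w
    constructor
    · rintro ⟨z, hz, rfl⟩
      have h1 := hT n ((T n).symm z)
      rw [AffineEquiv.apply_symm_apply] at h1
      rw [h1] at hz
      exact hz
    · intro hw
      exact ⟨T n w, by rw [hT]; exact hw, AffineEquiv.symm_apply_apply _ _⟩
  · simp only [AffineEquiv.symm_apply_apply]
    exact tendsto_const_nhds
end
end

section
/- Let Ω ⊂ ℂ^d be a convex domain containing no complex affine line. Suppose that either (1) there exists a non-constant holomorphic map from the unit disk 𝔻 into the boundary ∂Ω, or (2) ∂Ω is a C^∞ smooth real hypersurface and ∂Ω has a point of infinite type in the sense of D'Angelo. Then there exist an affine limit Ω_∞ of Ω and a complex affine 2-plane V ⊂ ℂ^d such that V ∩ Ω_∞ is biholomorphic to 𝔻 × 𝔻. -/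
open Set Metric Filter Topology
open scoped ENNReal NNReal

noncomputable section

/-- The order of vanishing at `0` of `g - g 0` for a map `g : ℂ → G`: the least `k ≥ 1`
such that the `k`-th (real) iterated derivative of `g` at `0` is non-zero (`⊤` if none). -/
def vanishOrder {G : Type*} [NormedAddCommGroup G] [NormedSpace ℝ G] (g : ℂ → G) : ℕ∞ :=
  sInf {n : ℕ∞ | ∃ k : ℕ, n = (k : ℕ∞) ∧ 1 ≤ k ∧ iteratedFDeriv ℝ k g 0 ≠ 0}

variable {E : Type*} [NormedAddCommGroup E] [NormedSpace ℂ E]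

/-- `Γ` is a `C^∞` smooth real hypersurface: near each of its points it is the zero set
of a smooth local defining function with non-vanishing differential. -/
def IsSmoothRealHypersurface (Γ : Set E) : Prop :=
  ∀ p ∈ Γ, ∃ (U : Set E) (r : E → ℝ), IsOpen U ∧ p ∈ U ∧ ContDiffOn ℝ (⊤ : ℕ∞) r U ∧
    (∀ x ∈ U, fderiv ℝ r x ≠ 0) ∧ Γ ∩ U = {x ∈ U | r x = 0}

/-- `p` is a point of infinite D'Angelo type of `Γ`: for a smooth local defining
function `r` of `Γ` at `p`, for every `N` there is a germ of a non-constant holomorphic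
map `z : (ℂ,0) → (E,p)` with `ν(r ∘ z) ≥ N · ν(z)`. -/
def InfiniteTypePoint (Γ : Set E) (p : E) : Prop :=
  p ∈ Γ ∧ ∃ (U : Set E) (r : E → ℝ), IsOpen U ∧ p ∈ U ∧ ContDiffOn ℝ (⊤ : ℕ∞) r U ∧
    (∀ x ∈ U, fderiv ℝ r x ≠ 0) ∧ Γ ∩ U = {x ∈ U | r x = 0} ∧
    ∀ N : ℕ, ∃ (ε : ℝ) (z : ℂ → E), 0 < ε ∧
      DifferentiableOn ℂ z (Metric.ball 0 ε) ∧ z 0 = p ∧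
      (¬ ∀ w ∈ Metric.ball (0:ℂ) ε, z w = p) ∧
      (N : ℕ∞) * vanishOrder z ≤ vanishOrder (fun w => r (z w))

/-- `Ω` has affine images whose slices by complex 2-planes are, on any given finite set, as close
as one likes to a product of two half planes, while the points escape a given compact set. -/
def HasBidiskSections {H : Type*} [NormedAddCommGroup H] [NormedSpace ℂ H] (Ω : Set H) : Prop :=
  ∀ (S : Finset (ℂ × ℂ)) (K : Set H), IsCompact K → K ⊆ Ω → ∃ z u v : H, ∀ x ∈ S,
    (x.1.re < 1 → x.2.re < 1 → z + x.1 • u + x.2 • v ∈ Ω) ∧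
    (1 < x.1.re ∨ 1 < x.2.re → z + x.1 • u + x.2 • v ∉ Ω) ∧
    z + x.1 • u + x.2 • v ∉ K

/-- The gauge of the product of half planes `{Re a < 1} × {Re b < 1}`. -/
def halfPlaneGauge (x : ℂ × ℂ) : ℝ := max 0 (max x.1.re x.2.re)

lemma halfPlaneGauge_nonneg (x : ℂ × ℂ) : 0 ≤ halfPlaneGauge x := le_max_left _ _

lemma halfPlaneGauge_lt_one_iff (x : ℂ × ℂ) :
    halfPlaneGauge x < 1 ↔ x.1.re < 1 ∧ x.2.re < 1 := by
  simp [halfPlaneGauge]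

lemma halfPlaneGauge_le_add (x y : ℂ × ℂ) :
    halfPlaneGauge x ≤ halfPlaneGauge y + ‖x - y‖ := by
  have h1 : x.1.re - y.1.re ≤ ‖x - y‖ := by
    rw [← Complex.sub_re]
    exact (Complex.re_le_norm _).trans (norm_fst_le (x - y))
  have h2 : x.2.re - y.2.re ≤ ‖x - y‖ := by
    rw [← Complex.sub_re]
    exact (Complex.re_le_norm _).trans (norm_snd_le (x - y))
  have h3 : y.1.re ≤ halfPlaneGauge y := (le_max_left _ _).trans (le_max_right _ _)
  have h4 : y.2.re ≤ halfPlaneGauge y := (le_max_right _ _).trans (le_max_right _ _)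
  refine max_le ?_ (max_le ?_ ?_)
  · have := halfPlaneGauge_nonneg y
    positivity
  · linarith
  · linarith

lemma halfPlaneGauge_smul (c : ℝ) (hc : 0 ≤ c) (x : ℂ × ℂ) :
    halfPlaneGauge ((c : ℂ) • x) = c * halfPlaneGauge x := by
  simp [halfPlaneGauge, mul_max_of_nonneg _ _ hc]

section Gauge

variable {H : Type*} [NormedAddCommGroup H] [NormedSpace ℂ H]

lemma gauge_lt_one_iff_mem {D : Set H} (ho : IsOpen D) (hc : Convex ℝ D) (h0 : (0 : H) ∈ D)
    (x : H) : gauge D x < 1 ↔ x ∈ D :=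
  Set.ext_iff.1 (setOfPred_gauge_lt_one_eq_self_of_isOpen hc h0 ho) x

lemma gauge_smul_complex (D : Set H) (c : ℝ) (hc : 0 ≤ c) (x : H) :
    gauge D ((c : ℂ) • x) = c * gauge D x := by
  rw [Complex.coe_smul, gauge_smul_of_nonneg hc, smul_eq_mul]

lemma gauge_add_le' {D : Set H} (ho : IsOpen D) (hc : Convex ℝ D) (h0 : (0 : H) ∈ D) (x y : H) :
    gauge D (x + y) ≤ gauge D x + gauge D y :=
  gauge_add_le hc (absorbent_nhds_zero (ho.mem_nhds h0)) x y

lemma gauge_le_of_smul_mem {D : Set H} (ho : IsOpen D) (hc : Convex ℝ D) (h0 : (0 : H) ∈ D)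
    {x : H} {c : ℝ} (hc' : 0 < c) (h : ((c⁻¹ : ℝ) : ℂ) • x ∈ D) : gauge D x ≤ c := by
  have := (gauge_lt_one_iff_mem ho hc h0 _).2 h
  rw [gauge_smul_complex _ _ (by positivity), inv_mul_lt_iff₀ hc'] at this
  linarith

lemma le_gauge_of_smul_notMem {D : Set H} (ho : IsOpen D) (hc : Convex ℝ D) (h0 : (0 : H) ∈ D)
    {x : H} {c : ℝ} (hc' : 0 < c) (h : ((c⁻¹ : ℝ) : ℂ) • x ∉ D) : c ≤ gauge D x := by
  have := mt (gauge_lt_one_iff_mem ho hc h0 _).1 h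
  rw [gauge_smul_complex _ _ (by positivity), inv_mul_lt_iff₀ hc'] at this
  linarith

/-- The sum of the gauge over the four unit directions in a complex line. -/
def gaugeFour (D : Set H) (x : H) : ℝ :=
  gauge D x + gauge D (-x) + gauge D (Complex.I • x) + gauge D (-(Complex.I • x))

lemma gauge_smul_le {D : Set H} (ho : IsOpen D) (hc : Convex ℝ D) (h0 : (0 : H) ∈ D) (a : ℂ)
    (x : H) : gauge D (a • x) ≤ ‖a‖ * gaugeFour D x := by
  have hreal : ∀ (w : H) (r : ℝ), gauge D ((r : ℂ) • w) ≤ |r| * (gauge D w + gauge D (-w)) := by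
    intro w r
    have g1 := gauge_nonneg (s := D) w
    have g2 := gauge_nonneg (s := D) (-w)
    rcases le_total 0 r with hr | hr
    · rw [gauge_smul_complex _ _ hr, abs_of_nonneg hr]
      nlinarith
    · have : (r : ℂ) • w = ((-r : ℝ) : ℂ) • (-w) := by push_cast; simp
      rw [this, gauge_smul_complex _ _ (by linarith), abs_of_nonpos hr]
      nlinarith
  have e : a • x = (a.re : ℂ) • x + (a.im : ℂ) • (Complex.I • x) := by
    rw [smul_smul, ← add_smul, Complex.re_add_im]
  have i1 := hreal x a.re
  have i2 := hreal (Complex.I • x) a.im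
  have := gauge_add_le' ho hc h0 ((a.re : ℂ) • x) ((a.im : ℂ) • (Complex.I • x))
  have g1 := gauge_nonneg (s := D) x
  have g2 := gauge_nonneg (s := D) (-x)
  have g3 := gauge_nonneg (s := D) (Complex.I • x)
  have g4 := gauge_nonneg (s := D) (-(Complex.I • x))
  rw [e, gaugeFour]
  nlinarith [Complex.abs_re_le_norm a, Complex.abs_im_le_norm a]

end Gauge

/-- Finite sets of test points control the gauge of a slice uniformly on the unit ball. -/
lemma HasBidiskSections.exists_gauge_approx {H : Type*} [NormedAddCommGroup H] [NormedSpace ℂ H]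
    {Ω : Set H} (ho : IsOpen Ω) (hc : Convex ℝ Ω) (hs : HasBidiskSections Ω)
    {K : Set H} (hK : IsCompact K) (hKΩ : K ⊆ Ω) {ε : ℝ} (hε : 0 < ε) :
    ∃ z u v : H, z ∈ Ω ∧ z ∉ K ∧ ∀ x : ℂ × ℂ,
      |gauge {y | z + y ∈ Ω} (x.1 • u + x.2 • v) - halfPlaneGauge x| ≤ ε * ‖x‖ := by
  classical
  set η := ε / 20 with hη
  have hη0 : 0 < η := by positivity
  obtain ⟨T, hT, hTf, hcov⟩ := finite_cover_balls_of_compact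
    (isCompact_closedBall (0 : ℂ × ℂ) 1) hη0
  let C : Finset ℂ := {1/2, -1/2, Complex.I/2, -Complex.I/2}
  have hCre : ∀ c ∈ C, c.re < 1 := by
    intro c hc
    simp only [C, Finset.mem_insert, Finset.mem_singleton] at hc
    rcases hc with rfl | rfl | rfl | rfl <;> norm_num
  obtain ⟨S, hS0, hSl, hSr, hSp, hSm⟩ : ∃ S : Finset (ℂ × ℂ), 0 ∈ S ∧ (∀ c ∈ C, (c, 0) ∈ S) ∧
      (∀ c ∈ C, (0, c) ∈ S) ∧
      (∀ s ∈ T, (((halfPlaneGauge s + η)⁻¹ : ℝ) : ℂ) • s ∈ S) ∧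
      (∀ s ∈ T, (((halfPlaneGauge s - η)⁻¹ : ℝ) : ℂ) • s ∈ S) := by
    refine ⟨{0} ∪ (C.image fun c => (c, 0)) ∪ (C.image fun c => (0, c)) ∪
      (hTf.toFinset.image fun s => (((halfPlaneGauge s + η)⁻¹ : ℝ) : ℂ) • s) ∪
      (hTf.toFinset.image fun s => (((halfPlaneGauge s - η)⁻¹ : ℝ) : ℂ) • s), ?_, ?_, ?_, ?_, ?_⟩
    · simp only [Finset.mem_union, Finset.mem_singleton]
      exact Or.inl (Or.inl (Or.inl (Or.inl trivial)))
    · intro c hc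
      have := Finset.mem_image_of_mem (fun c : ℂ => (c, (0 : ℂ))) hc
      simp only [Finset.mem_union]
      exact Or.inl (Or.inl (Or.inl (Or.inr this)))
    · intro c hc
      have := Finset.mem_image_of_mem (fun c : ℂ => ((0 : ℂ), c)) hc
      simp only [Finset.mem_union]
      exact Or.inl (Or.inl (Or.inr this))
    · intro s hs
      have := Finset.mem_image_of_mem
        (fun s => (((halfPlaneGauge s + η)⁻¹ : ℝ) : ℂ) • s) (hTf.mem_toFinset.2 hs)
      simp only [Finset.mem_union]
      exact Or.inl (Or.inr this)
    · intro s hs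
      have := Finset.mem_image_of_mem
        (fun s => (((halfPlaneGauge s - η)⁻¹ : ℝ) : ℂ) • s) (hTf.mem_toFinset.2 hs)
      simp only [Finset.mem_union]
      exact Or.inr this
  obtain ⟨z, u, v, hzuv⟩ := hs S K hK hKΩ
  have hz0 := hzuv 0 hS0
  have hzΩ : z ∈ Ω := by simpa using hz0.1
  refine ⟨z, u, v, hzΩ, by simpa using hz0.2.2, ?_⟩
  set D : Set H := {y | z + y ∈ Ω} with hD
  have hDo : IsOpen D := ho.preimage (by fun_prop : Continuous fun y : H => z + y)
  have hDc : Convex ℝ D := by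
    have := hc.translate_preimage_right z
    exact this
  have hD0 : (0 : H) ∈ D := by simpa [hD] using hzΩ
  let L : ℂ × ℂ → H := fun x => x.1 • u + x.2 • v
  have hLadd : ∀ x y, L (x + y) = L x + L y := fun x y => by simp [L]; module
  have hLsmul : ∀ (c : ℂ) x, L (c • x) = c • L x := fun c x => by simp [L, mul_smul]
  have hmem : ∀ x ∈ S, x.1.re < 1 → x.2.re < 1 → L x ∈ D := fun x hx h1 h2 => by
    simpa [hD, L, add_assoc] using (hzuv x hx).1 h1 h2
  have hnmem : ∀ x ∈ S, (1 < x.1.re ∨ 1 < x.2.re) → L x ∉ D := fun x hx h1 => by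
    simpa [hD, L, add_assoc] using (hzuv x hx).2.1 h1
  have hsub : ∀ x y, gauge D (x + y) ≤ gauge D x + gauge D y := gauge_add_le' hDo hDc hD0
  have hhalf : ∀ w : H, (1/2 : ℂ) • w ∈ D → gauge D w ≤ 2 := fun w hw => by
    refine gauge_le_of_smul_mem hDo hDc hD0 two_pos ?_
    convert hw using 2
    norm_num
  have hcplx : ∀ w : H, (∀ c ∈ C, c • w ∈ D) → ∀ a : ℂ, gauge D (a • w) ≤ 8 * ‖a‖ := by
    intro w hw a
    have i1 := hhalf w (hw _ (by simp [C]))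
    have i2 := hhalf (-w) (by convert hw (-1/2) (by simp [C]) using 1; module)
    have i3 := hhalf (Complex.I • w) (by convert hw (Complex.I/2) (by simp [C]) using 1; module)
    have i4 := hhalf (-(Complex.I • w))
      (by convert hw (-Complex.I/2) (by simp [C]) using 1; module)
    refine (gauge_smul_le hDo hDc hD0 a w).trans ?_
    rw [mul_comm, gaugeFour]
    gcongr
    linarith
  have hL16 : ∀ x : ℂ × ℂ, gauge D (L x) ≤ 16 * ‖x‖ := by
    intro x
    have i1 := hcplx u (fun c hc => by
      simpa [L] using hmem (c, 0) (hSl c hc) (hCre c hc) (by simp)) x.1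
    have i2 := hcplx v (fun c hc => by
      simpa [L] using hmem (0, c) (hSr c hc) (by simp) (hCre c hc)) x.2
    have := hsub (x.1 • u) (x.2 • v)
    have j1 := norm_fst_le x
    have j2 := norm_snd_le x
    simp only [L]
    linarith
  have hLlip : ∀ x y : ℂ × ℂ, gauge D (L x) ≤ gauge D (L y) + 16 * ‖x - y‖ := by
    intro x y
    have := hsub (L y) (L (x - y))
    rw [← hLadd] at this
    simp only [add_sub_cancel] at this
    linarith [hL16 (x - y)]
  have hT1 : ∀ s ∈ T, gauge D (L s) ≤ halfPlaneGauge s + η := by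
    intro s hs
    have hpos : 0 < halfPlaneGauge s + η := by linarith [halfPlaneGauge_nonneg s]
    refine gauge_le_of_smul_mem hDo hDc hD0 hpos ?_
    rw [← hLsmul]
    have h1 : halfPlaneGauge ((((halfPlaneGauge s + η)⁻¹ : ℝ) : ℂ) • s) < 1 := by
      rw [halfPlaneGauge_smul _ (by positivity), inv_mul_lt_iff₀ hpos]
      linarith
    rw [halfPlaneGauge_lt_one_iff] at h1
    exact hmem _ (hSp s hs) h1.1 h1.2
  have hT2 : ∀ s ∈ T, halfPlaneGauge s - η ≤ gauge D (L s) := by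
    intro s hs
    rcases le_or_gt (halfPlaneGauge s) η with h | h
    · linarith [gauge_nonneg (s := D) (L s)]
    have hpos : 0 < halfPlaneGauge s - η := by linarith
    refine le_gauge_of_smul_notMem hDo hDc hD0 hpos ?_
    rw [← hLsmul]
    have h1 : 1 < halfPlaneGauge ((((halfPlaneGauge s - η)⁻¹ : ℝ) : ℂ) • s) := by
      rw [halfPlaneGauge_smul _ (by positivity), lt_inv_mul_iff₀ hpos]
      linarith
    refine hnmem _ (hSm s hs) ?_
    rw [halfPlaneGauge, lt_max_iff, lt_max_iff] at h1
    rcases h1 with h1 | h1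
    · linarith
    · exact h1
  have hball : ∀ x : ℂ × ℂ, ‖x‖ ≤ 1 → |gauge D (L x) - halfPlaneGauge x| ≤ ε := by
    intro x hx
    have hx' := hcov (mem_closedBall_zero_iff.2 hx)
    simp only [mem_iUnion, mem_ball, exists_prop] at hx'
    obtain ⟨s, hs, hxs⟩ := hx'
    rw [dist_eq_norm] at hxs
    have a1 := hLlip x s
    have a2 := hLlip s x
    have a3 := halfPlaneGauge_le_add x s
    have a4 := halfPlaneGauge_le_add s x
    rw [norm_sub_rev s x] at a2 a4
    have := hT1 s hs
    have := hT2 s hs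
    rw [abs_le]
    constructor <;> linarith
  intro x
  rcases eq_or_ne x 0 with rfl | hx
  · simp [halfPlaneGauge]
  have hnx : 0 < ‖x‖ := norm_pos_iff.2 hx
  have h1 := hball (((‖x‖⁻¹ : ℝ) : ℂ) • x) (by
    rw [norm_smul, Complex.norm_real, norm_inv, norm_norm, inv_mul_cancel₀ hnx.ne'])
  rw [hLsmul, gauge_smul_complex _ _ (by positivity), halfPlaneGauge_smul _ (by positivity),
    ← mul_sub, abs_mul, abs_of_pos (by positivity), inv_mul_le_iff₀ hnx] at h1
  linarith

section Normalization

variable {H : Type*} [NormedAddCommGroup H] [NormedSpace ℂ H]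

lemma halfPlaneGauge_rotate_ge (x : ℂ × ℂ) :
    ∃ c : ℂ, ‖c‖ = 1 ∧ ‖x‖ ≤ halfPlaneGauge (c • x) := by
  have key : ∀ a : ℂ, ∃ c : ℂ, ‖c‖ = 1 ∧ (c * a).re = ‖a‖ := by
    intro a
    rcases eq_or_ne a 0 with rfl | ha
    · exact ⟨1, by simp⟩
    · have hn : (‖a‖ : ℂ) ≠ 0 := by simpa using ha
      refine ⟨(starRingEnd ℂ) a / ‖a‖, by simp [ha], ?_⟩
      have : (starRingEnd ℂ) a / ‖a‖ * a = ((‖a‖ : ℝ) : ℂ) := by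
        rw [div_mul_eq_mul_div, mul_comm, Complex.mul_conj, Complex.normSq_eq_norm_sq]
        field_simp
        push_cast
        ring
      rw [this, Complex.ofReal_re]
  rcases le_total ‖x.1‖ ‖x.2‖ with h | h
  · obtain ⟨c, hc, hca⟩ := key x.2
    refine ⟨c, hc, ?_⟩
    rw [Prod.norm_def, max_eq_right h, ← hca]
    exact (le_max_right _ _).trans (le_max_right _ _)
  · obtain ⟨c, hc, hca⟩ := key x.1
    refine ⟨c, hc, ?_⟩
    rw [Prod.norm_def, max_eq_left h, ← hca]
    exact (le_max_left _ _).trans (le_max_right _ _)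

/-- Points all of whose rotations lie in the closed unit ball of the gauge of `D`. -/
def circledCore (D : Set H) : Set H := {x | ∀ c : ℂ, ‖c‖ = 1 → gauge D (c • x) ≤ 1}

lemma exists_smul_mem_circledCore {D : Set H} (ho : IsOpen D) (hc : Convex ℝ D)
    (h0 : (0 : H) ∈ D) (x : H) : ∃ c : ℂ, c ≠ 0 ∧ c • x ∈ circledCore D := by
  have hq1 : 0 ≤ gaugeFour D x := by
    unfold gaugeFour
    have := gauge_nonneg (s := D)
    linarith [this x, this (-x), this (Complex.I • x), this (-(Complex.I • x))]
  refine ⟨((gaugeFour D x + 1)⁻¹ : ℝ), ?_, fun c hc1 => ?_⟩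
  · rw [Complex.ofReal_ne_zero]
    positivity
  · rw [smul_smul]
    refine (gauge_smul_le ho hc h0 _ x).trans ?_
    rw [norm_mul, hc1, one_mul, Complex.norm_real, norm_inv, Real.norm_of_nonneg (by positivity),
      inv_mul_le_iff₀ (by positivity)]
    linarith

variable [FiniteDimensional ℂ H]

lemma isCompact_circledCore {D : Set H} (ho : IsOpen D) (hc : Convex ℝ D) (h0 : (0 : H) ∈ D)
    (hline : ∀ b : H, (∀ c : ℂ, c • b ∈ D) → b = 0) : IsCompact (circledCore D) := by
  have : ProperSpace H := FiniteDimensional.proper ℂ H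
  have hg : Continuous (gauge D) := continuous_gauge hc (ho.mem_nhds h0)
  refine Metric.isCompact_of_isClosed_isBounded ?_ ?_
  · simp only [circledCore, ofPred_forall]
    refine isClosed_iInter fun c => isClosed_iInter fun _ => ?_
    exact isClosed_le (by fun_prop) continuous_const
  · have hq : Continuous (gaugeFour D) := by
      unfold gaugeFour
      fun_prop
    have hq0 : ∀ x, gaugeFour D x = 0 → x = 0 := fun x hx => hline x fun c => by
      rw [← gauge_lt_one_iff_mem ho hc h0]
      have := gauge_smul_le ho hc h0 c x
      rw [hx] at this
      linarith
    have hq1 : ∀ x, 0 ≤ gaugeFour D x := fun x => by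
      unfold gaugeFour
      have := gauge_nonneg (s := D)
      linarith [this x, this (-x), this (Complex.I • x), this (-(Complex.I • x))]
    have hq2 : ∀ x ∈ circledCore D, gaugeFour D x ≤ 4 := fun x hx => by
      have h1 := hx 1 (by simp)
      have h2 := hx (-1) (by simp)
      have h3 := hx Complex.I (by simp)
      have h4 := hx (-Complex.I) (by simp)
      simp only [one_smul, neg_smul] at h1 h2 h3 h4
      unfold gaugeFour
      linarith
    rcases subsingleton_or_nontrivial H with hH | hH
    · exact (Set.toFinite _).isBounded
    obtain ⟨y, hy, hymin⟩ := (isCompact_sphere (0 : H) 1).exists_isMinOn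
      (Set.nonempty_coe_sort.1 (NormedSpace.sphere_nonempty_rclike ℂ zero_le_one)) hq.continuousOn
    have hy0 : y ≠ 0 := by
      rintro rfl
      simp at hy
    have hpos : 0 < gaugeFour D y := lt_of_le_of_ne (hq1 y) fun h => hy0 (hq0 y h.symm)
    refine (isBounded_iff_forall_norm_le).2 ⟨4 / gaugeFour D y, fun x hx => ?_⟩
    rcases eq_or_ne x 0 with rfl | hx0
    · simp
      positivity
    have hnx : 0 < ‖x‖ := norm_pos_iff.2 hx0
    have h1 : gaugeFour D y ≤ gaugeFour D (((‖x‖⁻¹ : ℝ) : ℂ) • x) := hymin (by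
      simp [norm_smul, hnx.ne'])
    have h2 : gaugeFour D (((‖x‖⁻¹ : ℝ) : ℂ) • x) = ‖x‖⁻¹ * gaugeFour D x := by
      unfold gaugeFour
      rw [smul_comm Complex.I, ← smul_neg, ← smul_neg]
      simp only [gauge_smul_complex D _ (inv_nonneg.2 hnx.le)]
      ring
    rw [h2, le_inv_mul_iff₀ hnx] at h1
    rw [le_div_iff₀ hpos]
    linarith [hq2 x hx]

/-- A basis adapted to a convex domain, with the first two vectors prescribed. -/
lemma exists_adapted_basis {D : Set H} (ho : IsOpen D) (hc : Convex ℝ D) (h0 : (0 : H) ∈ D)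
    (hline : ∀ b : H, (∀ c : ℂ, c • b ∈ D) → b = 0) {k : ℕ} (hk : Module.finrank ℂ H = 2 + k)
    {u v : H}
    (happ : ∀ x : ℂ × ℂ, |gauge D (x.1 • u + x.2 • v) - halfPlaneGauge x| ≤ 1 / 2 * ‖x‖)
    (hli : LinearIndependent ℂ ![u, v]) :
    ∃ b : Module.Basis (Fin 2 ⊕ Fin k) ℂ H, b (Sum.inl 0) = u ∧ b (Sum.inl 1) = v ∧
      (∀ x, gauge D x ≤ 2 * ∑ i, ‖b.repr x i‖) ∧
      ∀ x ∈ circledCore D, ∀ i, ‖b.repr x i‖ ≤ 2 * (1 + k) := by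
  classical
  have hbase : ∃ e : Module.Basis (Fin 2 ⊕ Fin k) ℂ H, e (Sum.inl 0) = u ∧ e (Sum.inl 1) = v ∧
      ∀ j, e (Sum.inr j) ∈ circledCore D := by
    let e0 := Module.Basis.sumExtend hli
    have : Finite (Fin 2 ⊕ Module.Basis.sumExtendIndex hli) := Module.Finite.finite_basis e0
    have : Finite (Module.Basis.sumExtendIndex hli) := Finite.sum_right (Fin 2)
    have := Fintype.ofFinite (Module.Basis.sumExtendIndex hli)
    have hcard : Fintype.card (Module.Basis.sumExtendIndex hli) = k := by
      have := Module.finrank_eq_card_basis e0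
      rw [hk, Fintype.card_sum, Fintype.card_fin] at this
      omega
    let e1 := e0.reindex (Equiv.sumCongr (Equiv.refl (Fin 2)) (Fintype.equivFinOfCardEq hcard))
    choose c hc0 hcS using fun j : Fin k => exists_smul_mem_circledCore ho hc h0 (e1 (Sum.inr j))
    let w : Fin 2 ⊕ Fin k → ℂ := Sum.elim (fun _ => 1) c
    have hw : ∀ i, IsUnit (w i) := by
      rintro (i | j)
      · simp [w]
      · simp [w, hc0]
    have hinl : ∀ i, e0 (Sum.inl i) = ![u, v] i := fun i => by
      simp [e0, Module.Basis.sumExtend]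
      rfl
    refine ⟨e1.isUnitSMul hw, ?_, ?_, fun j => ?_⟩
    · simp [Module.Basis.isUnitSMul_apply, w, e1, hinl]
    · simp [Module.Basis.isUnitSMul_apply, w, e1, hinl]
    · rw [Module.Basis.isUnitSMul_apply]
      exact hcS j
  obtain ⟨e, heu, hev, heS⟩ := hbase
  let P : Set (Fin 2 ⊕ Fin k → H) :=
    Set.pi univ (Sum.elim (fun i => {e (Sum.inl i)}) (fun _ => circledCore D))
  have hP : IsCompact P := isCompact_univ_pi (by
    rintro (i | j)
    · exact isCompact_singleton
    · exact isCompact_circledCore ho hc h0 hline)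
  have heP : (e : Fin 2 ⊕ Fin k → H) ∈ P := by
    rintro (i | j) -
    · simp
    · exact heS j
  have hcont : Continuous fun B : Fin 2 ⊕ Fin k → H => ‖e.det B‖ := by
    refine Continuous.norm ?_
    change Continuous fun B : Fin 2 ⊕ Fin k → H => (e.toMatrix B).det
    refine Continuous.matrix_det ?_
    refine continuous_matrix fun i j => ?_
    change Continuous fun B : Fin 2 ⊕ Fin k → H => e.coord i (B j)
    have h1 : Continuous (e.coord i) := LinearMap.continuous_of_finiteDimensional _
    exact h1.comp (continuous_apply j)
  obtain ⟨B, hBP, hBmax⟩ := hP.exists_isMaxOn ⟨_, heP⟩ hcont.continuousOn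
  have hdet1 : 1 ≤ ‖e.det B‖ := by
    have h : ‖e.det e‖ ≤ ‖e.det B‖ := hBmax heP
    rwa [e.det_self, norm_one] at h
  have hdet0 : 0 < ‖e.det B‖ := by linarith
  have hunit : IsUnit (e.det B) := isUnit_iff_ne_zero.2 (norm_pos_iff.1 hdet0)
  obtain ⟨hBli, hBsp⟩ := e.is_basis_iff_det.2 hunit
  let b := Module.Basis.mk hBli hBsp.ge
  have hbB : ∀ i, b i = B i := fun i => by simp [b]
  have hBl : ∀ i, B (Sum.inl i) = e (Sum.inl i) := fun i => by simpa using hBP (Sum.inl i) trivial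
  have hBr : ∀ j, B (Sum.inr j) ∈ circledCore D := fun j => hBP (Sum.inr j) trivial
  have hb0 : b (Sum.inl 0) = u := by rw [hbB, hBl, heu]
  have hb1 : b (Sum.inl 1) = v := by rw [hbB, hBl, hev]
  have hexp : ∀ x, x = (b.repr x (Sum.inl 0) • u + b.repr x (Sum.inl 1) • v) +
      ∑ j, b.repr x (Sum.inr j) • B (Sum.inr j) := by
    intro x
    conv_lhs => rw [← b.sum_repr x, Fintype.sum_sum_type, Fin.sum_univ_two, hb0, hb1]
    simp only [hbB]
  have hsum : ∀ f : Fin k → H, gauge D (∑ j, f j) ≤ ∑ j, gauge D (f j) := by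
    intro f
    induction (Finset.univ : Finset (Fin k)) using Finset.induction_on with
    | empty => simp
    | insert a s ha ih =>
      rw [Finset.sum_insert ha, Finset.sum_insert ha]
      exact (gauge_add_le' ho hc h0 _ _).trans (by gcongr)
  have hcore : ∀ y ∈ circledCore D, ∀ a : ℂ, gauge D (a • y) ≤ ‖a‖ := by
    intro y hy a
    rcases eq_or_ne a 0 with rfl | ha
    · simp
    have hna : (‖a‖ : ℂ) ≠ 0 := by simpa using ha
    have : a • y = ((‖a‖ : ℝ) : ℂ) • ((a / ‖a‖) • y) := by
      rw [smul_smul, mul_div_cancel₀ _ hna]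
    rw [this, gauge_smul_complex _ _ (norm_nonneg a)]
    have := hy (a / ‖a‖) (by simp [ha])
    nlinarith [norm_nonneg a]
  refine ⟨b, hb0, hb1, fun x => ?_, fun x hx => ?_⟩
  · conv_lhs => rw [hexp x]
    refine (gauge_add_le' ho hc h0 _ _).trans ?_
    set p : ℂ × ℂ := (b.repr x (Sum.inl 0), b.repr x (Sum.inl 1)) with hp
    have h1 := (abs_le.1 (happ p)).2
    have h2 : halfPlaneGauge p ≤ ‖p‖ := by
      simpa [halfPlaneGauge] using halfPlaneGauge_le_add p 0
    have h3 : ‖p‖ ≤ ‖b.repr x (Sum.inl 0)‖ + ‖b.repr x (Sum.inl 1)‖ :=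
      max_le (by simp [hp]) (by simp [hp])
    have h4 : gauge D (∑ j, b.repr x (Sum.inr j) • B (Sum.inr j)) ≤
        ∑ j, ‖b.repr x (Sum.inr j)‖ :=
      (hsum _).trans (Finset.sum_le_sum fun j _ => hcore _ (hBr j) _)
    have h5 : 0 ≤ ∑ j, ‖b.repr x (Sum.inr j)‖ := Finset.sum_nonneg fun _ _ => norm_nonneg _
    rw [Fintype.sum_sum_type, Fin.sum_univ_two]
    simp only [hp] at h1
    linarith [norm_nonneg p]
  · have hr : ∀ j, ‖b.repr x (Sum.inr j)‖ ≤ 1 := by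
      intro j
      have h1 := LinearMap.congr_fun (e.det_smul_mk_coord_eq_det_update hBli hBsp.ge (Sum.inr j)) x
      have h2 : e.det B * b.repr x (Sum.inr j) = e.det (Function.update B (Sum.inr j) x) := h1
      have h3 : Function.update B (Sum.inr j) x ∈ P := by
        intro i _
        rcases eq_or_ne i (Sum.inr j) with rfl | hij
        · simpa using hx
        · rw [Function.update_of_ne hij]
          exact hBP i trivial
      have h4 : ‖e.det (Function.update B (Sum.inr j) x)‖ ≤ ‖e.det B‖ := hBmax h3
      rw [← h2, norm_mul] at h4
      exact le_of_mul_le_mul_left (by linarith) hdet0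
    set p : ℂ × ℂ := (b.repr x (Sum.inl 0), b.repr x (Sum.inl 1)) with hp
    have hpn : ‖p‖ ≤ 2 * (1 + k) := by
      obtain ⟨c, hc1, hcp⟩ := halfPlaneGauge_rotate_ge p
      have h1 := (abs_le.1 (happ (c • p))).1
      have h2 : ‖c • p‖ = ‖p‖ := by rw [norm_smul, hc1, one_mul]
      have h3 : (c • p).1 • u + (c • p).2 • v =
          c • x + ∑ j, (-(c * b.repr x (Sum.inr j))) • B (Sum.inr j) := by
        have hx' := congrArg (c • ·) (hexp x)
        simp only [smul_add, Finset.smul_sum, smul_smul] at hx'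
        rw [hx']
        simp only [hp, Prod.smul_mk, smul_eq_mul, neg_smul,
          Finset.sum_neg_distrib]
        abel
      have h4 : gauge D (∑ j, (-(c * b.repr x (Sum.inr j))) • B (Sum.inr j)) ≤ ∑ j : Fin k, 1 := by
        refine (hsum _).trans (Finset.sum_le_sum fun j _ => (hcore _ (hBr j) _).trans ?_)
        rw [norm_neg, norm_mul, hc1, one_mul]
        exact hr j
      have h5 := gauge_add_le' ho hc h0 (c • x)
        (∑ j, (-(c * b.repr x (Sum.inr j))) • B (Sum.inr j))
      rw [← h3] at h5
      have h6 := hx c hc1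
      simp only [Finset.sum_const, Finset.card_univ, Fintype.card_fin, nsmul_eq_mul, mul_one] at h4
      rw [h2] at h1
      linarith
    rintro (i | j)
    · fin_cases i
      · exact (norm_fst_le p).trans hpn
      · exact (norm_snd_le p).trans hpn
    · have := hr j
      have : (0 : ℝ) ≤ k := Nat.cast_nonneg k
      linarith

end Normalization

section Limit

variable {H : Type*} [NormedAddCommGroup H]

/-- The points of norm at most `m` at distance at least `1 / (m + 1)` from the complement. -/
def innerCompact (Ω : Set H) (m : ℕ) : Set H :=
  closedBall 0 m ∩ {x | ∀ y ∉ Ω, 1 / ((m : ℝ) + 1) ≤ dist x y}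

lemma isCompact_innerCompact [ProperSpace H] (Ω : Set H) (m : ℕ) :
    IsCompact (innerCompact Ω m) := by
  refine (isCompact_closedBall _ _).inter_right ?_
  simp only [ofPred_forall]
  exact isClosed_iInter fun y => isClosed_iInter fun _ =>
    isClosed_le continuous_const (by fun_prop)

lemma innerCompact_subset (Ω : Set H) (m : ℕ) : innerCompact Ω m ⊆ Ω := by
  intro x hx
  by_contra h
  have := hx.2 x h
  rw [dist_self] at this
  have : (0 : ℝ) < 1 / ((m : ℝ) + 1) := by positivity
  linarith

lemma exists_subset_innerCompact {Ω : Set H} (ho : IsOpen Ω) {K : Set H} (hK : IsCompact K)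
    (hKΩ : K ⊆ Ω) : ∃ N : ℕ, ∀ n ≥ N, K ⊆ innerCompact Ω n := by
  obtain ⟨δ, hδ, hth⟩ := hK.exists_thickening_subset_open ho hKΩ
  obtain ⟨R, hR⟩ := hK.isBounded.subset_closedBall 0
  obtain ⟨N, hN⟩ := exists_nat_gt (max R (1 / δ))
  refine ⟨N, fun n hn x hx => ⟨closedBall_subset_closedBall ?_ (hR hx), fun y hy => ?_⟩⟩
  · have : (N : ℝ) ≤ n := by exact_mod_cast hn
    linarith [le_max_left R (1 / δ)]
  · by_contra! h
    refine hy (hth (mem_thickening_iff.2 ⟨x, hx, ?_⟩))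
    rw [dist_comm]
    refine h.trans_le ?_
    have : (N : ℝ) ≤ n := by exact_mod_cast hn
    have h1 : 1 / δ ≤ n + 1 := by linarith [le_max_right R (1 / δ)]
    rw [one_div_le (by positivity) hδ]
    exact h1

variable [NormedSpace ℂ H]

lemma exists_subseq_tendsto_of_sublinear [ProperSpace H] (g : ℕ → H → ℝ) {C : ℝ} (hC : 0 ≤ C)
    (h0 : ∀ n x, 0 ≤ g n x) (hadd : ∀ n x y, g n (x + y) ≤ g n x + g n y)
    (hsmul : ∀ n (c : ℝ), 0 ≤ c → ∀ x, g n ((c : ℂ) • x) = c * g n x)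
    (hbd : ∀ n x, g n x ≤ C * ‖x‖) :
    ∃ (φ : ℕ → ℕ) (G : H → ℝ) (ε : ℕ → ℝ), StrictMono φ ∧ (∀ n, 0 ≤ ε n) ∧
      Tendsto ε atTop (𝓝 0) ∧ ∀ n x, |g (φ n) x - G x| ≤ ε n * ‖x‖ := by
  classical
  have hlip : ∀ n x y, |g n x - g n y| ≤ C * ‖x - y‖ := by
    intro n x y
    have h1 := hadd n y (x - y)
    have h2 := hadd n x (y - x)
    rw [add_sub_cancel] at h1 h2
    have h3 := hbd n (x - y)
    have h4 := hbd n (y - x)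
    rw [norm_sub_rev] at h4
    rw [abs_le]
    constructor <;> linarith
  have hlip' : ∀ n, LipschitzWith ⟨C, hC⟩ (g n) := fun n =>
    LipschitzWith.of_dist_le_mul fun x y => by
      rw [Real.dist_eq, dist_eq_norm]
      exact hlip n x y
  have hcomp : CompactSpace (closedBall (0 : H) 1) :=
    isCompact_iff_compactSpace.1 (isCompact_closedBall 0 1)
  let F : ℕ → BoundedContinuousFunction (closedBall (0 : H) 1) ℝ := fun n =>
    BoundedContinuousFunction.mkOfCompact ⟨fun x => g n x, (hlip' n).continuous.comp (by fun_prop)⟩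
  have hcl : IsCompact (closure (range F)) := by
    refine BoundedContinuousFunction.arzela_ascoli (Icc 0 C) isCompact_Icc _ ?_ ?_
    · rintro f x ⟨n, rfl⟩
      refine ⟨h0 n x, (hbd n x).trans ?_⟩
      have : ‖(x : H)‖ ≤ 1 := mem_closedBall_zero_iff.1 x.2
      nlinarith
    · refine (LipschitzWith.uniformEquicontinuous _ ⟨C, hC⟩ ?_).equicontinuous
      rintro ⟨f, n, rfl⟩
      exact LipschitzWith.of_dist_le_mul fun x y => (hlip' n).dist_le_mul x y
  obtain ⟨G, -, φ, hφ, hG⟩ := hcl.tendsto_subseq fun n => subset_closure (mem_range_self (f := F) n)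
  refine ⟨φ, fun x => if hx : x = 0 then 0 else ‖x‖ * G ⟨((‖x‖⁻¹ : ℝ) : ℂ) • x, by
      simp [norm_smul, hx]⟩, fun n => dist (F (φ n)) G, hφ, fun n => dist_nonneg, ?_, ?_⟩
  · exact tendsto_iff_dist_tendsto_zero.1 hG
  · intro n x
    rcases eq_or_ne x 0 with rfl | hx
    · have h1 := hbd (φ n) 0
      have h2 := h0 (φ n) 0
      simp only [norm_zero, mul_zero] at h1
      simp [le_antisymm h1 h2]
    · have hnx : 0 < ‖x‖ := norm_pos_iff.2 hx
      simp only [dif_neg hx]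
      have h1 := BoundedContinuousFunction.dist_coe_le_dist (f := F (φ n)) (g := G)
        ⟨((‖x‖⁻¹ : ℝ) : ℂ) • x, by simp [norm_smul, hx]⟩
      have h2 : g (φ n) x = ‖x‖ * F (φ n) ⟨((‖x‖⁻¹ : ℝ) : ℂ) • x, by simp [norm_smul, hx]⟩ := by
        change g (φ n) x = ‖x‖ * g (φ n) (((‖x‖⁻¹ : ℝ) : ℂ) • x)
        rw [hsmul _ _ (by positivity)]
        field_simp
      rw [h2, ← mul_sub, abs_mul, abs_of_pos hnx, mul_comm]
      gcongr
      exact h1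

lemma hausdorffDist_sublevel_le {f g : H → ℝ}
    (hf : ∀ c : ℝ, 0 ≤ c → ∀ x, f ((c : ℂ) • x) = c * f x)
    (hg : ∀ c : ℝ, 0 ≤ c → ∀ x, g ((c : ℂ) • x) = c * g x) {ε R : ℝ} (hε : 0 ≤ ε) (hR : 0 ≤ R)
    (hfg : ∀ x, |f x - g x| ≤ ε * ‖x‖) :
    hausdorffDist ({x | f x < 1} ∩ ball 0 R) ({x | g x < 1} ∩ ball 0 R) ≤ ε * R ^ 2 := by
  have key : ∀ f g : H → ℝ, (∀ c : ℝ, 0 ≤ c → ∀ x, g ((c : ℂ) • x) = c * g x) →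
      (∀ x, |f x - g x| ≤ ε * ‖x‖) → ∀ x ∈ {x | f x < 1} ∩ ball 0 R,
      ∃ y ∈ {x | g x < 1} ∩ ball 0 R, dist x y ≤ ε * R ^ 2 := by
    rintro f g hg hfg x ⟨hx1, hx2⟩
    rw [mem_ofPred_eq] at hx1
    rw [mem_ball_zero_iff] at hx2
    have hp : 0 < 1 + ε * R := by positivity
    have hθ0 : 0 ≤ (1 + ε * R)⁻¹ := by positivity
    have hθ1 : (1 + ε * R)⁻¹ ≤ 1 := inv_le_one_of_one_le₀ (by nlinarith)
    have hθ2 : 1 - (1 + ε * R)⁻¹ ≤ ε * R := by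
      rw [sub_le_iff_le_add, ← mul_le_mul_iff_left₀ hp, add_mul, inv_mul_cancel₀ hp.ne']
      nlinarith [mul_nonneg hε hR]
    refine ⟨(((1 + ε * R)⁻¹ : ℝ) : ℂ) • x, ⟨?_, ?_⟩, ?_⟩
    · rw [mem_ofPred_eq, hg _ hθ0, inv_mul_lt_iff₀ hp]
      have := (abs_le.1 (hfg x)).1
      nlinarith
    · rw [mem_ball_zero_iff, norm_smul, Complex.norm_real, Real.norm_of_nonneg hθ0]
      nlinarith [norm_nonneg x]
    · have : x - (((1 + ε * R)⁻¹ : ℝ) : ℂ) • x = ((1 - (1 + ε * R)⁻¹ : ℝ) : ℂ) • x := by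
        push_cast
        module
      rw [dist_eq_norm, this, norm_smul, Complex.norm_real, Real.norm_of_nonneg (by linarith)]
      have h1 : 0 ≤ 1 - (1 + ε * R)⁻¹ := by linarith
      calc (1 - (1 + ε * R)⁻¹) * ‖x‖ ≤ (ε * R) * R := by gcongr
        _ = ε * R ^ 2 := by ring
  refine hausdorffDist_le_of_mem_dist (by positivity) (key f g hg hfg) (key g f hf fun x => ?_)
  rw [abs_sub_comm]
  exact hfg x

lemma norm_div_two_sub_lt_one {a : ℂ} (ha : a.re < 1) : ‖a / (2 - a)‖ < 1 := by
  have h2 : (2 : ℂ) - a ≠ 0 := fun h => by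
    have := congrArg Complex.re h
    simp at this
    linarith
  rw [norm_div, div_lt_one (norm_pos_iff.2 h2), ← sq_lt_sq₀ (norm_nonneg _) (norm_nonneg _),
    ← Complex.normSq_eq_norm_sq, ← Complex.normSq_eq_norm_sq, Complex.normSq_apply,
    Complex.normSq_apply]
  simp
  nlinarith

lemma one_add_ne_zero_of_norm_lt_one {w : ℂ} (hw : ‖w‖ < 1) : 1 + w ≠ 0 := fun h => by
  rw [show w = -1 by linear_combination h] at hw
  simp at hw

lemma re_two_mul_div_one_add_lt_one {w : ℂ} (hw : ‖w‖ < 1) : (2 * w / (1 + w)).re < 1 := by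
  have h2 := one_add_ne_zero_of_norm_lt_one hw
  have hn : Complex.normSq w < 1 := by
    rw [Complex.normSq_eq_norm_sq]
    nlinarith [norm_nonneg w]
  rw [Complex.normSq_apply] at hn
  have hpos := Complex.normSq_pos.2 h2
  rw [Complex.div_re, ← add_div, div_lt_one hpos, Complex.normSq_apply]
  simp
  nlinarith

variable [FiniteDimensional ℂ H]

/-- Approximate bidisk slices produce an affine limit with a bidisk slice. -/
theorem HasBidiskSections.exists_isAffineLimit {Ω : Set H} (hΩ : InX Ω)
    (hs : HasBidiskSections Ω) :
    ∃ (Ωlim V : Set H), IsAffineLimit Ω Ωlim ∧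
      (∃ (q : H) (W : Submodule ℂ H), Module.finrank ℂ W = 2 ∧ V = {x | x - q ∈ W}) ∧
      Biholomorphic (V ∩ Ωlim) unitBidisk := by
  have hprop : ProperSpace H := FiniteDimensional.proper ℂ H
  obtain ⟨⟨ho, hc, -⟩, hnl⟩ := hΩ
  choose z u v hz hzK happ using fun m : ℕ => hs.exists_gauge_approx ho hc
    (isCompact_innerCompact Ω m) (innerCompact_subset Ω m)
    (show (0 : ℝ) < 1 / ((m : ℝ) + 2) by positivity)
  let D : ℕ → Set H := fun m => {y | z m + y ∈ Ω}
  have hDo : ∀ m, IsOpen (D m) := fun m => ho.preimage (by fun_prop)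
  have hDc : ∀ m, Convex ℝ (D m) := fun m => hc.translate_preimage_right (z m)
  have hD0 : ∀ m, (0 : H) ∈ D m := fun m => by simpa [D] using hz m
  have hline : ∀ m b, (∀ c : ℂ, c • b ∈ D m) → b = 0 := fun m b hb => by
    by_contra h
    exact hnl (z m) b h hb
  have happ' : ∀ m x, |gauge (D m) (x.1 • u m + x.2 • v m) - halfPlaneGauge x| ≤ 1 / 2 * ‖x‖ :=
    fun m x => (happ m x).trans (by gcongr; linarith [(Nat.cast_nonneg m : (0 : ℝ) ≤ m)])
  have hli : ∀ m, LinearIndependent ℂ ![u m, v m] := fun m => by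
    rw [LinearIndependent.pair_iff]
    intro s t hst
    obtain ⟨c, hc1, hcx⟩ := halfPlaneGauge_rotate_ge (s, t)
    have h1 := (abs_le.1 (happ' m (c • (s, t)))).1
    have h2 : (c • (s, t) : ℂ × ℂ).1 • u m + (c • (s, t) : ℂ × ℂ).2 • v m = 0 := by
      simp only [Prod.smul_mk, smul_eq_mul, mul_smul]
      rw [← smul_add, hst, smul_zero]
    rw [h2, gauge_zero, norm_smul, hc1, one_mul] at h1
    have h3 : ((s, t) : ℂ × ℂ) = 0 := norm_le_zero_iff.1 (by linarith)
    simpa using h3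
  obtain ⟨k, hk⟩ : ∃ k, Module.finrank ℂ H = 2 + k := by
    have := (hli 0).fintype_card_le_finrank
    rw [Fintype.card_fin] at this
    exact Nat.exists_eq_add_of_le this
  choose b hb0 hb1 hbg hbc using fun m => exists_adapted_basis (hDo m) (hDc m) (hD0 m) (hline m)
    hk (happ' m) (hli m)
  let e := b 0
  let Φ : ℕ → (H ≃ₗ[ℂ] H) := fun m => e.equiv (b m) (Equiv.refl _)
  have hΦ : ∀ m i, Φ m (e i) = b m i := fun m i => by simp [Φ]
  have hΦr : ∀ m x i, (b m).repr (Φ m x) i = e.repr x i := fun m x i => by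
    simp [Φ, Module.Basis.equiv]
  let g : ℕ → H → ℝ := fun m x => gauge (D m) (Φ m x)
  have hg0 : ∀ m x, 0 ≤ g m x := fun m x => gauge_nonneg _
  have hgadd : ∀ m x y, g m (x + y) ≤ g m x + g m y := fun m x y => by
    simp only [g, map_add]
    exact gauge_add_le' (hDo m) (hDc m) (hD0 m) _ _
  have hgsmul : ∀ m (c : ℝ), 0 ≤ c → ∀ x, g m ((c : ℂ) • x) = c * g m x := fun m c hc' x => by
    simp only [g, map_smul]
    exact gauge_smul_complex _ _ hc' _
  obtain ⟨C, hC, hgC⟩ : ∃ C : ℝ, 0 ≤ C ∧ ∀ m x, g m x ≤ C * ‖x‖ := by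
    refine ⟨2 * ∑ i, ‖(e.coord i).toContinuousLinearMap‖,
      mul_nonneg two_pos.le (Finset.sum_nonneg fun _ _ => norm_nonneg _), fun m x => ?_⟩
    refine (hbg m (Φ m x)).trans ?_
    rw [mul_assoc, Finset.sum_mul]
    gcongr with i
    rw [hΦr]
    exact (e.coord i).toContinuousLinearMap.le_opNorm x
  obtain ⟨φ, G, ε, hφ, hε0, hε, hG⟩ :=
    exists_subseq_tendsto_of_sublinear g hC hg0 hgadd hgsmul hgC
  have hlim : ∀ x, Tendsto (fun n => g (φ n) x) atTop (𝓝 (G x)) := fun x => by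
    rw [tendsto_iff_dist_tendsto_zero]
    refine squeeze_zero (fun n => dist_nonneg) (fun n => ?_) (by simpa using hε.mul_const ‖x‖)
    rw [Real.dist_eq]
    exact hG n x
  have hG0 : ∀ x, 0 ≤ G x := fun x => ge_of_tendsto' (hlim x) fun n => hg0 _ _
  have hGadd : ∀ x y, G (x + y) ≤ G x + G y := fun x y =>
    le_of_tendsto_of_tendsto' (hlim _) ((hlim x).add (hlim y)) fun n => hgadd _ _ _
  have hGsmul : ∀ c : ℝ, 0 ≤ c → ∀ x, G ((c : ℂ) • x) = c * G x := fun c hc' x => by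
    refine tendsto_nhds_unique (hlim _) ?_
    simp only [hgsmul _ c hc']
    exact (hlim x).const_mul c
  have hGC : ∀ x, G x ≤ C * ‖x‖ := fun x => le_of_tendsto' (hlim x) fun n => hgC _ _
  have hGcont : Continuous G := by
    refine (LipschitzWith.of_dist_le_mul (K := ⟨C, hC⟩) fun x y => ?_).continuous
    have h1 := hGadd y (x - y)
    have h2 := hGadd x (y - x)
    rw [add_sub_cancel] at h1 h2
    have h3 := hGC (x - y)
    have h4 := hGC (y - x)
    rw [norm_sub_rev] at h4
    rw [Real.dist_eq, dist_eq_norm, abs_le]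
    change -(C * ‖x - y‖) ≤ _ ∧ _ ≤ C * ‖x - y‖
    constructor <;> linarith
  have hG00 : G 0 = 0 := le_antisymm (by simpa using hGC 0) (hG0 0)
  have hGuv : ∀ a c : ℂ, G (a • u 0 + c • v 0) = halfPlaneGauge (a, c) := by
    intro a c
    refine tendsto_nhds_unique (hlim _) ?_
    rw [tendsto_iff_dist_tendsto_zero]
    have hN : Tendsto (fun n => 1 / ((φ n : ℝ) + 2) * ‖((a, c) : ℂ × ℂ)‖) atTop (𝓝 0) := by
      have h1 : Tendsto (fun n => (φ n : ℝ) + 2) atTop atTop :=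
        tendsto_atTop_add_const_right _ _ (tendsto_natCast_atTop_atTop.comp hφ.tendsto_atTop)
      simpa using h1.inv_tendsto_atTop.mul_const ‖((a, c) : ℂ × ℂ)‖
    refine squeeze_zero (fun n => dist_nonneg) (fun n => ?_) hN
    rw [Real.dist_eq]
    have h1 := happ (φ n) (a, c)
    have h2 : Φ (φ n) (a • u 0 + c • v 0) = a • u (φ n) + c • v (φ n) := by
      rw [← hb0 0, ← hb1 0, map_add, map_smul, map_smul, hΦ, hΦ, hb0, hb1]
    simp only [g, h2]
    exact h1
  have hnoline : NoComplexLine {x | G x < 1} := by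
    intro a y hy hay
    refine hy ?_
    have hbdd : ∀ c : ℂ, G (c • y) ≤ 1 + G (-a) := fun c => by
      have h1 := hGadd (a + c • y) (-a)
      have h2 : G (a + c • y) < 1 := hay c
      rw [show a + c • y + -a = c • y by abel] at h1
      linarith
    have hzero : ∀ c : ℂ, G (c • y) = 0 := fun c => by
      refine le_antisymm ?_ (hG0 _)
      by_contra! hpos
      have h1 := hbdd ((((2 + G (-a)) / G (c • y) : ℝ) : ℂ) * c)
      have h2 : 0 ≤ G (-a) := hG0 _
      rw [mul_smul, hGsmul _ (by positivity), div_mul_cancel₀ _ hpos.ne'] at h1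
      linarith
    have hcoord : ∀ i, ∀ T : ℝ, 0 ≤ T → T * ‖e.repr y i‖ ≤ 2 * (1 + k) := by
      intro i T hT
      have hev : ∀ᶠ n in atTop, ε n * ‖(T : ℂ) • y‖ < 1 := by
        have : Tendsto (fun n => ε n * ‖(T : ℂ) • y‖) atTop (𝓝 0) := by
          simpa using hε.mul_const ‖(T : ℂ) • y‖
        exact this.eventually (gt_mem_nhds one_pos)
      obtain ⟨n, hn⟩ := hev.exists
      have hcore : Φ (φ n) ((T : ℂ) • y) ∈ circledCore (D (φ n)) := by
        intro c hc1
        rw [← map_smul]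
        change g (φ n) (c • (T : ℂ) • y) ≤ 1
        have h1 := (abs_le.1 (hG n (c • (T : ℂ) • y))).2
        rw [norm_smul c, hc1, one_mul] at h1
        have h2 := hzero (c * T)
        rw [mul_smul] at h2
        linarith
      have h1 := hbc _ _ hcore i
      rw [hΦr, map_smul, Finsupp.smul_apply, norm_smul, Complex.norm_real,
        Real.norm_of_nonneg hT] at h1
      exact h1
    refine e.repr.map_eq_zero_iff.1 (Finsupp.ext fun i => ?_)
    rw [Finsupp.zero_apply, ← norm_eq_zero]
    by_contra hne
    have hpos : 0 < ‖e.repr y i‖ := lt_of_le_of_ne (norm_nonneg _) (Ne.symm hne)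
    have h1 := hcoord i ((2 * (1 + k) + 1) / ‖e.repr y i‖) (by positivity)
    rw [div_mul_cancel₀ _ hpos.ne'] at h1
    linarith
  have hconv : Convex ℝ {x | G x < 1} := by
    intro x hx y hy s t hs0 ht0 hst
    rw [mem_ofPred_eq] at hx hy ⊢
    have h1 := hGadd (s • x) (t • y)
    have h2 := hGsmul s hs0 x
    have h3 := hGsmul t ht0 y
    rw [Complex.coe_smul] at h2 h3
    rw [h2, h3] at h1
    rcases hs0.eq_or_lt with rfl | hs1
    · have : t = 1 := by linarith
      subst this
      linarith
    · nlinarith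
  let A : ℕ → (H ≃ᵃ[ℂ] H) := fun n =>
    (AffineEquiv.constVAdd ℂ H (-z (φ n))).trans (Φ (φ n)).symm.toAffineEquiv
  have hA : ∀ n x, A n x = (Φ (φ n)).symm (-z (φ n) + x) := fun n x => rfl
  have hAΩ : ∀ n, A n '' Ω = {x | g (φ n) x < 1} := by
    intro n
    ext x
    have h1 : x ∈ A n '' Ω ↔ Φ (φ n) x ∈ D (φ n) := by
      constructor
      · rintro ⟨y, hy, rfl⟩
        simpa [hA, D] using hy
      · intro hx
        exact ⟨z (φ n) + Φ (φ n) x, hx, by simp [hA]⟩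
    rw [h1]
    exact (gauge_lt_one_iff_mem (hDo _) (hDc _) (hD0 _) _).symm
  refine ⟨{x | G x < 1}, {x | x - 0 ∈ Submodule.span ℂ (range ![u 0, v 0])},
    ⟨⟨⟨isOpen_lt hGcont continuous_const, hconv, 0, by simp [hG00]⟩, hnoline⟩,
      fun n => z (φ n), 0, A, fun n => hz _, ?_, by simp [hG00], ?_, ?_⟩, ⟨0, _, ?_, rfl⟩, ?_⟩
  · intro K hK hKΩ
    obtain ⟨N, hN⟩ := exists_subset_innerCompact ho hK hKΩ
    exact ⟨N, fun n hn h => hzK (φ n) (hN _ (hn.trans (hφ.id_le n)) h)⟩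
  · refine ⟨1, one_pos, fun R hR => ?_⟩
    refine squeeze_zero (fun n => hausdorffDist_nonneg) (fun n => ?_)
      (by simpa using hε.mul_const (R ^ 2))
    change hausdorffDist (A n '' Ω ∩ ball 0 R) _ ≤ _
    rw [hAΩ]
    exact hausdorffDist_sublevel_le (hgsmul _) hGsmul (hε0 n) (by linarith) (hG n)
  · simp [hA]
  · rw [finrank_span_eq_card (hli 0), Fintype.card_fin]
  · have hrep : ∀ a c : ℂ, e.repr (a • u 0 + c • v 0) (Sum.inl 0) = a ∧
        e.repr (a • u 0 + c • v 0) (Sum.inl 1) = c := fun a c => by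
      rw [← hb0 0, ← hb1 0]
      simp [e]
    have hV : ∀ x ∈ {x | x - 0 ∈ Submodule.span ℂ (range ![u 0, v 0])} ∩ {x | G x < 1},
        ∃ a c : ℂ, a.re < 1 ∧ c.re < 1 ∧ x = a • u 0 + c • v 0 := by
      rintro x ⟨hx, hx1⟩
      rw [mem_ofPred_eq, sub_zero] at hx
      simp only [Matrix.range_cons, Matrix.range_empty, union_empty, singleton_union,
        Submodule.mem_span_pair] at hx
      obtain ⟨a, c, rfl⟩ := hx
      rw [mem_ofPred_eq, hGuv, halfPlaneGauge_lt_one_iff] at hx1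
      exact ⟨a, c, hx1.1, hx1.2, rfl⟩
    have hne : ∀ a : ℂ, a.re < 1 → 2 - a ≠ 0 := fun a ha h => by
      have := congrArg Complex.re h
      simp at this
      linarith
    refine ⟨fun x => (e.repr x (Sum.inl 0) / (2 - e.repr x (Sum.inl 0)),
      e.repr x (Sum.inl 1) / (2 - e.repr x (Sum.inl 1))),
      fun w => (2 * w.1 / (1 + w.1)) • u 0 + (2 * w.2 / (1 + w.2)) • v 0, ?_, ?_, ?_, ?_, ?_, ?_⟩
    · have hd : ∀ i, Differentiable ℂ fun x => e.repr x i := fun i =>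
        (e.coord i).toContinuousLinearMap.differentiable
      have hq : ∀ a : ℂ, a.re < 1 → DifferentiableAt ℂ (fun a : ℂ => a / (2 - a)) a := fun a ha =>
        differentiableAt_fun_id.fun_div ((differentiableAt_const 2).fun_sub differentiableAt_fun_id)
          (hne a ha)
      intro x hx
      obtain ⟨a, c, ha, hc', rfl⟩ := hV x hx
      refine DifferentiableAt.differentiableWithinAt (DifferentiableAt.prodMk ?_ ?_)
      · exact (hq _ ((hrep a c).1.symm ▸ ha)).comp _ (hd (Sum.inl 0) _)
      · exact (hq _ ((hrep a c).2.symm ▸ hc')).comp _ (hd (Sum.inl 1) _)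
    · rintro w ⟨hw1, hw2⟩
      have h1 := one_add_ne_zero_of_norm_lt_one (mem_ball_zero_iff.1 hw1)
      have h2 := one_add_ne_zero_of_norm_lt_one (mem_ball_zero_iff.1 hw2)
      refine DifferentiableAt.differentiableWithinAt ?_
      fun_prop (disch := assumption)
    · intro x hx
      obtain ⟨a, c, ha, hc', rfl⟩ := hV x hx
      simp only [unitBidisk, mem_prod, mem_ball_zero_iff, (hrep a c).1, (hrep a c).2]
      exact ⟨norm_div_two_sub_lt_one ha, norm_div_two_sub_lt_one hc'⟩
    · rintro w ⟨hw1, hw2⟩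
      refine ⟨?_, ?_⟩
      · rw [mem_ofPred_eq, sub_zero]
        exact add_mem (Submodule.smul_mem _ _ (Submodule.subset_span ⟨0, rfl⟩))
          (Submodule.smul_mem _ _ (Submodule.subset_span ⟨1, rfl⟩))
      · rw [mem_ofPred_eq, hGuv, halfPlaneGauge_lt_one_iff]
        exact ⟨re_two_mul_div_one_add_lt_one (mem_ball_zero_iff.1 hw1),
          re_two_mul_div_one_add_lt_one (mem_ball_zero_iff.1 hw2)⟩
    · intro x hx
      obtain ⟨a, c, ha, hc', rfl⟩ := hV x hx
      have hinv : ∀ a : ℂ, a.re < 1 → 2 * (a / (2 - a)) / (1 + a / (2 - a)) = a := fun a ha => by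
        have h1 := hne a ha
        have h2 : 1 + a / (2 - a) = 2 / (2 - a) := by
          field_simp
          ring
        rw [h2]
        field_simp
      simp only [(hrep a c).1, (hrep a c).2, hinv a ha, hinv c hc']
    · rintro w ⟨hw1, hw2⟩
      have hinv : ∀ w : ℂ, ‖w‖ < 1 → 2 * w / (1 + w) / (2 - 2 * w / (1 + w)) = w := fun w hw => by
        have h1 := one_add_ne_zero_of_norm_lt_one hw
        have h2 : 2 - 2 * w / (1 + w) = 2 / (1 + w) := by
          field_simp
          ring
        rw [h2]
        field_simp
      simp only [(hrep _ _).1, (hrep _ _).2, hinv _ (mem_ball_zero_iff.1 hw1),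
        hinv _ (mem_ball_zero_iff.1 hw2)]

end Limit

section Disc

lemma eventually_norm_one_add_mul_lt_one {a : ℂ} (ha : a.re < 1) :
    ∀ᶠ s : ℝ in 𝓝[>] 0, ‖1 + (s : ℂ) * (a - 1)‖ < 1 := by
  have hlim : Tendsto (fun s : ℝ => 2 * (a.re - 1) + s * Complex.normSq (a - 1)) (𝓝[>] 0)
      (𝓝 (2 * (a.re - 1) + 0 * Complex.normSq (a - 1))) :=
    (Continuous.tendsto (by fun_prop) 0).mono_left nhdsWithin_le_nhds
  filter_upwards [hlim.eventually (gt_mem_nhds (show _ < (0 : ℝ) by linarith)),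
    self_mem_nhdsWithin] with s hs hs0
  have hs0' : 0 < s := hs0
  rw [← sq_lt_sq₀ (norm_nonneg _) zero_le_one, ← Complex.normSq_eq_norm_sq, Complex.normSq_apply]
  rw [Complex.normSq_apply] at hs
  simp at hs ⊢
  nlinarith

/-- A proper convex planar domain looks like a half plane near a suitable boundary point. -/
lemma exists_halfPlane_approx {U : Set ℂ} (ho : IsOpen U) (hc : Convex ℝ U) (hne : U.Nonempty)
    (huniv : U ≠ univ) : ∃ b c : ℂ,
      (∀ a : ℂ, a.re < 1 → ∀ᶠ s : ℝ in 𝓝[>] 0, b + s * (c * (a - 1)) ∈ U) ∧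
      ∀ a : ℂ, 1 < a.re → ∀ s : ℝ, 0 < s → b + s * (c * (a - 1)) ∉ closure U := by
  obtain ⟨u, hu⟩ := hne
  obtain ⟨b, hb, hbd⟩ := ho.isClosed_compl.exists_infDist_eq_dist (nonempty_compl.2 huniv) u
  have hball : ∀ w, dist w u < dist u b → w ∈ U := fun w hw => by
    by_contra h
    have := infDist_le_dist_of_mem (x := u) (show w ∈ Uᶜ from h)
    rw [hbd, dist_comm u w] at this
    linarith
  have hub : 0 < dist u b := dist_pos.2 fun h => hb (h ▸ hu)
  have hin : ∀ a : ℂ, a.re < 1 → ∀ᶠ s : ℝ in 𝓝[>] 0, b + s * ((b - u) * (a - 1)) ∈ U := by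
    intro a ha
    filter_upwards [eventually_norm_one_add_mul_lt_one ha] with s hs
    refine hball _ ?_
    rw [dist_eq_norm, show b + s * ((b - u) * (a - 1)) - u = (b - u) * (1 + s * (a - 1)) by ring,
      norm_mul, ← dist_eq_norm, dist_comm b u]
    nlinarith
  refine ⟨b, b - u, hin, fun a ha s hs hmem => ?_⟩
  have h2 := hin (2 - a) (by simp; linarith)
  obtain ⟨t, ht, ht0⟩ := (h2.and self_mem_nhdsWithin).exists
  have ht0' : 0 < t := ht0
  refine hb (interior_subset (hc.openSegment_closure_interior_subset_interior hmem
    (ho.interior_eq.symm ▸ ht) ⟨t / (s + t), s / (s + t), by positivity, by positivity, by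
      field_simp
      ring, ?_⟩))
  have : (s : ℂ) + t ≠ 0 := by
    rw [← Complex.ofReal_add, Complex.ofReal_ne_zero]
    positivity
  simp only [Complex.real_smul]
  push_cast
  field_simp
  ring

variable {H : Type*} [NormedAddCommGroup H] [NormedSpace ℂ H]

/-- A convex combination of a point of the closure and a point of the open set. -/
lemma Convex.combo_closure_mem {Ω : Set H} (ho : IsOpen Ω) (hc : Convex ℝ Ω) {x y : H}
    (hx : x ∈ closure Ω) (hy : y ∈ Ω) {θ : ℝ} (h0 : 0 < θ) (h1 : θ < 1) :
    ((1 - θ : ℝ) : ℂ) • x + (θ : ℂ) • y ∈ Ω := by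
  have := hc.openSegment_closure_interior_subset_interior hx (ho.interior_eq.symm ▸ hy)
    ⟨1 - θ, θ, by linarith, h0, by ring, rfl⟩
  simpa only [Complex.coe_smul] using interior_subset this

/-- A convex domain with a complex disc in its boundary has approximate bidisk slices. -/
lemma hasBidiskSections_of_disc {Ω : Set H} (hΩ : InX Ω) {p e : H} (ℓ : H →L[ℂ] ℂ)
    (hℓ : ∀ x ∈ Ω, 0 < (ℓ (x - p)).re) (he : e ≠ 0) (hℓe : ℓ e = 0) {δ : ℝ} (hδ : 0 < δ)
    (hdisc : ∀ z : ℂ, ‖z‖ < δ → p + z • e ∈ closure Ω) : HasBidiskSections Ω := by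
  obtain ⟨⟨ho, hc, x₀, hx₀⟩, hnl⟩ := hΩ
  obtain ⟨n, rfl⟩ : ∃ n, x₀ = p + n := ⟨x₀ - p, by abel⟩
  let Z : Set ℂ := {z | p + z • e ∈ closure Ω}
  let C : Set ℂ := {w | ∃ t : ℝ, 0 < t ∧ p + ((t : ℂ) * w) • n ∈ Ω}
  have hZcl : IsClosed Z := isClosed_closure.preimage (by fun_prop)
  have hZc : Convex ℝ Z := by
    intro x hx y hy a b ha hb hab
    have h1 := hc.closure hx hy ha hb hab
    have h2 : a • (p + x • e) + b • (p + y • e) = p + (a • x + b • y) • e := by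
      rw [smul_add, smul_add, ← smul_assoc, ← smul_assoc, add_add_add_comm, ← add_smul, hab,
        one_smul, ← add_smul]
    rw [h2] at h1
    exact h1
  have hZ0 : (0 : ℂ) ∈ interior Z := by
    rw [mem_interior_iff_mem_nhds]
    filter_upwards [ball_mem_nhds (0 : ℂ) hδ] with z hz
    exact hdisc z (mem_ball_zero_iff.1 hz)
  have hp : p ∈ closure Ω := by simpa using hdisc 0 (by simpa using hδ)
  have hplane : ∀ z : ℂ, p + z • e ∉ Ω := fun z hz => by
    have := hℓ _ hz
    simp [hℓe] at this
  have hin : ∀ (z w : ℂ) (t τ : ℝ), 0 < τ → τ < t → p + ((t : ℂ) * w) • n ∈ Ω →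
      z / (1 - τ / t : ℝ) ∈ Z → p + z • e + ((τ : ℂ) * w) • n ∈ Ω := by
    intro z w t τ hτ hτt hw hz
    have ht : 0 < t := hτ.trans hτt
    have h1 := Convex.combo_closure_mem ho hc hz hw (θ := τ / t) (by positivity)
      ((div_lt_one ht).2 hτt)
    convert h1 using 1
    have h2 : (t : ℂ) ≠ 0 := Complex.ofReal_ne_zero.2 ht.ne'
    have h3 : ((1 - τ / t : ℝ) : ℂ) ≠ 0 := Complex.ofReal_ne_zero.2 (by
      have := (div_lt_one ht).2 hτt
      linarith)
    rw [smul_add, smul_add, smul_smul, smul_smul, mul_div_cancel₀ _ h3, ← mul_assoc]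
    push_cast
    rw [div_mul_cancel₀ _ h2]
    module
  have hshrink : ∀ w : ℂ, w ∈ C → ∀ᶠ t : ℝ in 𝓝[>] 0, p + ((t : ℂ) * w) • n ∈ Ω := by
    rintro w ⟨t, ht, hw⟩
    filter_upwards [Ioo_mem_nhdsGT ht] with τ hτ
    have := hin 0 w t τ hτ.1 hτ.2 hw (by simpa [Z] using hp)
    simpa using this
  have hCo : IsOpen C := by
    have : C = ⋃ t : ℝ, ⋃ _ : 0 < t, {w : ℂ | p + ((t : ℂ) * w) • n ∈ Ω} := by
      ext w
      simp [C]
    rw [this]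
    exact isOpen_iUnion fun t => isOpen_iUnion fun _ => ho.preimage (by fun_prop)
  have hCc : Convex ℝ C := by
    intro x hx y hy a b ha hb hab
    obtain ⟨t, ⟨htx, hty⟩, ht⟩ := (((hshrink x hx).and (hshrink y hy)).and
      self_mem_nhdsWithin).exists
    refine ⟨t, ht, ?_⟩
    have h1 := hc htx hty ha hb hab
    have h2 : a • (p + ((t : ℂ) * x) • n) + b • (p + ((t : ℂ) * y) • n) =
        p + ((t : ℂ) * (a • x + b • y)) • n := by
      rw [smul_add, smul_add, ← smul_assoc, ← smul_assoc, add_add_add_comm, ← add_smul, hab,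
        one_smul, ← add_smul, mul_add, mul_smul_comm, mul_smul_comm]
    rwa [h2] at h1
  have hC1 : (1 : ℂ) ∈ C := ⟨1, one_pos, by simpa using hx₀⟩
  have hC0 : (0 : ℂ) ∉ C := by
    rintro ⟨t, -, h⟩
    refine hplane 0 ?_
    simpa using h
  have hZuniv : Z ≠ univ := fun h => by
    refine hnl (p + ((1 / 2 : ℝ) : ℂ) • n) e he fun lam => ?_
    have := hin lam 1 1 (1 / 2) (by norm_num) (by norm_num) (by simpa using hx₀)
      (h ▸ mem_univ _)
    rw [mul_one] at this
    rwa [add_right_comm]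
  have hCout : ∀ (z w : ℂ) (τ : ℝ), 0 < τ → w ∉ C → p + z • e + ((τ : ℂ) * w) • n ∉ Ω := by
    intro z w τ hτ hw hmem
    refine hw ?_
    obtain ⟨κ, hκ, hκz⟩ : ∃ κ : ℝ, 0 < κ ∧ p + (-((κ : ℂ) * z)) • e ∈ closure Ω := by
      refine ⟨δ / (‖z‖ + 1), by positivity, hdisc _ ?_⟩
      rw [norm_neg, norm_mul, Complex.norm_real, Real.norm_of_nonneg (by positivity),
        div_mul_eq_mul_div, div_lt_iff₀ (by positivity)]
      nlinarith [norm_nonneg z]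
    have h1 := Convex.combo_closure_mem ho hc hκz hmem (θ := κ / (1 + κ)) (by positivity)
      ((div_lt_one (by positivity)).2 (by linarith))
    refine ⟨κ / (1 + κ) * τ, by positivity, ?_⟩
    convert h1 using 1
    have h3 : (1 : ℂ) + κ ≠ 0 := by
      rw [← Complex.ofReal_one, ← Complex.ofReal_add, Complex.ofReal_ne_zero]
      positivity
    have h4 : ((1 - κ / (1 + κ) : ℝ) : ℂ) = 1 / (1 + κ) := by
      push_cast
      field_simp
      ring
    rw [h4]
    push_cast
    match_scalars <;> field_simp
    ring
  obtain ⟨b₁, c₁, hi₁, ho₁⟩ := exists_halfPlane_approx isOpen_interior hZc.interior ⟨0, hZ0⟩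
    fun h => hZuniv (univ_subset_iff.1 (h ▸ interior_subset))
  obtain ⟨b₂, c₂, hi₂, ho₂⟩ := exists_halfPlane_approx hCo hCc ⟨1, hC1⟩
    fun h => hC0 (h ▸ mem_univ _)
  rw [hZc.closure_interior_eq_closure_of_nonempty_interior ⟨0, hZ0⟩, hZcl.closure_eq] at ho₁
  intro S K hK hKΩ
  have hs : ∀ᶠ s : ℝ in 𝓝[>] 0, ∀ x ∈ S,
      (x.1.re < 1 → b₁ + s * (c₁ * (x.1 - 1)) ∈ interior Z) ∧
      (x.2.re < 1 → b₂ + s * (c₂ * (x.2 - 1)) ∈ C) := by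
    refine (Finset.eventually_all S).2 fun x _ => ?_
    refine Eventually.and ?_ ?_
    · by_cases h : x.1.re < 1
      · filter_upwards [hi₁ _ h] with s hs _ using hs
      · exact Eventually.of_forall fun s h' => absurd h' h
    · by_cases h : x.2.re < 1
      · filter_upwards [hi₂ _ h] with s hs _ using hs
      · exact Eventually.of_forall fun s h' => absurd h' h
  obtain ⟨s, hs, hs0⟩ := (hs.and self_mem_nhdsWithin).exists
  replace hs0 : 0 < s := hs0
  have hcont : ∀ z w : ℂ, Tendsto (fun τ : ℝ => p + z • e + ((τ : ℂ) * w) • n) (𝓝[>] 0)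
      (𝓝 (p + z • e)) := fun z w => by
    have : Continuous fun τ : ℝ => p + z • e + ((τ : ℂ) * w) • n := by fun_prop
    have h := (this.tendsto 0).mono_left (nhdsWithin_le_nhds (s := Ioi 0))
    simpa using h
  have hτ : ∀ᶠ τ : ℝ in 𝓝[>] 0, ∀ x ∈ S, ∀ z w : ℂ, z = b₁ + s * (c₁ * (x.1 - 1)) →
      w = b₂ + s * (c₂ * (x.2 - 1)) →
      (x.1.re < 1 → x.2.re < 1 → p + z • e + ((τ : ℂ) * w) • n ∈ Ω) ∧
      (1 < x.1.re → p + z • e + ((τ : ℂ) * w) • n ∉ Ω) ∧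
      p + z • e + ((τ : ℂ) * w) • n ∉ K := by
    refine (Finset.eventually_all S).2 fun x hx => ?_
    set z := b₁ + s * (c₁ * (x.1 - 1)) with hz
    set w := b₂ + s * (c₂ * (x.2 - 1)) with hw
    have e1 : ∀ᶠ τ : ℝ in 𝓝[>] 0,
        (x.1.re < 1 → x.2.re < 1 → p + z • e + ((τ : ℂ) * w) • n ∈ Ω) := by
      by_cases h : x.1.re < 1 ∧ x.2.re < 1
      · have hzZ := (hs x hx).1 h.1
        obtain ⟨t, ht, hwt⟩ := (hs x hx).2 h.2
        have hlim : Tendsto (fun τ : ℝ => z / (1 - τ / t : ℝ)) (𝓝[>] 0) (𝓝 z) := by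
          have h1 : ContinuousAt (fun τ : ℝ => z / ((1 - τ / t : ℝ) : ℂ)) 0 := by
            refine ContinuousAt.div continuousAt_const ?_ (by simp)
            exact Complex.continuous_ofReal.continuousAt.comp (by fun_prop)
          have h2 := h1.tendsto.mono_left (nhdsWithin_le_nhds (s := Ioi 0))
          simpa using h2
        filter_upwards [hlim.eventually (isOpen_interior.mem_nhds hzZ), Ioo_mem_nhdsGT ht]
          with τ h1 h2 _ _
        exact hin z w t τ h2.1 h2.2 hwt (interior_subset h1)
      · exact Eventually.of_forall fun τ h1 h2 => absurd ⟨h1, h2⟩ h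
    have e2 : ∀ᶠ τ : ℝ in 𝓝[>] 0, (1 < x.1.re → p + z • e + ((τ : ℂ) * w) • n ∉ Ω) := by
      by_cases h : 1 < x.1.re
      · have hzZ : p + z • e ∈ (closure Ω)ᶜ := ho₁ x.1 h s hs0
        filter_upwards [(hcont z w).eventually (isClosed_closure.isOpen_compl.mem_nhds hzZ)]
          with τ h1 _ h2
        exact h1 (subset_closure h2)
      · exact Eventually.of_forall fun τ h1 => absurd h1 h
    have e3 : ∀ᶠ τ : ℝ in 𝓝[>] 0, p + z • e + ((τ : ℂ) * w) • n ∉ K :=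
      (hcont z w).eventually (hK.isClosed.isOpen_compl.mem_nhds fun h => hplane z (hKΩ h))
    filter_upwards [e1, e2, e3] with τ h1 h2 h3
    rintro z' w' rfl rfl
    exact ⟨h1, h2, h3⟩
  obtain ⟨τ, hτ, hτ0⟩ := (hτ.and self_mem_nhdsWithin).exists
  replace hτ0 : 0 < τ := hτ0
  refine ⟨p + (b₁ - s * c₁) • e + ((τ : ℂ) * (b₂ - s * c₂)) • n, (s * c₁) • e,
    ((τ : ℂ) * (s * c₂)) • n, fun x hx => ?_⟩
  have heq : p + (b₁ - s * c₁) • e + ((τ : ℂ) * (b₂ - s * c₂)) • n + x.1 • (s * c₁) • e +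
      x.2 • ((τ : ℂ) * (s * c₂)) • n = p + (b₁ + s * (c₁ * (x.1 - 1))) • e +
      ((τ : ℂ) * (b₂ + s * (c₂ * (x.2 - 1)))) • n := by
    module
  rw [heq]
  obtain ⟨h1, h2, h3⟩ := hτ x hx _ _ rfl rfl
  exact ⟨h1, fun h => h.elim h2 fun h' =>
    hCout _ _ τ hτ0 fun h'' => ho₂ x.2 h' s hs0 (subset_closure h''), h3⟩

end Disc

section Averaging

variable {H : Type*} [NormedAddCommGroup H] [NormedSpace ℂ H]

/-- Averaging a holomorphic disc against a positive trigonometric kernel. -/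
lemma re_mul_ge_of_circle {h : ℂ → ℂ} {ρ : ℝ} (hρ : 0 < ρ)
    (hd : DifferentiableOn ℂ h (closedBall 0 ρ)) {k : ℕ} (hk : k ≠ 0) {a : ℝ}
    (hc : ∀ w : ℂ, ‖w‖ = ρ → a ≤ (w ^ k * h w).re) {c : ℂ} (hc1 : ‖c‖ ≤ 1) :
    a ≤ (c * ρ ^ k / 2 * h 0).re := by
  let Q : ℂ → ℂ := fun w => w ^ k * h w + (starRingEnd ℂ) c * w ^ (2 * k) / ρ ^ k * h w / 2 +
    c * ρ ^ k / 2 * h w - a * (1 + (starRingEnd ℂ) c * w ^ k / ρ ^ k)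
  have hρc : (ρ : ℂ) ^ k ≠ 0 := pow_ne_zero _ (Complex.ofReal_ne_zero.2 hρ.ne')
  have hQd : DifferentiableOn ℂ (fun w => Complex.exp (-Q w)) (closure (ball 0 ρ)) := by
    rw [closure_ball _ hρ.ne']
    refine DifferentiableOn.cexp (DifferentiableOn.neg ?_)
    simp only [Q]
    fun_prop
  have hQc : ∀ w ∈ frontier (ball (0 : ℂ) ρ), ‖Complex.exp (-Q w)‖ ≤ 1 := by
    intro w hw
    rw [frontier_ball _ hρ.ne', mem_sphere_zero_iff_norm] at hw
    rw [Complex.norm_exp, Real.exp_le_one_iff, Complex.neg_re, neg_nonpos]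
    set q : ℂ := w ^ k / ρ ^ k with hq
    have hqn : ‖q‖ = 1 := by
      rw [hq, norm_div, norm_pow, norm_pow, hw, Complex.norm_real, Real.norm_of_nonneg hρ.le,
        div_self (by positivity)]
    have hqq : q * (starRingEnd ℂ) q = 1 := by
      rw [Complex.mul_conj, Complex.normSq_eq_norm_sq, hqn]
      norm_num
    have hwq : w ^ k = ρ ^ k * q := by
      rw [hq, mul_div_cancel₀ _ hρc]
    have hQ : Q w = (w ^ k * h w) * (1 + ((starRingEnd ℂ) c * q + c * (starRingEnd ℂ) q) / 2) -
        a * (1 + (starRingEnd ℂ) c * q) := by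
      simp only [Q]
      rw [two_mul, pow_add, hwq]
      field_simp
      linear_combination (-h w * ρ ^ k * c) * hqq
    have hre : (starRingEnd ℂ) c * q + c * (starRingEnd ℂ) q =
        ((2 * ((starRingEnd ℂ) c * q).re : ℝ) : ℂ) := by
      have := Complex.add_conj ((starRingEnd ℂ) c * q)
      rwa [map_mul, Complex.conj_conj] at this
    have hker : (1 : ℂ) + ((starRingEnd ℂ) c * q + c * (starRingEnd ℂ) q) / 2 =
        ((1 + ((starRingEnd ℂ) c * q).re : ℝ) : ℂ) := by
      rw [hre]
      push_cast
      ring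
    have hpos : 0 ≤ 1 + ((starRingEnd ℂ) c * q).re := by
      have h1 := (abs_le.1 (Complex.abs_re_le_norm ((starRingEnd ℂ) c * q))).1
      rw [norm_mul, hqn, mul_one, RCLike.norm_conj] at h1
      linarith
    rw [hQ, hker, Complex.sub_re, Complex.re_mul_ofReal, Complex.re_ofReal_mul, Complex.add_re,
      Complex.one_re]
    nlinarith [hc w hw]
  have h0 := Complex.norm_le_of_forall_mem_frontier_norm_le isBounded_ball
    hQd.diffContOnCl hQc (subset_closure (mem_ball_self hρ))
  rw [Complex.norm_exp, Real.exp_le_one_iff, Complex.neg_re, neg_nonpos] at h0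
  have hk2 : 2 * k ≠ 0 := by omega
  simp only [Q, zero_pow hk, zero_pow hk2, mul_zero, zero_mul, zero_div, add_zero, zero_add,
    mul_one, Complex.sub_re, Complex.ofReal_re] at h0
  linarith

/-- If a holomorphic circle lies in a closed convex set, so do the leading-order rotations. -/
lemma add_smul_mem_of_circle {S : Set H} (hS : IsClosed S) (hSc : Convex ℝ S) {h : ℂ → H}
    {ρ : ℝ} (hρ : 0 < ρ) (hd : DifferentiableOn ℂ h (closedBall 0 ρ)) {k : ℕ} (hk : k ≠ 0) {p : H}
    (hc : ∀ w : ℂ, ‖w‖ = ρ → p + w ^ k • h w ∈ S) {c : ℂ} (hc1 : ‖c‖ ≤ 1) :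
    p + (c * ρ ^ k / 2) • h 0 ∈ S := by
  by_contra hn
  obtain ⟨f, u, hfu, hfS⟩ := RCLike.geometric_hahn_banach_point_closed (𝕜 := ℂ) hSc hS hn
  have hdf : DifferentiableOn ℂ (fun w => f (h w)) (closedBall 0 ρ) :=
    f.differentiable.comp_differentiableOn hd
  have h1 := re_mul_ge_of_circle hρ hdf hk (a := u - (f p).re) (fun w hw => by
    have := hfS _ (hc w hw)
    rw [map_add, map_smul, smul_eq_mul] at this
    simp only [RCLike.re_to_complex, Complex.add_re] at this
    linarith) hc1
  rw [map_add, map_smul, smul_eq_mul] at hfu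
  simp only [RCLike.re_to_complex, Complex.add_re] at hfu
  linarith

/-- The leading term of a non-constant holomorphic disc. -/
lemma exists_leading_term [CompleteSpace H] {f : ℂ → H} {ε : ℝ} (hε : 0 < ε)
    (hf : DifferentiableOn ℂ f (ball 0 ε)) (hne : ¬ ∀ w ∈ ball (0 : ℂ) ε, f w = f 0) :
    ∃ (k : ℕ) (h : ℂ → H) (δ : ℝ), k ≠ 0 ∧ 0 < δ ∧ δ ≤ ε ∧ DifferentiableOn ℂ h (ball 0 δ) ∧
      h 0 ≠ 0 ∧ (∀ w ∈ ball (0 : ℂ) δ, f w = f 0 + w ^ k • h w) ∧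
      analyticOrderAt (fun w => f w - f 0) 0 = k := by
  have han : AnalyticOnNhd ℂ (fun w => f w - f 0) (ball 0 ε) :=
    (hf.sub_const (f 0)).analyticOnNhd isOpen_ball
  have han0 := han 0 (mem_ball_self hε)
  have htop : analyticOrderAt (fun w => f w - f 0) 0 ≠ ⊤ := by
    rw [Ne, analyticOrderAt_eq_top]
    intro hev
    refine hne fun w hw => ?_
    have := han.eqOn_zero_of_preconnected_of_eventuallyEq_zero
      (convex_ball (0 : ℂ) ε).isPreconnected (mem_ball_self hε) hev hw
    exact sub_eq_zero.1 this
  obtain ⟨k, hk⟩ := ENat.ne_top_iff_exists.1 htop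
  obtain ⟨h, hh, hh0, hev⟩ := (han0.analyticOrderAt_eq_natCast).1 hk.symm
  obtain ⟨δ, hδ, hδ'⟩ := Metric.eventually_nhds_iff_ball.1 (hev.and hh.eventually_analyticAt)
  refine ⟨k, h, min δ ε, ?_, lt_min hδ hε, min_le_right _ _, fun w hw => ?_, hh0, fun w hw => ?_,
    hk.symm⟩
  · rintro rfl
    have := (hδ' 0 (mem_ball_self hδ)).1
    simp at this
    exact hh0 this.symm
  · exact (hδ' w (ball_subset_ball (min_le_left _ _) hw)).2.differentiableAt.differentiableWithinAt
  · have := (hδ' w (ball_subset_ball (min_le_left _ _) hw)).1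
    rw [sub_zero] at this
    rw [← this]
    abel

lemma eq_zero_of_re_mul_nonneg {a : ℂ} {δ : ℝ} (hδ : 0 < δ)
    (h : ∀ z : ℂ, ‖z‖ < δ → 0 ≤ (z * a).re) : a = 0 := by
  by_contra ha
  have hpos : 0 < ‖a‖ := norm_pos_iff.2 ha
  have h1 := h (((-(δ / (2 * ‖a‖)) : ℝ) : ℂ) * (starRingEnd ℂ) a) (by
    rw [norm_mul, Complex.norm_real, norm_neg, RCLike.norm_conj,
      Real.norm_of_nonneg (by positivity)]
    field_simp
    norm_num)
  rw [mul_assoc, Complex.re_ofReal_mul, mul_comm _ a, Complex.mul_conj, Complex.ofReal_re,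
    Complex.normSq_eq_norm_sq] at h1
  have : 0 < δ / (2 * ‖a‖) * ‖a‖ ^ 2 := by positivity
  linarith

lemma exists_supporting_functional {Ω : Set H} (ho : IsOpen Ω) (hc : Convex ℝ Ω) {p : H}
    (hp : p ∉ Ω) : ∃ ℓ : H →L[ℂ] ℂ, ∀ x ∈ Ω, 0 < (ℓ (x - p)).re := by
  obtain ⟨f, hf⟩ := RCLike.geometric_hahn_banach_open_point (𝕜 := ℂ) hc ho hp
  refine ⟨-f, fun x hx => ?_⟩
  have := hf x hx
  simp only [RCLike.re_to_complex] at this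
  simp
  exact this

/-- A convex domain whose boundary contains a holomorphic disc has approximate bidisk slices. -/
lemma hasBidiskSections_of_holomorphic_disc [CompleteSpace H] {Ω : Set H} (hΩ : InX Ω) {f : ℂ → H}
    (hf : DifferentiableOn ℂ f (ball 0 1)) (hmap : MapsTo f (ball (0 : ℂ) 1) (frontier Ω))
    (hne : ¬ ∃ c, ∀ w ∈ ball (0 : ℂ) 1, f w = c) : HasBidiskSections Ω := by
  obtain ⟨k, h, δ, hk, hδ, hδ1, hh, hh0, hfh, -⟩ :=
    exists_leading_term one_pos hf fun h => hne ⟨_, h⟩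
  have hρ : 0 < δ / 2 := by positivity
  have hmem : ∀ z : ℂ, ‖z‖ < (δ / 2) ^ k / 2 → f 0 + z • h 0 ∈ closure Ω := by
    intro z hz
    have := add_smul_mem_of_circle isClosed_closure hΩ.1.2.1.closure hρ
      (hh.mono (closedBall_subset_ball (by linarith))) hk (p := f 0) (fun w hw => ?_)
      (c := z * 2 / ((δ / 2 : ℝ) : ℂ) ^ k) ?_
    · convert this using 3
      have : ((δ / 2 : ℝ) : ℂ) ^ k ≠ 0 := pow_ne_zero _ (Complex.ofReal_ne_zero.2 hρ.ne')
      field_simp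
    · have hwδ : w ∈ ball (0 : ℂ) δ := by
        rw [mem_ball_zero_iff]
        linarith
      rw [← hfh w hwδ]
      exact frontier_subset_closure (hmap (ball_subset_ball hδ1 hwδ))
    · rw [norm_div, norm_mul, norm_pow, Complex.norm_real, Real.norm_of_nonneg hρ.le,
        Complex.norm_ofNat, div_le_one (by positivity)]
      linarith
  have hp : f 0 ∉ Ω := by
    have := hmap (mem_ball_self one_pos)
    rw [hΩ.1.1.frontier_eq] at this
    exact this.2
  obtain ⟨ℓ, hℓ⟩ := exists_supporting_functional hΩ.1.1 hΩ.1.2.1 hp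
  have hcl : ∀ x ∈ closure Ω, 0 ≤ (ℓ (x - f 0)).re := fun x hx =>
    closure_minimal (fun y hy => (hℓ y hy).le)
      (isClosed_le continuous_const (by fun_prop : Continuous fun x => (ℓ (x - f 0)).re)) hx
  have hpos : 0 < (δ / 2) ^ k / 2 := by positivity
  refine hasBidiskSections_of_disc hΩ ℓ hℓ hh0 (eq_zero_of_re_mul_nonneg hpos fun z hz => ?_)
    hpos hmem
  have := hcl _ (hmem z hz)
  rwa [add_sub_cancel_left, map_smul, smul_eq_mul] at this

end Averaging

section Order

lemma isBigO_of_iteratedFDeriv_eq_zero {m : ℕ} : ∀ {F : Type*} [NormedAddCommGroup F]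
    [NormedSpace ℝ F] {g : ℂ → F}, ContDiffAt ℝ m g 0 →
    (∀ j < m, iteratedFDeriv ℝ j g 0 = 0) → g =O[𝓝 0] fun w => ‖w‖ ^ m := by
  induction m with
  | zero =>
    intro F _ _ g hg _
    simpa using hg.continuousAt.tendsto.isBigO_one ℝ
  | succ m ih =>
    intro F _ _ g hg hz
    have hg1 : ContDiffAt ℝ m (fderiv ℝ g) 0 := hg.fderiv_right (by norm_cast)
    have h1 := ih hg1 fun j hj => by
      rw [← norm_eq_zero, norm_iteratedFDeriv_fderiv, hz (j + 1) (by omega), norm_zero]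
    have hg0 : g 0 = 0 := by
      have := hz 0 (by omega)
      rw [← norm_eq_zero, norm_iteratedFDeriv_zero, norm_eq_zero] at this
      exact this
    obtain ⟨C, hC⟩ := h1.bound
    have hdiff : ∀ᶠ w in 𝓝 (0 : ℂ), DifferentiableAt ℝ g w :=
      (hg.eventually (by simp)).mono fun w hw => hw.differentiableAt (by simp)
    obtain ⟨δ, hδ, hall⟩ := Metric.eventually_nhds_iff_ball.1 (hC.and hdiff)
    refine Asymptotics.IsBigO.of_bound (max C 0) ?_
    filter_upwards [ball_mem_nhds (0 : ℂ) hδ] with w hw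
    rw [mem_ball_zero_iff] at hw
    have hmem : ∀ x ∈ closedBall (0 : ℂ) ‖w‖, x ∈ ball (0 : ℂ) δ := fun x hx => by
      rw [mem_closedBall_zero_iff] at hx
      rw [mem_ball_zero_iff]
      linarith
    have := (convex_closedBall (0 : ℂ) ‖w‖).norm_image_sub_le_of_norm_fderiv_le (𝕜 := ℝ) (f := g)
      (C := max C 0 * ‖w‖ ^ m) (fun x hx => (hall x (hmem x hx)).2) (fun x hx => ?_)
      (mem_closedBall_self (norm_nonneg w)) (y := w) (by simp)
    · rw [hg0, sub_zero, sub_zero] at this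
      rw [norm_pow, norm_norm, pow_succ, ← mul_assoc]
      exact this
    · have hb := (hall x (hmem x hx)).1
      rw [norm_pow, norm_norm] at hb
      rw [mem_closedBall_zero_iff] at hx
      calc _ ≤ C * ‖x‖ ^ m := hb
        _ ≤ max C 0 * ‖x‖ ^ m := by gcongr; exact le_max_left _ _
        _ ≤ _ := by gcongr

lemma iteratedFDeriv_eq_zero_of_lt_vanishOrder {G : Type*} [NormedAddCommGroup G] [NormedSpace ℝ G]
    {g : ℂ → G} {j : ℕ} (hj : 1 ≤ j) (h : (j : ℕ∞) < vanishOrder g) :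
    iteratedFDeriv ℝ j g 0 = 0 := by
  by_contra hne
  exact (not_le.2 h) (sInf_le (by exact ⟨j, rfl, hj, hne⟩))

variable {H : Type*} [NormedAddCommGroup H] [NormedSpace ℂ H]

lemma natCast_le_vanishOrder [CompleteSpace H] {ζ : ℂ → H} {k : ℕ} (hζ : AnalyticAt ℂ ζ 0)
    (hk : analyticOrderAt (fun w => ζ w - ζ 0) 0 = k) : (k : ℕ∞) ≤ vanishOrder ζ := by
  refine le_sInf ?_
  rintro _ ⟨j, rfl, hj, hne⟩
  rw [Nat.cast_le]
  by_contra! hlt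
  refine hne ?_
  have han : AnalyticAt ℂ (fun w => ζ w - ζ 0) 0 := hζ.sub analyticAt_const
  have h1 := (natCast_le_analyticOrderAt_iff_iteratedDeriv_eq_zero han).1 hk.ge j hlt
  have h2 : iteratedFDeriv ℂ j ζ 0 = 0 := by
    have h3 : iteratedFDeriv ℂ j (fun w => ζ w - ζ 0) 0 = 0 := by
      rw [← norm_eq_zero, norm_iteratedFDeriv_eq_norm_iteratedDeriv, h1, norm_zero]
    rwa [fun_iteratedFDeriv_sub_apply hζ.contDiffAt contDiffAt_const,
      iteratedFDeriv_const_of_ne (by omega), Pi.zero_apply, sub_zero] at h3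
  have h4 := (hζ.contDiffAt (n := j)).restrictScalars_iteratedFDeriv (𝕜 := ℝ)
  rw [← h4, Function.comp_apply, h2]
  rfl

/-- The order of contact of a holomorphic disc with a hypersurface, as a growth estimate. -/
lemma isBigO_of_mul_vanishOrder_le [CompleteSpace H] {ζ : ℂ → H} {k N : ℕ} {r : H → ℝ}
    (hζ : AnalyticAt ℂ ζ 0) (hr : ContDiffAt ℝ (⊤ : ℕ∞) r (ζ 0)) (hr0 : r (ζ 0) = 0)
    (hk : analyticOrderAt (fun w => ζ w - ζ 0) 0 = k)
    (hN : (N : ℕ∞) * vanishOrder ζ ≤ vanishOrder fun w => r (ζ w)) :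
    (fun w => r (ζ w)) =O[𝓝 0] fun w => ‖w‖ ^ (N * k) := by
  have hle : ((N * k : ℕ) : ℕ∞) ≤ vanishOrder fun w => r (ζ w) := by
    refine le_trans ?_ hN
    push_cast
    gcongr
    exact natCast_le_vanishOrder hζ hk
  have hcd : ContDiffAt ℝ ((N * k : ℕ) : WithTop ℕ∞) (fun w => r (ζ w)) 0 :=
    (hr.of_le (by exact_mod_cast le_top)).comp 0 (hζ.contDiffAt.restrict_scalars ℝ)
  refine isBigO_of_iteratedFDeriv_eq_zero hcd fun j hj => ?_
  rcases Nat.eq_zero_or_pos j with rfl | hj0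
  · rw [← norm_eq_zero, norm_iteratedFDeriv_zero, hr0, norm_zero]
  · exact iteratedFDeriv_eq_zero_of_lt_vanishOrder hj0 (lt_of_lt_of_le (by exact_mod_cast hj) hle)

end Order

section Normal

variable {H : Type*} [NormedAddCommGroup H] [NormedSpace ℂ H]

/-- A real supporting functional at a smooth boundary point is a multiple of the differential of
the defining function. -/
lemma exists_fderiv_eq_smul [CompleteSpace H] {Ω U : Set H} (hne : Ω.Nonempty) {p : H} {r : H → ℝ}
    (hU : IsOpen U) (hpU : p ∈ U) (hr : ContDiffOn ℝ (⊤ : ℕ∞) r U) (hdr : fderiv ℝ r p ≠ 0)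
    (hΓ : frontier Ω ∩ U = {x ∈ U | r x = 0}) (hr0 : r p = 0) (φ : H →L[ℝ] ℝ)
    (hφ : ∀ x ∈ Ω, 0 < φ (x - p)) : ∃ κ : ℝ, κ ≠ 0 ∧ fderiv ℝ r p = κ • φ := by
  have hst : HasStrictFDerivAt r (fderiv ℝ r p) p :=
    (hr.contDiffAt (hU.mem_nhds hpU)).hasStrictFDerivAt (by simp)
  have hext : IsLocalExtrOn φ {x | r x = r p} p := by
    left
    filter_upwards [self_mem_nhdsWithin, mem_nhdsWithin_of_mem_nhds (hU.mem_nhds hpU)] with x hx hxU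
    have hx' : x ∈ frontier Ω ∩ U := by
      rw [hΓ]
      exact ⟨hxU, by rw [← hr0]; exact hx⟩
    have h1 : ∀ y ∈ closure Ω, 0 ≤ φ (y - p) := fun y hy =>
      closure_minimal (fun y hy => (hφ y hy).le)
        (isClosed_le continuous_const (by fun_prop : Continuous fun x => φ (x - p))) hy
    have := h1 x (frontier_subset_closure hx'.1)
    rw [map_sub] at this
    linarith
  obtain ⟨a, b, hab, h⟩ := hext.exists_multipliers_of_hasStrictFDerivAt_1d hst
    φ.hasStrictFDerivAt
  have ha : a ≠ 0 := by
    rintro rfl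
    have hb : b ≠ 0 := by
      rintro rfl
      exact hab rfl
    rw [zero_smul, zero_add] at h
    have h0 := (smul_eq_zero.1 h).resolve_left hb
    obtain ⟨x, hx⟩ := hne
    have := hφ x hx
    simp [h0] at this
  have heq : fderiv ℝ r p = (-b / a) • φ := by
    rw [eq_comm, div_eq_inv_mul, mul_smul, inv_smul_eq_iff₀ ha, eq_comm,
      eq_neg_of_add_eq_zero_left h]
    module
  refine ⟨-b / a, ?_, heq⟩
  intro h0
  rw [h0, zero_smul] at heq
  exact hdr heq

lemma inter_frontier_nonempty_of_isPreconnected {X : Type*} [TopologicalSpace X] {T A : Set X}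
    (hT : IsPreconnected T) (hA : IsOpen A) (h1 : (T ∩ A).Nonempty) (h2 : (T ∩ Aᶜ).Nonempty) :
    (T ∩ frontier A).Nonempty := by
  by_contra h
  have h3 : ∀ x ∈ T, x ∈ closure A → x ∈ A := fun x hx hxc => by
    by_contra hxA
    refine h ⟨x, hx, ?_⟩
    rw [hA.frontier_eq]
    exact ⟨hxc, hxA⟩
  obtain ⟨x, hxT, hxA⟩ := h2
  obtain ⟨y, -, hy1, hy2⟩ := hT A (closure A)ᶜ hA isClosed_closure.isOpen_compl
    (fun y hy => (em (y ∈ closure A)).imp (h3 y hy) id) h1 ⟨x, hxT, fun h => hxA (h3 x hxT h)⟩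
  exact hy2 (subset_closure hy1)

/-- Near a smooth boundary point, moving inwards by more than a multiple of the defining function
leads into the domain. -/
lemma exists_add_smul_mem {Ω U : Set H} (ho : IsOpen Ω) (hc : Convex ℝ Ω) {p n : H} {r : H → ℝ}
    (hU : IsOpen U) (hpU : p ∈ U) (hr : ContDiffOn ℝ (⊤ : ℕ∞) r U)
    (hΓ : frontier Ω ∩ U = {x ∈ U | r x = 0}) (hp : p ∈ closure Ω)
    (hn : p + n ∈ Ω) (hdn : fderiv ℝ r p n ≠ 0) :
    ∃ c δ : ℝ, 0 < c ∧ 0 < δ ∧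
      ∀ᶠ x in 𝓝 p, ∀ s : ℝ, c * |r x| < s → s < δ → x + (s : ℂ) • n ∈ Ω := by
  have hst : HasStrictFDerivAt r (fderiv ℝ r p) p :=
    (hr.contDiffAt (hU.mem_nhds hpU)).hasStrictFDerivAt (by simp)
  set m := |fderiv ℝ r p n| with hm
  have hm0 : 0 < m := abs_pos.2 hdn
  have hn0 : 0 < ‖n‖ + 1 := by positivity
  have hlo := hst.isLittleO.def (show 0 < m / (2 * (‖n‖ + 1)) by positivity)
  rw [nhds_prod_eq, eventually_iff, mem_prod_self_iff] at hlo
  obtain ⟨W, hW, hlo⟩ := hlo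
  obtain ⟨ε, hε, hball⟩ := Metric.mem_nhds_iff.1 (inter_mem hW (hU.mem_nhds hpU))
  set δ := min 1 (ε / (2 * (‖n‖ + 1))) / 2 with hδ
  have hδ0 : 0 < δ := by positivity
  have hδ1 : δ < 1 := by
    have := min_le_left 1 (ε / (2 * (‖n‖ + 1)))
    rw [hδ]
    linarith
  have hδε : δ * (‖n‖ + 1) < ε / 2 := by
    have h1 := min_le_right 1 (ε / (2 * (‖n‖ + 1)))
    have h2 : δ < ε / (2 * (‖n‖ + 1)) := by
      have : 0 < ε / (2 * (‖n‖ + 1)) := by positivity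
      rw [hδ]
      linarith
    rw [lt_div_iff₀ (by positivity)] at h2
    linarith
  have hδΩ : p + (δ : ℂ) • n ∈ Ω := by
    have := Convex.combo_closure_mem ho hc hp hn hδ0 hδ1
    convert this using 1
    push_cast
    module
  refine ⟨2 / m, δ, by positivity, hδ0, ?_⟩
  have hcont : ∀ᶠ x in 𝓝 p, x + (δ : ℂ) • n ∈ Ω :=
    (by fun_prop : Continuous fun x : H => x + (δ : ℂ) • n).continuousAt.eventually
      (ho.mem_nhds hδΩ)
  filter_upwards [hcont, ball_mem_nhds p (half_pos hε)] with x hx hxb s hs hsδ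
  have hs0 : 0 < s := lt_of_le_of_lt (by positivity) hs
  by_contra hns
  have hpre : IsPreconnected ((fun τ : ℝ => x + (τ : ℂ) • n) '' Icc s δ) :=
    isPreconnected_Icc.image _ (by fun_prop)
  obtain ⟨_, ⟨τ, hτ, rfl⟩, hfr⟩ := inter_frontier_nonempty_of_isPreconnected hpre
    ho ⟨_, ⟨δ, ⟨hsδ.le, le_rfl⟩, rfl⟩, hx⟩ ⟨_, ⟨s, ⟨le_rfl, hsδ.le⟩, rfl⟩, hns⟩
  have hτ0 : 0 < τ := hs0.trans_le hτ.1
  have hnτ : ‖(τ : ℂ) • n‖ = τ * ‖n‖ := by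
    rw [norm_smul, Complex.norm_real, Real.norm_of_nonneg hτ0.le]
  have hmem : x + (τ : ℂ) • n ∈ ball p ε := by
    rw [mem_ball_iff_norm] at hxb ⊢
    rw [add_sub_right_comm]
    refine (norm_add_le _ _).trans_lt ?_
    rw [hnτ]
    nlinarith [hτ.2, norm_nonneg n]
  have hr0 : r (x + (τ : ℂ) • n) = 0 := by
    have : x + (τ : ℂ) • n ∈ frontier Ω ∩ U := ⟨hfr, (hball hmem).2⟩
    rw [hΓ] at this
    exact this.2
  have h1 := hlo (mk_mem_prod (hball hmem).1
    (hball (ball_subset_ball (half_le_self hε.le) hxb)).1)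
  simp only [mem_ofPred_eq, hr0, zero_sub, add_sub_cancel_left, hnτ] at h1
  rw [Complex.coe_smul, map_smul, smul_eq_mul, Real.norm_eq_abs] at h1
  have h2 : |τ * fderiv ℝ r p n| = τ * m := by rw [abs_mul, abs_of_pos hτ0]
  have h3 : |τ * fderiv ℝ r p n| ≤ |-r x - τ * fderiv ℝ r p n| + |r x| := by
    have := abs_add_le (-r x - τ * fderiv ℝ r p n) (r x)
    rwa [show -r x - τ * fderiv ℝ r p n + r x = -(τ * fderiv ℝ r p n) by ring, abs_neg] at this
  have h4 : m / (2 * (‖n‖ + 1)) * (τ * ‖n‖) ≤ τ * m / 2 := by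
    rw [div_mul_eq_mul_div, div_le_div_iff₀ (by positivity) (by positivity)]
    nlinarith [mul_pos hτ0 hm0, norm_nonneg n]
  rw [div_mul_eq_mul_div, div_lt_iff₀ hm0] at hs
  nlinarith [hτ.1]

/-- The inner normal geometry of a convex domain at a smooth boundary point. -/
lemma exists_normal [CompleteSpace H] {Ω U : Set H} (ho : IsOpen Ω) (hc : Convex ℝ Ω)
    (hne : Ω.Nonempty) {p : H} {r : H → ℝ} (hp : p ∈ frontier Ω)
    (hU : IsOpen U) (hpU : p ∈ U) (hr : ContDiffOn ℝ (⊤ : ℕ∞) r U) (hdr : fderiv ℝ r p ≠ 0)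
    (hΓ : frontier Ω ∩ U = {x ∈ U | r x = 0}) :
    ∃ (ℓ : H →L[ℂ] ℂ) (ν : H), (∀ x ∈ Ω, 0 < (ℓ (x - p)).re) ∧ ℓ ν = 1 ∧
      (∀ w : ℂ, 0 < w.re → ∀ᶠ t : ℝ in 𝓝[>] 0, p + ((t : ℂ) * w) • ν ∈ Ω) ∧
      ∃ c δ : ℝ, 0 < c ∧ 0 < δ ∧
        ∀ᶠ x in 𝓝 p, ∀ s : ℝ, c * |r x| < s → s < δ → x + (s : ℂ) • ν ∈ Ω := by
  have hr0 : r p = 0 := by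
    have : p ∈ frontier Ω ∩ U := ⟨hp, hpU⟩
    rw [hΓ] at this
    exact this.2
  have hpΩ : p ∉ Ω := by
    rw [ho.frontier_eq] at hp
    exact hp.2
  have hpc := frontier_subset_closure hp
  obtain ⟨ℓ, hℓ⟩ := exists_supporting_functional ho hc hpΩ
  let φ : H →L[ℝ] ℝ := Complex.reCLM.comp (ℓ.restrictScalars ℝ)
  have hφ : ∀ x, φ x = (ℓ x).re := fun x => rfl
  obtain ⟨κ, hκ, hdφ⟩ := exists_fderiv_eq_smul hne hU hpU hr hdr hΓ hr0 φ hℓ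
  have hdr' : ∀ x, fderiv ℝ r p x = κ * (ℓ x).re := fun x => by
    rw [hdφ]
    rfl
  have hdiff : HasFDerivAt r (fderiv ℝ r p) p :=
    ((hr.contDiffAt (hU.mem_nhds hpU)).differentiableAt (by simp)).hasFDerivAt
  obtain ⟨x₀, hx₀⟩ := hne
  obtain ⟨n, rfl⟩ : ∃ n, x₀ = p + n := ⟨x₀ - p, by abel⟩
  have hn : 0 < (ℓ n).re := by simpa using hℓ _ hx₀
  obtain ⟨c, δ, hc0, hδ0, hcδ⟩ := exists_add_smul_mem ho hc hU hpU hr hΓ hpc hx₀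
    (by rw [hdr']; positivity)
  have hray : ∀ η : H, 0 < (ℓ η).re → ∀ᶠ t : ℝ in 𝓝[>] 0, p + (t : ℂ) • η ∈ Ω := by
    intro η hη
    set σ := (ℓ η).re / (ℓ n).re with hσ
    have hσ0 : 0 < σ := by positivity
    set ξ := η - (σ : ℂ) • n with hξ
    have hξ0 : fderiv ℝ r p ξ = 0 := by
      rw [hdr', hξ, map_sub, map_smul, smul_eq_mul, Complex.sub_re, Complex.re_ofReal_mul, hσ,
        div_mul_cancel₀ _ hn.ne', sub_self, mul_zero]
    have hline : HasDerivAt (fun t : ℝ => p + t • ξ) ξ 0 := by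
      simpa using ((hasDerivAt_id (0 : ℝ)).smul_const ξ).const_add p
    have hcomp : HasDerivAt (fun t : ℝ => r (p + t • ξ)) 0 0 := by
      have h1 : HasFDerivAt r (fderiv ℝ r p) (p + (0 : ℝ) • ξ) := by simpa using hdiff
      have h2 := h1.comp_hasDerivAt (0 : ℝ) hline
      rwa [hξ0] at h2
    have hlo := (hasDerivAt_iff_isLittleO_nhds_zero.1 hcomp).def
      (show 0 < σ / (2 * c) by positivity)
    have hlim : Tendsto (fun t : ℝ => p + t • ξ) (𝓝 0) (𝓝 p) := by
      have := hline.continuousAt.tendsto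
      simpa using this
    filter_upwards [nhdsWithin_le_nhds hlo, nhdsWithin_le_nhds (hlim.eventually hcδ),
      Ioo_mem_nhdsGT (show 0 < δ / σ by positivity)] with t h1 h2 h3
    have ht0 : 0 < t := h3.1
    simp only [zero_add, zero_smul, add_zero, hr0, sub_zero, smul_zero] at h1
    rw [Real.norm_eq_abs, Real.norm_of_nonneg ht0.le, div_mul_eq_mul_div,
      le_div_iff₀ (by positivity)] at h1
    have h4 := h2 (t * σ) (by nlinarith [mul_pos ht0 hσ0]) (by
      have := h3.2
      rwa [lt_div_iff₀ hσ0] at this)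
    convert h4 using 1
    rw [hξ, ← Complex.coe_smul]
    push_cast
    module
  have hℓn : ℓ n ≠ 0 := fun h => by simp [h] at hn
  set ν := (ℓ n)⁻¹ • n with hν
  have hℓν : ℓ ν = 1 := by
    rw [hν, map_smul, smul_eq_mul, inv_mul_cancel₀ hℓn]
  have hS : ∀ w : ℂ, 0 < w.re → ∀ᶠ t : ℝ in 𝓝[>] 0, p + ((t : ℂ) * w) • ν ∈ Ω := by
    intro w hw
    filter_upwards [hray (w • ν) (by rwa [map_smul, hℓν, smul_eq_mul, mul_one])] with t ht
    rwa [mul_smul]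
  refine ⟨ℓ, ν, hℓ, hℓν, hS, ?_⟩
  obtain ⟨τ, hτ, hτ0⟩ := ((hS 1 (by simp)).and self_mem_nhdsWithin).exists
  replace hτ0 : 0 < τ := hτ0
  rw [mul_one] at hτ
  obtain ⟨c', δ', hc', hδ', h⟩ := exists_add_smul_mem ho hc hU hpU hr hΓ hpc hτ (by
    rw [hdr', map_smul, hℓν]
    simp [hκ, hτ0.ne'])
  refine ⟨c' * τ, δ' * τ, by positivity, by positivity, ?_⟩
  filter_upwards [h] with x hx s hs1 hs2
  have := hx (s / τ) (by rw [lt_div_iff₀ hτ0]; linarith) (by rwa [div_lt_iff₀ hτ0])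
  rwa [smul_smul, ← Complex.ofReal_mul, div_mul_cancel₀ _ hτ0.ne'] at this

end Normal

section Contact

variable {H : Type*} [NormedAddCommGroup H] [NormedSpace ℂ H]

/-- Averaging a holomorphic disc with high order of contact yields a complex direction in which
the domain contains a region `C * ‖z‖ ^ N < t`. -/
lemma exists_direction_of_contact [CompleteSpace H] {Ω : Set H} (ho : IsOpen Ω) (hc : Convex ℝ Ω)
    {p ν : H} {r : H → ℝ} (hray : ∀ᶠ t : ℝ in 𝓝[>] 0, p + (t : ℂ) • ν ∈ Ω) {c δ : ℝ} (hc0 : 0 < c)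
    (hδ : 0 < δ)
    (hr : ∀ᶠ x in 𝓝 p, ∀ s : ℝ, c * |r x| < s → s < δ → x + (s : ℂ) • ν ∈ Ω)
    {N k : ℕ} (hk : k ≠ 0) {h : ℂ → H} {ε : ℝ} (hε : 0 < ε) (hh : DifferentiableOn ℂ h (ball 0 ε))
    (hO : (fun w => r (p + w ^ k • h w)) =O[𝓝 0] fun w : ℂ => ‖w‖ ^ (N * k)) :
    ∃ C δ' : ℝ, 0 < C ∧ 0 < δ' ∧ ∀ (z : ℂ) (t : ℝ), ‖z‖ < δ' → C * ‖z‖ ^ N < t → t < δ' →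
      p + z • h 0 + (t : ℂ) • ν ∈ Ω := by
  obtain ⟨C₁, hC₁, hO⟩ := hO.exists_pos
  have hcont : ContinuousAt (fun w : ℂ => p + w ^ k • h w) 0 := by
    have := (hh.differentiableAt (ball_mem_nhds 0 hε)).continuousAt
    fun_prop
  have hlim : Tendsto (fun w : ℂ => p + w ^ k • h w) (𝓝 0) (𝓝 p) := by
    have := hcont.tendsto
    simpa [zero_pow hk] using this
  obtain ⟨δ₁, hδ₁, hall⟩ := Metric.eventually_nhds_iff_ball.1 (hO.bound.and (hlim.eventually hr))
  obtain ⟨δ₂, hδ₂, hδ₂'⟩ := mem_nhdsGT_iff_exists_Ioo_subset.1 hray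
  replace hδ₂ : 0 < δ₂ := hδ₂
  set R := min δ₁ ε / 2 with hR
  have hR0 : 0 < R := by positivity
  have hR1 : R < δ₁ := by
    have := min_le_left δ₁ ε
    rw [hR]
    linarith
  have hR2 : R < ε := by
    have := min_le_right δ₁ ε
    rw [hR]
    linarith
  have hcl : ∀ (z : ℂ) (t : ℝ), z ≠ 0 → 2 * ‖z‖ < R ^ k → c * (C₁ * (2 * ‖z‖) ^ N) < t → t < δ →
      p + z • h 0 + (t : ℂ) • ν ∈ closure Ω := by
    intro z t hz hzR ht htδ
    have hz0 : 0 < ‖z‖ := norm_pos_iff.2 hz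
    obtain ⟨ρ, hρ0, hρ⟩ : ∃ ρ : ℝ, 0 ≤ ρ ∧ ρ ^ k = 2 * ‖z‖ :=
      ⟨(2 * ‖z‖) ^ ((k : ℝ)⁻¹), by positivity, Real.rpow_inv_natCast_pow (by positivity) hk⟩
    have hρpos : 0 < ρ := hρ0.lt_of_ne fun h0 => by
      rw [← h0, zero_pow hk] at hρ
      linarith
    have hρR : ρ < R := lt_of_pow_lt_pow_left₀ k hR0.le (hρ ▸ hzR)
    have hcirc := add_smul_mem_of_circle isClosed_closure hc.closure hρpos
      (hh.mono (closedBall_subset_ball (hρR.trans hR2))) hk (p := p + (t : ℂ) • ν)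
      (fun w hw => ?_) (c := z / ‖z‖) (by simp [hz])
    · convert hcirc using 1
      have h1 : z / ‖z‖ * (ρ : ℂ) ^ k / 2 = z := by
        rw [← Complex.ofReal_pow, hρ]
        have : (‖z‖ : ℂ) ≠ 0 := Complex.ofReal_ne_zero.2 hz0.ne'
        push_cast
        field_simp
      rw [h1]
      abel
    · have hwb : w ∈ ball (0 : ℂ) δ₁ := by
        rw [mem_ball_zero_iff]
        linarith
      obtain ⟨h1, h2⟩ := hall w hwb
      rw [Real.norm_eq_abs, norm_pow, norm_norm, hw, mul_comm N k, pow_mul, hρ] at h1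
      have := h2 t (lt_of_le_of_lt (by gcongr) ht) htδ
      rw [add_right_comm]
      exact subset_closure this
  refine ⟨2 * (c * (C₁ * 4 ^ N)), min (R ^ k / 4) (min δ (δ₂ / 2)), by positivity, by positivity,
    fun z t hz ht htδ => ?_⟩
  simp only [lt_min_iff] at hz htδ
  have ht0 : 0 < t := lt_of_le_of_lt (by positivity) ht
  have hmem : p + ((3 / 2 * t : ℝ) : ℂ) • ν ∈ Ω := hδ₂' ⟨by positivity, by linarith⟩
  rcases eq_or_ne z 0 with rfl | hz0
  · simpa using hδ₂' ⟨ht0, by linarith⟩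
  have hcl₂ := hcl (2 * z) (t / 2) (by simpa using hz0) (by
    rw [norm_mul, Complex.norm_ofNat]
    linarith) (by
    rw [norm_mul, Complex.norm_ofNat, show 2 * (2 * ‖z‖) = 4 * ‖z‖ by ring, mul_pow]
    linarith) (by linarith)
  have := Convex.combo_closure_mem ho hc hcl₂ hmem (θ := 1 / 2) (by norm_num) (by norm_num)
  convert this using 1
  push_cast
  module

lemma eq_zero_of_contact {Ω : Set H} {p ν e : H} {ℓ : H →L[ℂ] ℂ}
    (hℓ : ∀ x ∈ Ω, 0 < (ℓ (x - p)).re) (hℓν : ℓ ν = 1) {N : ℕ} (hN : 2 ≤ N) {C δ : ℝ} (hC : 0 < C)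
    (hδ : 0 < δ) (h : ∀ (z : ℂ) (t : ℝ), ‖z‖ < δ → C * ‖z‖ ^ N < t → t < δ →
      p + z • e + (t : ℂ) • ν ∈ Ω) : ℓ e = 0 := by
  by_contra ha
  set a := ℓ e with hadef
  have ha0 : 0 < ‖a‖ := norm_pos_iff.2 ha
  have hlim : Tendsto (fun s : ℝ => s * ‖a‖) (𝓝[>] 0) (𝓝 0) := by
    have := (Continuous.tendsto (by fun_prop : Continuous fun s : ℝ => s * ‖a‖) 0)
    simp only [zero_mul] at this
    exact this.mono_left nhdsWithin_le_nhds
  have hlim₂ : Tendsto (fun s : ℝ => 2 * C * s ^ 2 * ‖a‖ ^ 2) (𝓝[>] 0) (𝓝 0) := by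
    have := (Continuous.tendsto (by fun_prop : Continuous fun s : ℝ => 2 * C * s ^ 2 * ‖a‖ ^ 2) 0)
    simp only [mul_zero, zero_mul, ne_eq, OfNat.ofNat_ne_zero, not_false_eq_true, zero_pow] at this
    exact this.mono_left nhdsWithin_le_nhds
  have hlim₃ : Tendsto (fun s : ℝ => 2 * C * s) (𝓝[>] 0) (𝓝 0) := by
    have := (Continuous.tendsto (by fun_prop : Continuous fun s : ℝ => 2 * C * s) 0)
    simp only [mul_zero] at this
    exact this.mono_left nhdsWithin_le_nhds
  obtain ⟨s, ⟨⟨h1, h2⟩, h3⟩, hs⟩ := (((hlim.eventually (gt_mem_nhds (lt_min hδ one_pos))).and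
    (hlim₂.eventually (gt_mem_nhds hδ))).and (hlim₃.eventually (gt_mem_nhds one_pos))).and
    self_mem_nhdsWithin |>.exists
  replace hs : 0 < s := hs
  rw [lt_min_iff] at h1
  set z : ℂ := ((-s : ℝ) : ℂ) * (starRingEnd ℂ) a with hz
  have hzn : ‖z‖ = s * ‖a‖ := by
    rw [hz, norm_mul, Complex.norm_real, RCLike.norm_conj, norm_neg, Real.norm_of_nonneg hs.le]
  have hpow : C * ‖z‖ ^ N ≤ C * (s ^ 2 * ‖a‖ ^ 2) := by
    rw [hzn, ← mul_pow]
    have := pow_le_pow_of_le_one (by positivity) h1.2.le hN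
    gcongr
  have hpos : 0 < s ^ 2 * ‖a‖ ^ 2 := by positivity
  have h5 := hℓ _ (h z (2 * C * s ^ 2 * ‖a‖ ^ 2) (by rw [hzn]; exact h1.1)
    (lt_of_le_of_lt hpow (by nlinarith)) h2)
  rw [add_assoc, add_sub_cancel_left, map_add, map_smul, map_smul, hℓν, smul_eq_mul, smul_eq_mul,
    mul_one, Complex.add_re, Complex.ofReal_re, ← hadef, hz, mul_assoc, Complex.re_ofReal_mul,
    mul_comm _ a, Complex.mul_conj, Complex.ofReal_re, Complex.normSq_eq_norm_sq] at h5
  nlinarith [mul_pos hs (pow_pos ha0 2)]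

/-- Rescaling at a boundary point with flat but not totally flat complex direction. -/
lemma exists_scale {Ω : Set H} (ho : IsOpen Ω) {p ν e : H}
    (hray : ∀ᶠ t : ℝ in 𝓝[>] 0, p + (t : ℂ) • ν ∈ Ω) {n : ℕ} {C δ : ℝ} (hC : 0 < C)
    (hδ : 0 < δ) (h : ∀ (z : ℂ) (t : ℝ), ‖z‖ < δ → C * ‖z‖ ^ (n + 1) < t → t < δ →
      p + z • e + (t : ℂ) • ν ∈ Ω)
    (hnd : ∀ η : ℝ, 0 < η → ∃ z : ℂ, ‖z‖ < η ∧ p + z • e ∉ closure Ω) {η : ℝ} (hη : 0 < η) :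
    ∃ (z : ℂ) (ε : ℝ), ‖z‖ < η ∧ 0 < ε ∧ ε < η ∧ p + z • e + (ε : ℂ) • ν ∉ Ω ∧
      ∀ w : ℂ, ‖w‖ ≤ 1 → p + (z * w) • e + ((ε * ‖w‖ ^ n : ℝ) : ℂ) • ν ∈ closure Ω := by
  obtain ⟨η', hη'Ω, hη'⟩ := (hray.and (Ioo_mem_nhdsGT (lt_min hη hδ))).exists
  obtain ⟨hη'0, hη'η⟩ := hη'
  rw [lt_min_iff] at hη'η
  have hnear : ∀ᶠ z : ℂ in 𝓝 0, p + z • e + (η' : ℂ) • ν ∈ Ω := by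
    have hct : Continuous fun z : ℂ => p + z • e + (η' : ℂ) • ν := by fun_prop
    exact hct.continuousAt.eventually (ho.mem_nhds (by simpa using hη'Ω))
  obtain ⟨R, hR, hRΩ⟩ := Metric.eventually_nhds_iff_ball.1 hnear
  obtain ⟨r, hr0, hr⟩ := exists_between (lt_min (lt_min hR hη) hδ)
  simp only [lt_min_iff] at hr
  obtain ⟨⟨hrR, hrη⟩, hrδ⟩ := hr
  obtain ⟨z₁, hz₁r, hz₁⟩ := hnd r hr0
  have hp : p ∈ closure Ω := by
    refine mem_closure_of_tendsto (f := fun t : ℝ => p + (t : ℂ) • ν) (b := 𝓝[>] (0 : ℝ)) ?_ hray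
    have : Continuous fun t : ℝ => p + (t : ℂ) • ν := by fun_prop
    simpa using (this.tendsto 0).mono_left (nhdsWithin_le_nhds (s := Ioi 0))
  have hz₁0 : 0 < ‖z₁‖ := norm_pos_iff.2 fun h0 => hz₁ (by simpa [h0] using hp)
  obtain ⟨t₁, ht₁, ht₁0, ht₁η⟩ : ∃ t₁ : ℝ, p + z₁ • e + (t₁ : ℂ) • ν ∉ Ω ∧ 0 < t₁ ∧ t₁ < η' := by
    by_contra! hcon
    refine hz₁ (mem_closure_of_tendsto (f := fun t : ℝ => p + z₁ • e + (t : ℂ) • ν)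
      (b := 𝓝[>] (0 : ℝ)) ?_ ?_)
    · have : Continuous fun t : ℝ => p + z₁ • e + (t : ℂ) • ν := by fun_prop
      simpa using (this.tendsto 0).mono_left (nhdsWithin_le_nhds (s := Ioi 0))
    · filter_upwards [Ioo_mem_nhdsGT hη'0] with t ht
      by_contra hmem
      exact absurd ht.2 (not_lt.2 (hcon t hmem ht.1))
  set κ₁ := t₁ / ‖z₁‖ ^ n with hκ₁
  have hκ₁0 : 0 < κ₁ := by positivity
  set r₁ := min (κ₁ / C) ‖z₁‖ with hr₁
  have hr₁0 : 0 < r₁ := lt_min (by positivity) hz₁0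
  let T : Set (ℂ × ℝ) := (closedBall 0 r ×ˢ Icc 0 η') ∩
    {x | r₁ ≤ ‖x.1‖ ∧ p + x.1 • e + (x.2 : ℂ) • ν ∈ Ωᶜ}
  have hTc : IsCompact T := by
    refine ((isCompact_closedBall _ _).prod isCompact_Icc).inter_right
      (IsClosed.inter
        (isClosed_le continuous_const (by fun_prop : Continuous fun x : ℂ × ℝ => ‖x.1‖)) ?_)
    exact ho.isClosed_compl.preimage
      (by fun_prop : Continuous fun x : ℂ × ℝ => p + x.1 • e + (x.2 : ℂ) • ν)
  have hT1 : (z₁, t₁) ∈ T :=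
    ⟨⟨mem_closedBall_zero_iff.2 hz₁r.le, ht₁0.le, ht₁η.le⟩, min_le_right _ _, ht₁⟩
  obtain ⟨⟨z, ε⟩, ⟨⟨hzr, hε0, hεη⟩, hzr₁, hzε⟩, hmax⟩ := hTc.exists_isMaxOn ⟨_, hT1⟩
    (f := fun x : ℂ × ℝ => x.2 / ‖x.1‖ ^ n) (by
      refine ContinuousOn.div (by fun_prop) (by fun_prop) fun x hx => ?_
      have : 0 < ‖x.1‖ := hr₁0.trans_le hx.2.1
      positivity)
  simp only at hzr hε0 hεη hzr₁ hzε
  rw [mem_closedBall_zero_iff] at hzr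
  have hz0 : 0 < ‖z‖ := hr₁0.trans_le hzr₁
  have hzn : 0 < ‖z‖ ^ n := by positivity
  have hκle : κ₁ ≤ ε / ‖z‖ ^ n := hmax hT1
  have hεpos : 0 < ε := by
    have := hκ₁0.trans_le hκle
    by_contra! hle
    exact absurd this (not_lt.2 (div_nonpos_of_nonpos_of_nonneg hle hzn.le))
  have hεη' : ε < η' := hεη.lt_of_ne fun heq => by
    refine hzε ?_
    rw [heq]
    exact hRΩ z (mem_ball_zero_iff.2 (by linarith))
  refine ⟨z, ε, by linarith, hεpos, by linarith, hzε, fun w hw => ?_⟩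
  have hwn : ‖w‖ ^ n ≤ 1 := pow_le_one₀ (norm_nonneg _) hw
  have hτη : ε * ‖w‖ ^ n < η' := by nlinarith
  refine mem_closure_of_tendsto (f := fun t : ℝ => p + (z * w) • e + (t : ℂ) • ν)
    (b := 𝓝[>] (ε * ‖w‖ ^ n)) ?_ ?_
  · have : Continuous fun t : ℝ => p + (z * w) • e + (t : ℂ) • ν := by fun_prop
    exact (this.tendsto _).mono_left nhdsWithin_le_nhds
  filter_upwards [Ioo_mem_nhdsGT hτη] with t ht
  have ht0 : 0 < t := lt_of_le_of_lt (by positivity) ht.1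
  have hzw : ‖z * w‖ ≤ ‖z‖ := by
    rw [norm_mul]
    nlinarith
  have hεw : ε * ‖w‖ ^ n = ε / ‖z‖ ^ n * ‖z * w‖ ^ n := by
    rw [norm_mul, mul_pow]
    field_simp
  by_cases hcase : r₁ ≤ ‖z * w‖
  · by_contra hmem
    have h1 : t / ‖z * w‖ ^ n ≤ ε / ‖z‖ ^ n := hmax (show (z * w, t) ∈ T from
      ⟨⟨mem_closedBall_zero_iff.2 (by linarith), ht0.le, ht.2.le⟩, hcase, hmem⟩)
    have h2 : 0 < ‖z * w‖ ^ n := by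
      have := hr₁0.trans_le hcase
      positivity
    rw [div_le_iff₀ h2, ← hεw] at h1
    exact absurd ht.1 (not_lt.2 h1)
  · refine h _ _ (by linarith) (lt_of_le_of_lt ?_ ht.1) (by linarith [ht.2])
    rw [hεw, pow_succ, mul_comm (‖z * w‖ ^ n), ← mul_assoc]
    gcongr
    have h1 : ‖z * w‖ < κ₁ / C := lt_of_lt_of_le (not_le.1 hcase) (min_le_left _ _)
    rw [lt_div_iff₀ hC] at h1
    linarith

end Contact

section Scaling

/-- An affine functional supporting an approximate bidisk is negligible in the second variable. -/
lemma re_add_le_zero_of_support {a b : ℂ} {κ q : ℝ} (hκ : 0 < κ) (hq : q ≤ 1 / 2)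
    (h1 : ∀ w : ℂ, ‖w‖ = 1 → 0 ≤ (a * (w - 1)).re) (h2 : 0 < (a * (0 - 1)).re)
    (h3 : 0 ≤ (a * ((1 - κ : ℝ) - 1) + b * ((q : ℂ) - 1)).re)
    (h4 : 0 < (a * (0 - 1) + b * (1 + (κ⁻¹ : ℝ) * Complex.I - 1)).re)
    (h5 : 0 < (a * (0 - 1) + b * (1 - (κ⁻¹ : ℝ) * Complex.I - 1)).re)
    (h6 : 0 < (a * (0 - 1) + b * (1 + (κ⁻¹ : ℝ) - 1)).re) {u v : ℂ} (huv : 4 * κ * ‖v‖ ≤ u.re) :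
    (a * u - b * v).re ≤ 0 := by
  have ha : 0 < -a.re := by simpa using h2
  have ha0 : 0 < ‖a‖ := norm_pos_iff.2 fun h => by simp [h] at ha
  have him : a.im = 0 := by
    have h7 := h1 (-(starRingEnd ℂ) a / ‖a‖) (by
      rw [norm_div, norm_neg, RCLike.norm_conj, Complex.norm_real, norm_norm, div_self ha0.ne'])
    have h8 : a * (-(starRingEnd ℂ) a / ‖a‖ - 1) = ((-‖a‖ : ℝ) : ℂ) - a := by
      rw [mul_sub, mul_one, mul_div_assoc', mul_neg, Complex.mul_conj, Complex.normSq_eq_norm_sq]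
      have : (‖a‖ : ℂ) ≠ 0 := Complex.ofReal_ne_zero.2 ha0.ne'
      push_cast
      field_simp
    rw [h8, Complex.sub_re, Complex.ofReal_re] at h7
    have h9 := Complex.sq_norm a
    rw [Complex.normSq_apply] at h9
    have h10 : a.im * a.im ≤ 0 := by nlinarith
    nlinarith [mul_self_nonneg a.im]
  have hm : 0 < κ⁻¹ := inv_pos.2 hκ
  have hκm : κ * κ⁻¹ = 1 := mul_inv_cancel₀ hκ.ne'
  simp only [Complex.add_re, Complex.mul_re, Complex.sub_re, Complex.sub_im, Complex.add_im,
    Complex.mul_im, Complex.ofReal_re, Complex.ofReal_im, Complex.one_re, Complex.one_im,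
    Complex.zero_re, Complex.zero_im, Complex.I_re, Complex.I_im, him] at h3 h4 h5 h6
  have hb1 : |b.im| ≤ κ * -a.re := by
    rw [abs_le]
    constructor
    · nlinarith [mul_lt_mul_of_pos_left h5 hκ]
    · nlinarith [mul_lt_mul_of_pos_left h4 hκ]
  have hb2 : |b.re| ≤ 2 * (κ * -a.re) := by
    rw [abs_le]
    constructor
    · nlinarith [mul_lt_mul_of_pos_left h6 hκ, mul_pos hκ ha]
    · by_contra! hlt
      nlinarith [mul_pos hκ ha]
  have hb3 : ‖b‖ ≤ 3 * (κ * -a.re) := by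
    have := Complex.norm_le_abs_re_add_abs_im b
    linarith
  have h7 : -(b * v).re ≤ ‖b‖ * ‖v‖ := by
    rw [← norm_mul, ← Complex.neg_re, ← norm_neg]
    exact Complex.re_le_norm _
  rw [Complex.sub_re, Complex.mul_re a u, him, zero_mul, sub_zero]
  have h8 : ‖b‖ * ‖v‖ ≤ 3 * (κ * -a.re) * ‖v‖ := by gcongr
  have h9 : 0 ≤ κ * -a.re * ‖v‖ := by positivity
  nlinarith [mul_le_mul_of_nonneg_left huv ha.le]

variable {H : Type*} [NormedAddCommGroup H] [NormedSpace ℂ H]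

/-- Flat rescalings at a boundary point, of arbitrarily high order, produce approximate bidisk
slices. -/
lemma hasBidiskSections_of_scale {Ω : Set H} (ho : IsOpen Ω) (hc : Convex ℝ Ω) {p ν : H}
    {ℓ : H →L[ℂ] ℂ} (hℓ : ∀ x ∈ Ω, 0 < (ℓ (x - p)).re) (hℓν : ℓ ν = 1)
    (hray : ∀ w : ℂ, 0 < w.re → ∀ᶠ t : ℝ in 𝓝[>] 0, p + ((t : ℂ) * w) • ν ∈ Ω)
    (h : ∀ n : ℕ, n ≠ 0 → ∃ e : H, ℓ e = 0 ∧ ∀ η : ℝ, 0 < η → ∃ (z : ℂ) (ε : ℝ), ‖z‖ < η ∧ 0 < ε ∧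
      ε < η ∧ p + z • e + (ε : ℂ) • ν ∉ Ω ∧
      ∀ w : ℂ, ‖w‖ ≤ 1 → p + (z * w) • e + ((ε * ‖w‖ ^ n : ℝ) : ℂ) • ν ∈ closure Ω) :
    HasBidiskSections Ω := by
  have hp : p ∉ Ω := fun hp => by simpa using hℓ p hp
  intro S K hK hKΩ
  have hs : ∀ᶠ s : ℝ in 𝓝[>] 0, ∀ x ∈ S, x.1.re < 1 → ‖1 + (s : ℂ) * (x.1 - 1)‖ < 1 :=
    (Finset.eventually_all S).2 fun x _ =>
      eventually_imp_distrib_left.2 eventually_norm_one_add_mul_lt_one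
  obtain ⟨s, hs, hs0⟩ := (hs.and self_mem_nhdsWithin).exists
  replace hs0 : 0 < s := hs0
  have ht : ∀ᶠ t : ℝ in 𝓝[>] 0, ∀ x ∈ S, x.1.re < 1 →
      ‖1 + (s : ℂ) * (x.1 - 1)‖ < (1 - t) ^ 2 := by
    refine (Finset.eventually_all S).2 fun x hx => eventually_imp_distrib_left.2 fun hx1 => ?_
    have hlim : Tendsto (fun t : ℝ => (1 - t) ^ 2) (𝓝[>] 0) (𝓝 ((1 - 0) ^ 2)) :=
      ((by fun_prop : Continuous fun t : ℝ => (1 - t) ^ 2).tendsto 0).mono_left nhdsWithin_le_nhds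
    exact hlim.eventually (lt_mem_nhds (by simpa using hs x hx hx1))
  obtain ⟨t, ht, ht0, ht1⟩ := (ht.and (Ioo_mem_nhdsGT one_pos)).exists
  have hκ : ∀ᶠ κ : ℝ in 𝓝[>] 0, ∀ x ∈ S, 1 < x.1.re → 4 * κ * ‖x.2‖ < s * (x.1.re - 1) := by
    refine (Finset.eventually_all S).2 fun x hx => eventually_imp_distrib_left.2 fun hx1 => ?_
    have hlim : Tendsto (fun κ : ℝ => 4 * κ * ‖x.2‖) (𝓝[>] 0) (𝓝 (4 * 0 * ‖x.2‖)) :=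
      ((by fun_prop : Continuous fun κ : ℝ => 4 * κ * ‖x.2‖).tendsto 0).mono_left
        nhdsWithin_le_nhds
    refine hlim.eventually (gt_mem_nhds ?_)
    have : 0 < s * (x.1.re - 1) := mul_pos hs0 (by linarith)
    simpa using this
  obtain ⟨κ, hκ, hκ0, hκ1⟩ := (hκ.and (Ioo_mem_nhdsGT one_pos)).exists
  have hpow : ∀ {q : ℝ}, 0 < q → q < 1 → ∀ {y : ℝ}, 0 < y → ∀ᶠ n : ℕ in atTop, (1 - q) ^ n < y :=
    fun h0 h1 _ hy => (tendsto_pow_atTop_nhds_zero_of_lt_one (by linarith)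
      (by linarith)).eventually (gt_mem_nhds hy)
  have hn : ∀ᶠ n : ℕ in atTop, ∀ x ∈ S, x.2.re < 1 → (1 - t) ^ n < 1 - x.2.re :=
    (Finset.eventually_all S).2 fun x hx => eventually_imp_distrib_left.2 fun hx1 =>
      hpow ht0 ht1 (by linarith)
  obtain ⟨n, ⟨hn, hnκ⟩, hn0⟩ := ((hn.and (hpow hκ0 hκ1 one_half_pos)).and
    (eventually_ne_atTop 0)).exists
  obtain ⟨e, hℓe, he⟩ := h n hn0
  let Z : ℂ × ℂ → ℂ := fun x => 1 + (s : ℂ) * (x.1 - 1)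
  let Y : ℂ × ℂ → ℝ := fun x => ‖Z x / (1 - t : ℝ)‖ ^ n
  let W : ℂ × ℂ → ℂ := fun x => (1 - x.2 - ((1 - t) * Y x : ℝ)) / t
  have hW : ∀ᶠ ε : ℝ in 𝓝[>] 0, ∀ x ∈ S, x.1.re < 1 → x.2.re < 1 →
      p + ((ε : ℂ) * W x) • ν ∈ Ω := by
    refine (Finset.eventually_all S).2 fun x hx => eventually_imp_distrib_left.2 fun hx1 =>
      eventually_imp_distrib_left.2 fun hx2 => hray _ ?_
    simp only [W]
    rw [Complex.div_ofReal_re, Complex.sub_re, Complex.ofReal_re, Complex.sub_re, Complex.one_re]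
    have h1 : Y x ≤ (1 - t) ^ n := by
      refine pow_le_pow_left₀ (norm_nonneg _) ?_ n
      rw [norm_div, Complex.norm_real, Real.norm_of_nonneg (by linarith),
        div_le_iff₀ (by linarith), ← sq]
      exact (ht x hx hx1).le
    have h2 : 0 ≤ Y x := by positivity
    have h3 := hn x hx hx2
    refine div_pos ?_ ht0
    nlinarith
  have hM := (((hray 1 (by simp)).and (hray (1 + (κ⁻¹ : ℝ) * Complex.I) (by simp))).and
    (hray (1 - (κ⁻¹ : ℝ) * Complex.I) (by simp))).and (hray (1 + (κ⁻¹ : ℝ)) (by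
      rw [Complex.add_re, Complex.one_re, Complex.ofReal_re]
      positivity))
  obtain ⟨η₁, hη₁, hηΩ⟩ := mem_nhdsGT_iff_exists_Ioo_subset.1 (hW.and hM)
  replace hη₁ : 0 < η₁ := hη₁
  have hleave : ∀ᶠ y : ℂ × ℝ in 𝓝 (0, 0), ∀ x ∈ S,
      p + (y.1 * Z x) • e + ((y.2 : ℂ) * (1 - x.2)) • ν ∈ Kᶜ := by
    refine (Finset.eventually_all S).2 fun x hx => ?_
    have hct : Continuous fun y : ℂ × ℝ =>
      p + (y.1 * Z x) • e + ((y.2 : ℂ) * (1 - x.2)) • ν := by fun_prop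
    refine hct.continuousAt.eventually (hK.isClosed.isOpen_compl.mem_nhds ?_)
    simpa using fun hpK => hp (hKΩ hpK)
  obtain ⟨η₂, hη₂, hηK⟩ := Metric.eventually_nhds_iff.1 hleave
  obtain ⟨z, ε, hz, hε0, hε, hP, hcl⟩ := he (min η₁ η₂) (lt_min hη₁ hη₂)
  rw [lt_min_iff] at hz hε
  obtain ⟨hWε, ⟨⟨hM1, hM2⟩, hM3⟩, hM4⟩ := hηΩ ⟨hε0, hε.1⟩
  refine ⟨p + (z * (1 - s)) • e + (ε : ℂ) • ν, (z * s) • e, (-ε : ℂ) • ν, fun x hx => ?_⟩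
  have hpt : p + (z * (1 - s)) • e + (ε : ℂ) • ν + x.1 • (z * s) • e + x.2 • (-ε : ℂ) • ν =
      p + (z * Z x) • e + ((ε : ℂ) * (1 - x.2)) • ν := by
    simp only [Z]
    module
  rw [hpt]
  refine ⟨fun hx1 hx2 => ?_, ?_, hηK (y := (z, ε)) ?_ x hx⟩
  · have h1t : (0 : ℝ) < 1 - t := by linarith
    have h1 := hcl (Z x / (1 - t : ℝ)) (by
      rw [norm_div, Complex.norm_real, Real.norm_of_nonneg h1t.le, div_le_one h1t]
      have := (ht x hx hx1).le
      simp only [Z]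
      nlinarith)
    have h2 := Convex.combo_closure_mem ho hc h1 (hWε x hx hx1 hx2) ht0 ht1
    convert h2 using 1
    have h3 : ((1 - t : ℝ) : ℂ) ≠ 0 := Complex.ofReal_ne_zero.2 h1t.ne'
    have h4 : (t : ℂ) ≠ 0 := Complex.ofReal_ne_zero.2 ht0.ne'
    simp only [W]
    change _ = ((1 - t : ℝ) : ℂ) • (p + (z * (Z x / (1 - t : ℝ))) • e + ((ε * Y x : ℝ) : ℂ) • ν) + _
    push_cast at h3 ⊢
    match_scalars <;> field_simp <;> ring
  · rintro (hx1 | hx2) hmem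
    · obtain ⟨φ, hφ⟩ := exists_supporting_functional ho hc hP
      have hval : ∀ a b : ℂ, φ (p + (z * a) • e + ((ε : ℂ) * b) • ν -
          (p + z • e + (ε : ℂ) • ν)) = φ (z • e) * (a - 1) + φ ((ε : ℂ) • ν) * (b - 1) := by
        intro a b
        simp only [map_add, map_sub, map_smul, smul_eq_mul]
        ring
      have hΩv : ∀ a b : ℂ, p + (z * a) • e + ((ε : ℂ) * b) • ν ∈ Ω →
          0 < (φ (z • e) * (a - 1) + φ ((ε : ℂ) • ν) * (b - 1)).re := fun a b hab => by
        have := hφ _ hab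
        rwa [hval] at this
      have hΩ0 : ∀ b : ℂ, p + ((ε : ℂ) * b) • ν ∈ Ω →
          0 < (φ (z • e) * (0 - 1) + φ ((ε : ℂ) • ν) * (b - 1)).re := fun b hb =>
        hΩv 0 b (by simpa using hb)
      have hclv : ∀ a : ℂ, ‖a‖ ≤ 1 →
          0 ≤ (φ (z • e) * (a - 1) + φ ((ε : ℂ) • ν) * (((‖a‖ ^ n : ℝ) : ℂ) - 1)).re := fun a ha => by
        have h1 := closure_minimal (t := {y | 0 ≤ (φ (y - (p + z • e + (ε : ℂ) • ν))).re})
          (fun y hy => (hφ y hy).le) (isClosed_le continuous_const (by fun_prop)) (hcl a ha)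
        rw [Complex.ofReal_mul] at h1
        rw [← hval]
        exact h1
      have hκ' : ‖((1 - κ : ℝ) : ℂ)‖ = 1 - κ := by
        rw [Complex.norm_real, Real.norm_of_nonneg (by linarith)]
      have h3 := hclv ((1 - κ : ℝ) : ℂ) (by rw [hκ']; linarith)
      rw [hκ'] at h3
      have hle := re_add_le_zero_of_support hκ0 hnκ.le (fun w hw => by
        have := hclv w hw.le
        simpa [hw] using this) (by simpa using hΩ0 1 hM1) h3 (hΩ0 _ hM2) (hΩ0 _ hM3) (hΩ0 _ hM4)
        (u := s * (x.1 - 1)) (v := x.2) (by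
          rw [Complex.re_ofReal_mul, Complex.sub_re, Complex.one_re]
          exact (hκ x hx hx1).le)
      have hlt := hΩv _ _ hmem
      refine absurd hlt (not_lt.2 (le_of_eq_of_le ?_ hle))
      simp only [Z]
      ring_nf
    · have := hℓ _ hmem
      rw [add_assoc, add_sub_cancel_left, map_add, map_smul, map_smul, hℓe, hℓν, smul_zero,
        zero_add, smul_eq_mul, mul_one, Complex.re_ofReal_mul, Complex.sub_re,
        Complex.one_re] at this
      nlinarith
  · rw [Prod.dist_eq, dist_zero_right, dist_zero_right, Real.norm_of_nonneg hε0.le]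
    exact max_lt hz.2 hε.2

end Scaling

section InfiniteType

variable {H : Type*} [NormedAddCommGroup H] [NormedSpace ℂ H]

/-- A convex domain with a smooth boundary point of infinite type has approximate bidisk slices. -/
lemma hasBidiskSections_of_infiniteTypePoint [CompleteSpace H] {Ω : Set H} (hΩ : InX Ω) {p : H}
    (hp : InfiniteTypePoint (frontier Ω) p) : HasBidiskSections Ω := by
  obtain ⟨hpΓ, U, r, hU, hpU, hr, hdr, hΓ, htype⟩ := hp
  obtain ⟨ho, hc, hne⟩ := hΩ.1
  obtain ⟨ℓ, ν, hℓ, hℓν, hray, c, δ, hc0, hδ, hcδ⟩ :=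
    exists_normal ho hc hne hpΓ hU hpU hr (hdr p hpU) hΓ
  have hray1 : ∀ᶠ t : ℝ in 𝓝[>] 0, p + (t : ℂ) • ν ∈ Ω := by
    simpa using hray 1 (by simp)
  have hr0 : r p = 0 := by
    have : p ∈ frontier Ω ∩ U := ⟨hpΓ, hpU⟩
    rw [hΓ] at this
    exact this.2
  have hdir : ∀ N : ℕ, 2 ≤ N → ∃ e : H, e ≠ 0 ∧ ℓ e = 0 ∧ ∃ C δ : ℝ, 0 < C ∧ 0 < δ ∧
      ∀ (z : ℂ) (t : ℝ), ‖z‖ < δ → C * ‖z‖ ^ N < t → t < δ → p + z • e + (t : ℂ) • ν ∈ Ω := by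
    intro N hN
    obtain ⟨ε, ζ, hε, hζ, rfl, hζne, hord⟩ := htype N
    obtain ⟨k, h, ε', hk, hε', hε'ε, hh, hh0, hζh, hko⟩ := exists_leading_term hε hζ hζne
    have hO := isBigO_of_mul_vanishOrder_le (hζ.analyticAt (ball_mem_nhds 0 hε))
      (hr.contDiffAt (hU.mem_nhds hpU)) hr0 hko hord
    have hO' : (fun w => r (ζ 0 + w ^ k • h w)) =O[𝓝 0] fun w : ℂ => ‖w‖ ^ (N * k) := by
      refine hO.congr' ?_ EventuallyEq.rfl
      filter_upwards [ball_mem_nhds (0 : ℂ) hε'] with w hw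
      rw [hζh w hw]
    obtain ⟨C, δ', hC, hδ', hmem⟩ :=
      exists_direction_of_contact ho hc hray1 hc0 hδ hcδ hk hε' hh hO'
    exact ⟨h 0, hh0, eq_zero_of_contact hℓ hℓν hN hC hδ' hmem, C, δ', hC, hδ', hmem⟩
  by_cases hdisc : ∃ (e : H) (η : ℝ), e ≠ 0 ∧ ℓ e = 0 ∧ 0 < η ∧
      ∀ z : ℂ, ‖z‖ < η → p + z • e ∈ closure Ω
  · obtain ⟨e, η, he, hℓe, hη, hmem⟩ := hdisc
    exact hasBidiskSections_of_disc hΩ ℓ hℓ he hℓe hη hmem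
  · refine hasBidiskSections_of_scale ho hc hℓ hℓν hray fun n hn => ?_
    obtain ⟨e, he, hℓe, C, δ', hC, hδ', hmem⟩ := hdir (n + 1) (by omega)
    refine ⟨e, hℓe, fun η hη => exists_scale ho hray1 hC hδ' hmem (fun η' hη' => ?_) hη⟩
    by_contra! hcon
    exact hdisc ⟨e, η', he, hℓe, hη', hcon⟩

end InfiniteType

/-- if `Ω ∈ 𝕏_d` and either `∂Ω` contains a non-constant holomorphic disk,
or `∂Ω` is a `C^∞` hypersurface with a point of infinite D'Angelo type, then there are an
affine limit `Ω_∞` of `Ω` and a complex affine 2-plane `V` with `V ∩ Ω_∞` biholomorphic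
to `𝔻 × 𝔻`. -/
theorem statement1 (d : ℕ) (Ω : Set (EuclideanSpace ℂ (Fin d))) (hΩ : InX Ω)
    (h : (∃ f : ℂ → EuclideanSpace ℂ (Fin d),
        DifferentiableOn ℂ f (Metric.ball 0 1) ∧
        MapsTo f (Metric.ball (0:ℂ) 1) (frontier Ω) ∧
        ¬ ∃ c, ∀ w ∈ Metric.ball (0:ℂ) 1, f w = c) ∨
      (IsSmoothRealHypersurface (frontier Ω) ∧
        ∃ p, InfiniteTypePoint (frontier Ω) p)) :
    ∃ (Ωlim V : Set (EuclideanSpace ℂ (Fin d))),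
      IsAffineLimit Ω Ωlim ∧
      (∃ (q : EuclideanSpace ℂ (Fin d)) (W : Submodule ℂ (EuclideanSpace ℂ (Fin d))),
        Module.finrank ℂ W = 2 ∧ V = {x | x - q ∈ W}) ∧
      Biholomorphic (V ∩ Ωlim) unitBidisk := by
  rcases h with ⟨f, hf, hmap, hne⟩ | ⟨-, p, hp⟩
  · exact (hasBidiskSections_of_holomorphic_disc hΩ hf hmap hne).exists_isAffineLimit hΩ
  · exact (hasBidiskSections_of_infiniteTypePoint hΩ hp).exists_isAffineLimit hΩ
end
end
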